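/- arXiv:1601.05360 — 2 statements merged into one kernel-verified Lean document; each statement's English description precedes it below -/
import Mathlib

section
/- AP is closed under composition: if f :⊆ ℝⁿ → ℝᵐ and g :⊆ ℝᵐ → ℝˡ both belong to AP and f(dom f) ⊆ dom g, then the composition g ∘ f :⊆ ℝⁿ → ℝˡ, with domain dom f, belongs to AP. -/
noncomputable section

/-- Evaluation of a vector of multivariate polynomials at a point. -/
def pEval {d e : ℕ} (p : Fin e → MvPolynomial (Fin d) ℝ) (x : Fin d → ℝ) : Fin e → ℝ :=
  fun i => MvPolynomial.eval x (p i)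

/-- Length of the solution curve of the PIVP `y' = p(y)` on `[0, t]`
(the sup norm of the derivative is integrated). -/
def pLen {d : ℕ} (p : Fin d → MvPolynomial (Fin d) ℝ) (y : ℝ → Fin d → ℝ) (t : ℝ) : ℝ :=
  ∫ s in (0:ℝ)..t, ‖pEval p (y s)‖

/-- `Ω : ℝ₊² → ℝ₊` is a polynomial function. -/
def IsPolyFun2 (Ω : ℝ → ℝ → ℝ) : Prop :=
  (∃ P : MvPolynomial (Fin 2) ℝ, ∀ a b : ℝ, Ω a b = MvPolynomial.eval ![a, b] P) ∧
  ∀ a b : ℝ, 0 ≤ a → 0 ≤ b → 0 ≤ Ω a b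

/-- The class `AP` of polynomial-length computable partial functions `f :⊆ ℝⁿ → ℝᵐ`
(`dom` is the domain of `f`). -/
def AP {n m : ℕ} (dom : Set (Fin n → ℝ)) (f : (Fin n → ℝ) → (Fin m → ℝ)) : Prop :=
  ∃ (d : ℕ) (hd : m ≤ d) (p : Fin d → MvPolynomial (Fin d) ℝ)
    (q : Fin d → MvPolynomial (Fin n) ℝ) (Ω : ℝ → ℝ → ℝ),
    IsPolyFun2 Ω ∧
    ∀ x ∈ dom, ∃ y : ℝ → Fin d → ℝ,
      (y 0 = fun i => MvPolynomial.eval x (q i)) ∧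
      (∀ t : ℝ, 0 ≤ t → HasDerivAt y (pEval p (y t)) t) ∧
      (∀ t : ℝ, 0 ≤ t → ∀ μ : ℝ, 0 ≤ μ → Ω ‖x‖ μ ≤ pLen p y t →
        ‖(fun i : Fin m => y t (Fin.castLE hd i)) - f x‖ ≤ Real.exp (-μ)) ∧
      (∀ t : ℝ, 0 ≤ t → t ≤ pLen p y t)


open Set Filter Topology

/-- `F` is a polynomial function of its coordinates. -/
def PolyF {ι : Type} (F : (ι → ℝ) → ℝ) : Prop :=
  ∃ P : MvPolynomial ι ℝ, ∀ x, F x = MvPolynomial.eval x P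

namespace PolyF

variable {ι κ : Type}

lemma const (c : ℝ) : PolyF (fun _ : ι → ℝ => c) := ⟨MvPolynomial.C c, by simp⟩
lemma coord (i : ι) : PolyF (fun s : ι → ℝ => s i) := ⟨MvPolynomial.X i, by simp⟩
lemma add {F G : (ι → ℝ) → ℝ} (hF : PolyF F) (hG : PolyF G) :
    PolyF (fun s => F s + G s) := by
  obtain ⟨P, hP⟩ := hF; obtain ⟨Q, hQ⟩ := hG
  exact ⟨P + Q, by simp [hP, hQ]⟩
lemma mul {F G : (ι → ℝ) → ℝ} (hF : PolyF F) (hG : PolyF G) :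
    PolyF (fun s => F s * G s) := by
  obtain ⟨P, hP⟩ := hF; obtain ⟨Q, hQ⟩ := hG
  exact ⟨P * Q, by simp [hP, hQ]⟩
lemma sub {F G : (ι → ℝ) → ℝ} (hF : PolyF F) (hG : PolyF G) :
    PolyF (fun s => F s - G s) := by
  obtain ⟨P, hP⟩ := hF; obtain ⟨Q, hQ⟩ := hG
  exact ⟨P - Q, by simp [hP, hQ]⟩
lemma neg {F : (ι → ℝ) → ℝ} (hF : PolyF F) : PolyF (fun s => - F s) := by
  obtain ⟨P, hP⟩ := hF
  exact ⟨-P, by simp [hP]⟩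
lemma pow {F : (ι → ℝ) → ℝ} (hF : PolyF F) (k : ℕ) : PolyF (fun s => F s ^ k) := by
  obtain ⟨P, hP⟩ := hF
  exact ⟨P ^ k, by simp [hP]⟩
lemma sum {α : Type} (u : Finset α) {F : α → (ι → ℝ) → ℝ} (hF : ∀ a, PolyF (F a)) :
    PolyF (fun s => ∑ a ∈ u, F a s) := by
  choose P hP using hF
  exact ⟨∑ a ∈ u, P a, by simp [hP]⟩
lemma comp {F : (κ → ℝ) → ℝ} (hF : PolyF F) {G : (ι → ℝ) → κ → ℝ}
    (hG : ∀ i, PolyF (fun s => G s i)) : PolyF (fun s => F (G s)) := by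
  obtain ⟨P, hP⟩ := hF
  choose Q hQ using hG
  refine ⟨MvPolynomial.bind₁ Q P, fun x => ?_⟩
  change F (G x) = _
  rw [hP]
  have h : G x = fun i => MvPolynomial.eval x (Q i) := funext fun i => hQ i x
  rw [h]
  have := MvPolynomial.aeval_bind₁ (R := ℝ) (S := ℝ) x Q P
  simpa [MvPolynomial.aeval_eq_eval] using this.symm

/-- polynomials have polynomial growth -/
lemma growth [Fintype ι] {F : (ι → ℝ) → ℝ} (hF : PolyF F) :
    ∃ k : ℕ, ∀ x, |F x| ≤ (2 + ‖x‖) ^ k := by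
  obtain ⟨P, hP⟩ := hF
  simp only [hP]
  clear hP F
  induction P using MvPolynomial.induction_on with
  | C a =>
    obtain ⟨k, hk⟩ := pow_unbounded_of_one_lt |a| (one_lt_two : (1:ℝ) < 2)
    refine ⟨k, fun x => ?_⟩
    simp only [MvPolynomial.eval_C]
    refine hk.le.trans (pow_le_pow_left₀ (by norm_num) ?_ k)
    linarith [norm_nonneg x]
  | add p q hp hq =>
    obtain ⟨a, ha⟩ := hp; obtain ⟨b, hb⟩ := hq
    refine ⟨a + b + 1, fun x => ?_⟩
    have h2 : (2:ℝ) ≤ 2 + ‖x‖ := by linarith [norm_nonneg x]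
    have h1 : (1:ℝ) ≤ 2 + ‖x‖ := by linarith
    have e1 : (2 + ‖x‖) ^ a ≤ (2 + ‖x‖) ^ (a + b) := pow_le_pow_right₀ h1 (by omega)
    have e2 : (2 + ‖x‖) ^ b ≤ (2 + ‖x‖) ^ (a + b) := pow_le_pow_right₀ h1 (by omega)
    have e3 : 0 ≤ (2 + ‖x‖) ^ (a + b) := by positivity
    rw [map_add, pow_succ]
    have := abs_add_le (MvPolynomial.eval x p) (MvPolynomial.eval x q)
    nlinarith [ha x, hb x]
  | mul_X p i hp =>
    obtain ⟨a, ha⟩ := hp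
    refine ⟨a + 1, fun x => ?_⟩
    rw [map_mul, MvPolynomial.eval_X, abs_mul, pow_succ]
    have h := norm_le_pi_norm x i
    rw [Real.norm_eq_abs] at h
    exact mul_le_mul (ha x) (by linarith) (abs_nonneg _) (by positivity)

/-- polynomials are locally Lipschitz with polynomially growing constant -/
lemma lip [Fintype ι] {F : (ι → ℝ) → ℝ} (hF : PolyF F) :
    ∃ k : ℕ, ∀ x y, |F x - F y| ≤ (2 + ‖x‖ + ‖y‖) ^ k * ‖x - y‖ := by
  obtain ⟨P, hP⟩ := hF
  simp only [hP]
  clear hP F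
  induction P using MvPolynomial.induction_on with
  | C a =>
    refine ⟨0, fun x y => ?_⟩
    simp
  | add p q hp hq =>
    obtain ⟨a, ha⟩ := hp; obtain ⟨b, hb⟩ := hq
    refine ⟨a + b + 1, fun x y => ?_⟩
    have h2 : (2:ℝ) ≤ 2 + ‖x‖ + ‖y‖ := by linarith [norm_nonneg x, norm_nonneg y]
    have h1 : (1:ℝ) ≤ 2 + ‖x‖ + ‖y‖ := by linarith
    have e1 : (2 + ‖x‖ + ‖y‖) ^ a * ‖x - y‖ ≤ (2 + ‖x‖ + ‖y‖) ^ (a + b) * ‖x - y‖ :=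
      mul_le_mul_of_nonneg_right (pow_le_pow_right₀ h1 (by omega)) (norm_nonneg _)
    have e2 : (2 + ‖x‖ + ‖y‖) ^ b * ‖x - y‖ ≤ (2 + ‖x‖ + ‖y‖) ^ (a + b) * ‖x - y‖ :=
      mul_le_mul_of_nonneg_right (pow_le_pow_right₀ h1 (by omega)) (norm_nonneg _)
    have e3 : 0 ≤ (2 + ‖x‖ + ‖y‖) ^ (a + b) * ‖x - y‖ := by positivity
    rw [map_add, map_add, pow_succ]
    have := abs_add_le (MvPolynomial.eval x p - MvPolynomial.eval y p)
      (MvPolynomial.eval x q - MvPolynomial.eval y q)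
    rw [show MvPolynomial.eval x p + MvPolynomial.eval x q -
      (MvPolynomial.eval y p + MvPolynomial.eval y q) =
      (MvPolynomial.eval x p - MvPolynomial.eval y p) +
      (MvPolynomial.eval x q - MvPolynomial.eval y q) by ring]
    nlinarith [ha x y, hb x y]
  | mul_X p i hp =>
    obtain ⟨a, ha⟩ := hp
    obtain ⟨b, hb⟩ := growth (F := fun x => MvPolynomial.eval x p) ⟨p, fun _ => rfl⟩
    refine ⟨a + b + 2, fun x y => ?_⟩
    have h2 : (2:ℝ) ≤ 2 + ‖x‖ + ‖y‖ := by linarith [norm_nonneg x, norm_nonneg y]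
    have h1 : (1:ℝ) ≤ 2 + ‖x‖ + ‖y‖ := by linarith
    set W := 2 + ‖x‖ + ‖y‖ with hW
    rw [map_mul, map_mul, MvPolynomial.eval_X, MvPolynomial.eval_X]
    have hy := norm_le_pi_norm x i
    have hxy := norm_le_pi_norm (x - y) i
    rw [Real.norm_eq_abs] at hy hxy
    rw [Pi.sub_apply] at hxy
    rw [show MvPolynomial.eval x p * x i - MvPolynomial.eval y p * y i =
      (MvPolynomial.eval x p - MvPolynomial.eval y p) * x i + MvPolynomial.eval y p * (x i - y i)
      by ring]
    refine (abs_add_le _ _).trans ?_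
    rw [abs_mul, abs_mul]
    have g1 : |MvPolynomial.eval x p - MvPolynomial.eval y p| * |x i| ≤ (W ^ a * ‖x - y‖) * W :=
      mul_le_mul (ha x y) (by linarith [norm_nonneg y]) (abs_nonneg _) (by positivity)
    have g2 : |MvPolynomial.eval y p| * |x i - y i| ≤ W ^ b * ‖x - y‖ :=
      mul_le_mul ((hb y).trans (pow_le_pow_left₀ (by positivity)
        (by linarith [norm_nonneg x]) b)) hxy (abs_nonneg _) (by positivity)
    have e1 : W ^ a * ‖x - y‖ * W ≤ W ^ (a + b + 1) * ‖x - y‖ := by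
      rw [show W ^ a * ‖x - y‖ * W = W ^ (a + 1) * ‖x - y‖ by ring]
      exact mul_le_mul_of_nonneg_right (pow_le_pow_right₀ h1 (by omega)) (norm_nonneg _)
    have e2 : W ^ b * ‖x - y‖ ≤ W ^ (a + b + 1) * ‖x - y‖ :=
      mul_le_mul_of_nonneg_right (pow_le_pow_right₀ h1 (by omega)) (norm_nonneg _)
    have e3 : 0 ≤ W ^ (a + b + 1) * ‖x - y‖ := by positivity
    rw [show W ^ (a + b + 2) * ‖x - y‖ = (W ^ (a + b + 1) * ‖x - y‖) * W by ring]
    nlinarith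

lemma continuous {F : (ι → ℝ) → ℝ} (hF : PolyF F) : Continuous F := by
  obtain ⟨P, hP⟩ := hF
  have : F = fun x => MvPolynomial.eval x P := funext hP
  rw [this]
  exact MvPolynomial.continuous_eval P

/-- Lie derivative of a polynomial along a polynomial field is polynomial. -/
lemma lie [Fintype ι] {N : (ι → ℝ) → ℝ} (hN : PolyF N) {F : (ι → ℝ) → ι → ℝ}
    (hF : ∀ i, PolyF (fun s => F s i)) :
    ∃ G : (ι → ℝ) → ℝ, PolyF G ∧ ∀ (y : ℝ → ι → ℝ) (s : Set ℝ) (t : ℝ),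
      HasDerivWithinAt y (F (y t)) s t → HasDerivWithinAt (fun t => N (y t)) (G (y t)) s t := by
  obtain ⟨P, hP⟩ := hN
  simp only [hP]
  clear hP N
  induction P using MvPolynomial.induction_on with
  | C a =>
    refine ⟨fun _ => 0, const 0, fun y s t _ => ?_⟩
    simpa using hasDerivWithinAt_const t s a
  | add p q hp hq =>
    obtain ⟨a, ha, ha'⟩ := hp; obtain ⟨b, hb, hb'⟩ := hq
    refine ⟨_, ha.add hb, fun y s t h => ?_⟩
    simpa using (ha' y s t h).fun_add (hb' y s t h)
  | mul_X p i hp =>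
    obtain ⟨a, ha, ha'⟩ := hp
    refine ⟨_, (ha.mul (coord i)).add
      ((show PolyF (fun x => MvPolynomial.eval x p) from ⟨p, fun _ => rfl⟩).mul (hF i)),
      fun y s t h => ?_⟩
    simpa using (ha' y s t h).fun_mul (hasDerivWithinAt_pi.1 h i)

end PolyF

section vec
variable {ι κ : Type} [Fintype ι] [Fintype κ]

lemma growth_vec {F : (ι → ℝ) → κ → ℝ} (hF : ∀ i, PolyF (fun s => F s i)) :
    ∃ k : ℕ, ∀ x, ‖F x‖ ≤ (2 + ‖x‖) ^ k := by
  choose k hk using fun i => (hF i).growth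
  refine ⟨∑ i, k i, fun x => ?_⟩
  have h1 : (1:ℝ) ≤ 2 + ‖x‖ := by linarith [norm_nonneg x]
  refine (pi_norm_le_iff_of_nonneg (by positivity)).2 fun i => ?_
  rw [Real.norm_eq_abs]
  exact (hk i x).trans (pow_le_pow_right₀ h1
    (Finset.single_le_sum (f := k) (fun _ _ => Nat.zero_le _) (Finset.mem_univ i)))

lemma lip_vec {F : (ι → ℝ) → κ → ℝ} (hF : ∀ i, PolyF (fun s => F s i)) :
    ∃ k : ℕ, ∀ x y, ‖F x - F y‖ ≤ (2 + ‖x‖ + ‖y‖) ^ k * ‖x - y‖ := by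
  choose k hk using fun i => (hF i).lip
  refine ⟨∑ i, k i, fun x y => ?_⟩
  have h1 : (1:ℝ) ≤ 2 + ‖x‖ + ‖y‖ := by linarith [norm_nonneg x, norm_nonneg y]
  refine (pi_norm_le_iff_of_nonneg (by positivity)).2 fun i => ?_
  rw [Real.norm_eq_abs]
  exact (hk i x y).trans (mul_le_mul_of_nonneg_right (pow_le_pow_right₀ h1
    (Finset.single_le_sum (f := k) (fun _ _ => Nat.zero_le _) (Finset.mem_univ i)))
    (norm_nonneg _))

lemma continuous_vec {F : (ι → ℝ) → κ → ℝ} (hF : ∀ i, PolyF (fun s => F s i)) :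
    Continuous F := continuous_pi fun i => (hF i).continuous

end vec

/-- Polynomial time-and-space normal form of `AP`. -/
def PT {n m : ℕ} (dom : Set (Fin n → ℝ)) (f : (Fin n → ℝ) → (Fin m → ℝ)) : Prop :=
  ∃ (ι : Type) (_ : Fintype ι) (F : (ι → ℝ) → ι → ℝ) (q : (Fin n → ℝ) → ι → ℝ)
    (o : Fin m → ι) (k : ℕ),
    (∀ i, PolyF (fun s => F s i)) ∧ (∀ i, PolyF (fun x => q x i)) ∧
    ∀ x ∈ dom, ∃ y : ℝ → ι → ℝ, y 0 = q x ∧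
      (∀ t, 0 ≤ t → HasDerivWithinAt y (F (y t)) (Ici 0) t) ∧
      (∀ t, 0 ≤ t → ‖y t‖ ≤ (2 + ‖x‖ + t) ^ k) ∧
      ∀ t μ : ℝ, 0 ≤ μ → (2 + ‖x‖ + μ) ^ k ≤ t →
        ‖(fun i => y t (o i)) - f x‖ ≤ Real.exp (-μ)


open Set Filter Topology

lemma ap_of_pt {n m : ℕ} {dom : Set (Fin n → ℝ)} {f : (Fin n → ℝ) → (Fin m → ℝ)}
    (h : PT dom f) : AP dom f := by
  obtain ⟨ι, _, F, q, o, k, hF, hq, H⟩ := h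
  obtain ⟨c, hc⟩ := growth_vec hF
  let N := Fintype.card (Option ι)
  let e : Option ι ≃ Fin N := Fintype.equivFin _
  let idx : Fin (m + N) → Option ι := fun j =>
    Sum.elim (fun i => some (o i)) e.symm (finSumFinEquiv.symm j)
  let emb : Option ι → Fin (m + N) := fun c => finSumFinEquiv (Sum.inr (e c))
  have hie : ∀ c, idx (emb c) = c := by intro c; simp [idx, emb]
  have hio : ∀ i : Fin m, idx (Fin.castLE (Nat.le_add_right m N) i) = some (o i) := by
    intro i
    have : Fin.castLE (Nat.le_add_right m N) i = finSumFinEquiv (Sum.inl i) := by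
      ext; simp
    simp [idx, this]
  let FO : (Fin (m + N) → ℝ) → Option ι → ℝ := fun s c =>
    Option.elim c 1 (fun i => F (fun i => s (emb (some i))) i)
  let qO : (Fin n → ℝ) → Option ι → ℝ := fun x c => Option.elim c 0 (fun i => q x i)
  have hFO : ∀ c, PolyF (fun s => FO s c) := by
    intro c
    cases c with
    | none => exact PolyF.const 1
    | some i => exact (hF i).comp (fun i => PolyF.coord _)
  have hqO : ∀ c, PolyF (fun s => qO s c) := by
    intro c
    cases c with
    | none => exact PolyF.const 0
    | some i => exact hq i
  choose P hP using hFO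
  choose Q hQ using hqO
  let T0 : ℝ → ℝ → ℝ := fun a b => (2 + a + b) ^ k
  let Ω : ℝ → ℝ → ℝ := fun a b => T0 a b * (2 + (2 + a + T0 a b) ^ k) ^ c + 1
  refine ⟨m + N, Nat.le_add_right m N, fun j => P (idx j), fun j => Q (idx j), Ω, ⟨?_, ?_⟩, ?_⟩
  · have hT : PolyF (fun v : Fin 2 → ℝ => (2 + v 0 + v 1) ^ k) :=
      (((PolyF.const 2).add (PolyF.coord 0)).add (PolyF.coord 1)).pow k
    have hΩ : PolyF (fun v : Fin 2 → ℝ => (2 + v 0 + v 1) ^ k *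
        (2 + (2 + v 0 + (2 + v 0 + v 1) ^ k) ^ k) ^ c + 1) :=
      (hT.mul (((PolyF.const 2).add
        ((((PolyF.const 2).add (PolyF.coord 0)).add hT).pow k)).pow c)).add (PolyF.const 1)
    obtain ⟨R, hR⟩ := hΩ
    exact ⟨R, fun a b => by rw [← hR]; simp [Ω, T0]⟩
  · intro a b ha hb
    have : 0 ≤ T0 a b := by positivity
    positivity
  intro x hx
  obtain ⟨y, hy0, hy', hyb, hyc⟩ := H x hx
  -- extend to negative times
  let yy : ℝ → ι → ℝ := fun t => if 0 ≤ t then y t else q x + t • F (q x)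
  have hyy : ∀ t, 0 ≤ t → yy t = y t := fun t ht => by simp [yy, ht]
  have hyyd : ∀ t, 0 ≤ t → HasDerivAt yy (F (y t)) t := by
    intro t ht
    have h1 : HasDerivWithinAt yy (F (y t)) (Ici 0) t :=
      (hy' t ht).congr (fun s hs => hyy s hs) (hyy t ht)
    rcases ht.eq_or_lt with h0 | h0
    · subst h0
      have h2 : HasDerivWithinAt yy (F (y 0)) (Iic 0) 0 := by
        have h3 : HasDerivAt (fun t : ℝ => q x + t • F (q x)) ((1:ℝ) • F (q x)) 0 :=
          ((hasDerivAt_id (0:ℝ)).smul_const (F (q x))).const_add (q x)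
        rw [one_smul, ← hy0] at h3
        refine h3.hasDerivWithinAt.congr (fun s hs => ?_) ?_
        · rcases (show s ≤ 0 from hs).eq_or_lt with h | h
          · subst h; simp [yy]
          · simp [yy, not_le.2 h, hy0]
        · simp [yy]
      have := h1.union h2
      rwa [Ici_union_Iic, hasDerivWithinAt_univ] at this
    · exact h1.hasDerivAt (Ici_mem_nhds h0)
  let YO : ℝ → Option ι → ℝ := fun t c => Option.elim c t (yy t)
  let Z : ℝ → Fin (m + N) → ℝ := fun t j => YO t (idx j)
  have hZ : ∀ t, (fun i => Z t (emb (some i))) = yy t := by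
    intro t; funext i; simp [Z, hie, YO]
  have hp : ∀ t, 0 ≤ t → ∀ j, pEval (fun j => P (idx j)) (Z t) j =
      Option.elim (idx j) 1 (F (y t)) := by
    intro t ht j
    simp only [pEval]
    rw [← hP]
    simp only [FO]
    rw [hZ, hyy t ht]
  have hcont : ContinuousOn y (Ici 0) := fun t ht => (hy' t ht).continuousWithinAt
  have hder : ∀ t, 0 ≤ t → HasDerivAt Z (pEval (fun j => P (idx j)) (Z t)) t := by
    intro t ht
    rw [hasDerivAt_pi]
    intro j
    rw [hp t ht]
    simp only [Z, YO]
    cases idx j with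
    | none => exact hasDerivAt_id t
    | some i => exact hasDerivAt_pi.1 (hyyd t ht) i
  have hpcont : ∀ t, 0 ≤ t →
      ContinuousOn (fun s => ‖pEval (fun j => P (idx j)) (Z s)‖) (uIcc 0 t) := by
    intro t ht
    rw [uIcc_of_le ht]
    refine ContinuousOn.norm ?_
    have h1 : ContinuousOn Z (Icc 0 t) :=
      fun s hs => (hder s hs.1).continuousAt.continuousWithinAt
    have h2 : Continuous (pEval (fun j => P (idx j))) :=
      continuous_pi fun j => MvPolynomial.continuous_eval _
    exact h2.comp_continuousOn h1
  have hlow : ∀ t, 0 ≤ t → (1:ℝ) ≤ ‖pEval (fun j => P (idx j)) (Z t)‖ := by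
    intro t ht
    have := norm_le_pi_norm (pEval (fun j => P (idx j)) (Z t)) (emb none)
    rw [hp t ht, hie] at this
    simpa using this
  have hup : ∀ t, 0 ≤ t → ‖pEval (fun j => P (idx j)) (Z t)‖ ≤ (2 + (2 + ‖x‖ + t) ^ k) ^ c := by
    intro t ht
    have hn := norm_nonneg x
    refine (pi_norm_le_iff_of_nonneg (by positivity)).2 fun j => ?_
    rw [hp t ht]
    cases idx j with
    | none =>
      simp only [Option.elim, norm_one]
      exact one_le_pow₀ (by linarith [show 0 ≤ (2 + ‖x‖ + t) ^ k by positivity])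
    | some i =>
      refine (norm_le_pi_norm (F (y t)) i).trans ((hc _).trans ?_)
      exact pow_le_pow_left₀ (by positivity) (by linarith [hyb t ht]) c
  refine ⟨Z, ?_, hder, ?_, ?_⟩
  · funext j
    rw [← hQ]
    simp only [Z, YO, qO, hyy 0 le_rfl, hy0]
  · intro t ht μ hμ hl
    have hT : T0 ‖x‖ μ ≤ t := by
      by_contra hlt
      push Not at hlt
      have hn := norm_nonneg x
      have h1 : ‖∫ s in (0:ℝ)..t, ‖pEval (fun j => P (idx j)) (Z s)‖‖ ≤
          (2 + (2 + ‖x‖ + t) ^ k) ^ c * |t - 0| := by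
        refine intervalIntegral.norm_integral_le_of_norm_le_const fun s hs => ?_
        rw [uIoc_of_le ht] at hs
        rw [norm_norm]
        refine (hup s hs.1.le).trans ?_
        have : (2 + ‖x‖ + s) ^ k ≤ (2 + ‖x‖ + t) ^ k :=
          pow_le_pow_left₀ (by linarith [hs.1]) (by linarith [hs.2]) k
        exact pow_le_pow_left₀ (by
          have : 0 ≤ (2 + ‖x‖ + s) ^ k := pow_nonneg (by linarith [hs.1]) k
          linarith) (by linarith) c
      have h2 : pLen (fun j => P (idx j)) Z t ≤ (2 + (2 + ‖x‖ + t) ^ k) ^ c * t := by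
        have := (le_abs_self _).trans h1
        rwa [sub_zero, abs_of_nonneg ht] at this
      have h3 : (2 + (2 + ‖x‖ + t) ^ k) ^ c ≤ (2 + (2 + ‖x‖ + T0 ‖x‖ μ) ^ k) ^ c := by
        have : (2 + ‖x‖ + t) ^ k ≤ (2 + ‖x‖ + T0 ‖x‖ μ) ^ k :=
          pow_le_pow_left₀ (by positivity) (by linarith) k
        exact pow_le_pow_left₀ (by positivity) (by linarith) c
      have h4 : (2 + (2 + ‖x‖ + t) ^ k) ^ c * t ≤
          (2 + (2 + ‖x‖ + T0 ‖x‖ μ) ^ k) ^ c * T0 ‖x‖ μ :=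
        mul_le_mul h3 hlt.le ht (by
          have : 0 ≤ T0 ‖x‖ μ := by positivity
          positivity)
      have h5 : Ω ‖x‖ μ = (2 + (2 + ‖x‖ + T0 ‖x‖ μ) ^ k) ^ c * T0 ‖x‖ μ + 1 := by
        simp only [Ω]; ring
      linarith
    have := hyc t μ hμ hT
    convert this using 3
    funext i
    simp only [Z, YO]
    rw [hio]
    simp [hyy t ht]
  · intro t ht
    have h1 : ∫ s in (0:ℝ)..t, (1:ℝ) ≤
        ∫ s in (0:ℝ)..t, ‖pEval (fun j => P (idx j)) (Z s)‖ := by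
      refine intervalIntegral.integral_mono_on ht (by simp) (hpcont t ht).intervalIntegrable ?_
      intro s hs
      exact hlow s hs.1
    simpa [pLen] using h1


open Set Filter Topology

lemma reparam (D : ℝ → ℝ) (hD : Continuous D) (h1 : ∀ t, 1 ≤ D t) :
    ∃ φ : ℝ → ℝ, φ 0 = 0 ∧ (∀ τ, HasDerivAt φ (D (φ τ))⁻¹ τ) ∧ (∀ τ, 0 ≤ τ → 0 ≤ φ τ) ∧
      ∀ τ, ∫ s in (0:ℝ)..φ τ, D s = τ := by
  let g : ℝ → ℝ := fun t => ∫ s in (0:ℝ)..t, D s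
  have hg : ∀ t, HasDerivAt g (D t) t := fun t =>
    intervalIntegral.integral_hasDerivAt_right (hD.intervalIntegrable _ _)
      (hD.stronglyMeasurableAtFilter _ _) hD.continuousAt
  have hg0 : g 0 = 0 := by simp [g]
  have hmono : StrictMono g := strictMono_of_deriv_pos fun t => by
    rw [(hg t).deriv]; linarith [h1 t]
  have hm2 : Monotone (fun t => g t - t) := by
    refine monotone_of_deriv_nonneg (fun t => ((hg t).fun_sub (hasDerivAt_id' t)).differentiableAt)
      fun t => ?_
    rw [((hg t).fun_sub (hasDerivAt_id' t)).deriv]; linarith [h1 t]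
  have hcont : Continuous g := continuous_iff_continuousAt.2 fun t => (hg t).continuousAt
  have hsurj : Function.Surjective g := by
    refine hcont.surjective ?_ ?_
    · refine tendsto_atTop_mono' atTop ?_ tendsto_id
      filter_upwards [eventually_ge_atTop 0] with t ht
      have := hm2 ht
      simp only [hg0] at this
      simp only [id]; linarith
    · refine tendsto_atBot_mono' atBot ?_ tendsto_id
      filter_upwards [eventually_le_atBot 0] with t ht
      have := hm2 ht
      simp only [hg0] at this
      simp only [id]; linarith
  let e := hmono.orderIsoOfSurjective g hsurj
  have he : ∀ τ, g (e.symm τ) = τ := fun τ => e.apply_symm_apply τ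
  refine ⟨e.symm, ?_, ?_, ?_, he⟩
  · apply hmono.injective; rw [he, hg0]
  · intro τ
    refine HasDerivAt.of_local_left_inverse e.symm.continuous.continuousAt (hg _)
      (by linarith [h1 (e.symm τ)]) (Eventually.of_forall he)
  · intro τ hτ
    by_contra hlt
    push Not at hlt
    have := hmono hlt
    rw [he, hg0] at this
    linarith

lemma pt_of_ap {n m : ℕ} {dom : Set (Fin n → ℝ)} {f : (Fin n → ℝ) → (Fin m → ℝ)}
    (h : AP dom f) : PT dom f := by
  obtain ⟨d, hd, p, q, Ω, ⟨⟨PΩ, hPΩ⟩, hΩ0⟩, H⟩ := h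
  -- the field
  have hp : ∀ i, PolyF (fun s => pEval p s i) := fun i => ⟨p i, fun _ => rfl⟩
  have hq : ∀ i, PolyF (fun s => pEval q s i) := fun i => ⟨q i, fun _ => rfl⟩
  let N : (Fin d → ℝ) → ℝ := fun s => 1 + ∑ i, pEval p s i ^ 2
  have hN : PolyF N := (PolyF.const 1).add (PolyF.sum _ fun i => (hp i).pow 2)
  have hN0 : ∀ s, 1 ≤ N s := by
    intro s
    have : 0 ≤ ∑ i, pEval p s i ^ 2 := Finset.sum_nonneg fun i _ => sq_nonneg _
    simp only [N]; linarith
  have hNp : ∀ s, ‖pEval p s‖ ≤ N s := by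
    intro s
    refine (pi_norm_le_iff_of_nonneg (by linarith [hN0 s])).2 fun i => ?_
    have h1 : pEval p s i ^ 2 ≤ ∑ i, pEval p s i ^ 2 :=
      Finset.single_le_sum (f := fun i => pEval p s i ^ 2) (fun i _ => sq_nonneg _)
        (Finset.mem_univ i)
    rw [Real.norm_eq_abs]
    have h2 : |pEval p s i| ^ 2 = pEval p s i ^ 2 := sq_abs _
    simp only [N]
    nlinarith [sq_nonneg (|pEval p s i| - 1)]
  obtain ⟨G, hG, hGd⟩ := hN.lie hp
  let M : (Fin d → ℝ) → ℝ := fun s => 1 + G s ^ 2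
  have hM : PolyF M := (PolyF.const 1).add (hG.pow 2)
  have hM0 : ∀ s, 0 ≤ M s := fun s => by simp only [M]; positivity
  have hMG : ∀ s, G s ≤ M s := fun s => by simp only [M]; nlinarith [sq_nonneg (G s - 1)]
  obtain ⟨kM, hkM⟩ := hM.growth
  obtain ⟨kq, hkq⟩ := growth_vec hq
  obtain ⟨kN, hkN⟩ := (hN.comp hq).growth
  obtain ⟨kΩ, hkΩ⟩ := PolyF.growth (F := fun v => MvPolynomial.eval v PΩ) ⟨PΩ, fun _ => rfl⟩
  let F : (Option (Fin d) → ℝ) → Option (Fin d) → ℝ := fun s c =>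
    Option.elim c (-(M (fun i => s (some i)) * s none ^ 3))
      (fun i => s none * pEval p (fun i => s (some i)) i)
  let qO : (Fin n → ℝ) → Option (Fin d) → ℝ := fun x c => Option.elim c 1 (fun i => pEval q x i)
  -- final exponent
  let k1 := kq + kN + 4
  let k2 := kΩ + (kΩ + (kq + kΩ + 3) * kM + 1) + 1
  refine ⟨Option (Fin d), inferInstance, F, qO, fun i => some (Fin.castLE hd i), k1 + k2,
    ?_, ?_, ?_⟩
  · intro c
    cases c with
    | none => exact ((hM.comp fun i => PolyF.coord _).mul ((PolyF.coord _).pow 3)).neg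
    | some i => exact (PolyF.coord none).mul ((hp i).comp fun i => PolyF.coord _)
  · intro c
    cases c with
    | none => exact PolyF.const 1
    | some i => exact hq i
  intro x hx
  obtain ⟨y, hy0, hy', hyc, hyl⟩ := H x hx
  have hy0' : y 0 = pEval q x := hy0
  have hycont : ContinuousOn y (Ici 0) := fun t ht => (hy' t ht).continuousAt.continuousWithinAt
  let mm : ℝ → ℝ := fun t => M (y (max t 0))
  have hmm : Continuous mm := by
    have h1 : Continuous fun t : ℝ => y (max t 0) :=
      hycont.comp_continuous (by fun_prop) (fun t => le_max_right t 0)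
    exact hM.continuous.comp h1
  let D : ℝ → ℝ := fun t => 1 + ∫ s in (0:ℝ)..t, mm s
  have hDd : ∀ t, HasDerivAt D (mm t) t := fun t =>
    (intervalIntegral.integral_hasDerivAt_right (hmm.intervalIntegrable _ _)
      (hmm.stronglyMeasurableAtFilter _ _) hmm.continuousAt).const_add 1
  have hDc : Continuous D := continuous_iff_continuousAt.2 fun t => (hDd t).continuousAt
  have hD0 : D 0 = 1 := by simp [D]
  have hDm : Monotone D := monotone_of_deriv_nonneg (fun t => (hDd t).differentiableAt)
    fun t => by rw [(hDd t).deriv]; exact hM0 _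
  have hD1 : ∀ t, 0 ≤ t → 1 ≤ D t := fun t ht => by rw [← hD0]; exact hDm ht
  obtain ⟨φ, hφ0, hφ', hφp, hφi⟩ := reparam (fun t => D (max t 0)) (hDc.comp (by fun_prop))
    (fun t => hD1 _ (le_max_right _ _))
  have hφ'' : ∀ τ, 0 ≤ τ → HasDerivAt φ (D (φ τ))⁻¹ τ := by
    intro τ hτ
    have := hφ' τ
    simpa only [max_eq_left (hφp τ hτ)] using this
  -- N(y t) ≤ N(q x) + D t
  have hND : ∀ t, 0 ≤ t → N (y t) ≤ N (pEval q x) + D t := by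
    intro t ht
    have hder : ∀ s, 0 ≤ s → HasDerivAt (fun s => D s - N (y s)) (mm s - G (y s)) s := by
      intro s hs
      have := hGd y univ s (hy' s hs).hasDerivWithinAt
      rw [hasDerivWithinAt_univ] at this
      exact (hDd s).fun_sub this
    have hmono : MonotoneOn (fun s => D s - N (y s)) (Ici 0) := by
      refine monotoneOn_of_deriv_nonneg (convex_Ici 0)
        (fun s hs => (hder s hs).continuousAt.continuousWithinAt)
        (fun s hs => (hder s ?_).differentiableAt.differentiableWithinAt) (fun s hs => ?_)
      · rw [interior_Ici] at hs; exact le_of_lt hs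
      · rw [interior_Ici] at hs
        have hs' : (0:ℝ) ≤ s := le_of_lt hs
        rw [(hder s hs').deriv]
        simp only [mm, max_eq_left hs']
        linarith [hMG (y s)]
    have := hmono (show (0:ℝ) ∈ Ici 0 from self_mem_Ici) (show t ∈ Ici 0 from ht) ht
    simp only [hD0, hy0'] at this
    linarith
  let Y : ℝ → Option (Fin d) → ℝ := fun τ c => Option.elim c (D (φ τ))⁻¹ (y (φ τ))
  have hvd : ∀ τ, 0 ≤ τ → HasDerivAt (fun τ => y (φ τ)) ((D (φ τ))⁻¹ • pEval p (y (φ τ))) τ := by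
    intro τ hτ
    exact (hy' (φ τ) (hφp τ hτ)).scomp τ (hφ'' τ hτ)
  refine ⟨Y, ?_, ?_, ?_, ?_⟩
  · funext c
    cases c with
    | none => simp [Y, qO, hφ0, hD0]
    | some i => simp [Y, qO, hφ0, hy0']
  · intro τ hτ
    rw [hasDerivWithinAt_pi]
    intro c
    cases c with
    | none =>
      simp only [Y, F, Option.elim]
      have hpos : D (φ τ) ≠ 0 := by linarith [hD1 _ (hφp τ hτ)]
      have h1 : HasDerivAt (fun τ => D (φ τ)) (mm (φ τ) * (D (φ τ))⁻¹) τ :=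
        (hDd (φ τ)).comp τ (hφ'' τ hτ)
      have h2 := (h1.fun_inv hpos).hasDerivWithinAt (s := Ici 0)
      convert h2 using 1
      simp only [mm, max_eq_left (hφp τ hτ)]
      field_simp
    | some i =>
      have := hasDerivAt_pi.1 (hvd τ hτ) i
      exact this.hasDerivWithinAt
  · intro τ hτ
    have hn := norm_nonneg x
    have hNq : N (pEval q x) ≤ (2 + ‖x‖) ^ kN := (le_abs_self _).trans (hkN x)
    have hspeed : ‖y (φ τ) - pEval q x‖ ≤ (N (pEval q x) + 1) * τ := by
      have := Convex.norm_image_sub_le_of_norm_hasDerivWithin_le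
        (f := fun τ => y (φ τ)) (s := Ici (0:ℝ)) (C := N (pEval q x) + 1)
        (fun s hs => (hvd s hs).hasDerivWithinAt) (fun s hs => by
          have h1 := hD1 _ (hφp s hs)
          have h2 := hND _ (hφp s hs)
          have h3 := hNp (y (φ s))
          rw [norm_smul, norm_inv, Real.norm_eq_abs, abs_of_pos (by linarith), inv_mul_le_iff₀
            (by linarith)]
          nlinarith [hN0 (pEval q x)]) (convex_Ici 0) (self_mem_Ici) (show τ ∈ Ici 0 from hτ)
      simpa [hφ0, hy0', abs_of_nonneg hτ] using this
    set b := 2 + ‖x‖ + τ with hb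
    have hb2 : 2 ≤ b := by linarith
    have hb1 : 1 ≤ b := by linarith
    have hyn : ‖y (φ τ)‖ ≤ b ^ k1 := by
      have h1 : ‖y (φ τ)‖ ≤ ‖pEval q x‖ + ‖y (φ τ) - pEval q x‖ := by
        have := norm_add_le (pEval q x) (y (φ τ) - pEval q x)
        simpa using this
      have h2 : ‖pEval q x‖ ≤ b ^ kq :=
        (hkq x).trans (pow_le_pow_left₀ (by positivity) (by linarith) _)
      have h3 : N (pEval q x) ≤ b ^ kN :=
        hNq.trans (pow_le_pow_left₀ (by positivity) (by linarith) _)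
      have h4 : (1:ℝ) ≤ b ^ kN := one_le_pow₀ hb1
      have h4' : (1:ℝ) ≤ b ^ kq := one_le_pow₀ hb1
      have h5 : (N (pEval q x) + 1) * τ ≤ (b ^ kN * b) * b :=
        mul_le_mul (by nlinarith) (by linarith) hτ (by positivity)
      have h6 : b ^ k1 = (b ^ kq * b ^ kN * b ^ 2) * (b * b) := by simp only [k1]; ring
      have h7 : b ^ kN * b * b ≤ b ^ kq * b ^ kN * b ^ 2 := by
        have : 0 ≤ b ^ kN * b * b := by positivity
        nlinarith
      have h8 : b ^ kq ≤ b ^ kq * b ^ kN * b ^ 2 := by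
        have : 1 ≤ b ^ kN * b ^ 2 := one_le_mul_of_one_le_of_one_le h4 (one_le_pow₀ hb1)
        nlinarith
      have h9 : 2 * (b ^ kq * b ^ kN * b ^ 2) ≤ b ^ k1 := by
        rw [h6]
        have : 0 ≤ b ^ kq * b ^ kN * b ^ 2 := by positivity
        have hbb : 2 ≤ b * b := by nlinarith
        nlinarith [mul_le_mul_of_nonneg_left hbb this]
      linarith
    have hk : b ^ k1 ≤ b ^ (k1 + k2) := pow_le_pow_right₀ hb1 (by omega)
    refine (pi_norm_le_iff_of_nonneg (by positivity)).2 fun c => ?_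
    cases c with
    | none =>
      simp only [Y, Option.elim]
      have h1 := hD1 _ (hφp τ hτ)
      rw [norm_inv, Real.norm_eq_abs, abs_of_pos (by linarith)]
      exact (inv_le_one_of_one_le₀ h1).trans (one_le_pow₀ hb1)
    | some i =>
      exact (norm_le_pi_norm (y (φ τ)) i).trans (hyn.trans hk)
  · intro τ μ hμ hτ
    have hn := norm_nonneg x
    set b := 2 + ‖x‖ + μ with hb
    have hb2 : 2 ≤ b := by linarith
    have hb1 : 1 ≤ b := by linarith
    have hτ0 : 0 ≤ τ := le_trans (by positivity) hτ
    set t := φ τ with ht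
    have ht0 : 0 ≤ t := hφp τ hτ0
    have hΩb : Ω ‖x‖ μ ≤ b ^ kΩ := by
      rw [hPΩ]
      refine (le_abs_self _).trans ((hkΩ _).trans (pow_le_pow_left₀ (by positivity) ?_ _))
      have : ‖![‖x‖, μ]‖ ≤ ‖x‖ + μ := by
        refine (pi_norm_le_iff_of_nonneg (by positivity)).2 fun i => ?_
        fin_cases i
        · simp; linarith
        · simp [abs_of_nonneg hμ]
      linarith
    have key : Ω ‖x‖ μ ≤ pLen p y t := by
      by_contra hlt
      push Not at hlt
      set ℓ := pLen p y t with hℓ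
      have hℓt : t ≤ ℓ := hyl t ht0
      have hcint : ∀ s, 0 ≤ s → ContinuousOn (fun s => pEval p (y s)) (uIcc 0 s) := by
        intro s hs
        rw [uIcc_of_le hs]
        have h2 : Continuous (pEval p) := continuous_vec hp
        exact h2.comp_continuousOn (hycont.mono Icc_subset_Ici_self)
      have hys : ∀ s ∈ Icc 0 t, ‖y s‖ ≤ ‖pEval q x‖ + ℓ := by
        intro s hs
        have h1 : ∫ r in (0:ℝ)..s, pEval p (y r) = y s - y 0 := by
          refine intervalIntegral.integral_eq_sub_of_hasDerivAt (fun r hr => hy' r ?_)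
            (hcint s hs.1).intervalIntegrable
          rw [uIcc_of_le hs.1] at hr; exact hr.1
        have h2 : ‖y s - y 0‖ ≤ pLen p y s := by
          rw [← h1]; exact intervalIntegral.norm_integral_le_integral_norm hs.1
        have h3 : pLen p y s ≤ ℓ := by
          refine intervalIntegral.integral_mono_interval le_rfl hs.1 hs.2
            (Eventually.of_forall fun r => norm_nonneg _) (hcint t ht0).norm.intervalIntegrable
        have h4 : ‖y s‖ ≤ ‖y 0‖ + ‖y s - y 0‖ := by
          have := norm_add_le (y 0) (y s - y 0)
          simpa using this
        rw [hy0'] at h2 h4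
        linarith
      have hℓb : ℓ ≤ b ^ kΩ := hlt.le.trans hΩb
      have hqb : ‖pEval q x‖ ≤ b ^ kq :=
        (hkq x).trans (pow_le_pow_left₀ (by positivity) (by linarith) _)
      set E := (b ^ (kq + kΩ + 3)) ^ kM with hE
      have hEpos : 0 ≤ E := by positivity
      have hMb : ∀ s ∈ Icc 0 t, M (y s) ≤ E := by
        intro s hs
        refine (le_abs_self _).trans ((hkM _).trans (pow_le_pow_left₀ (by positivity) ?_ _))
        have h1 := hys s hs
        have h2 : b ^ kq ≤ b ^ (kq + kΩ) := pow_le_pow_right₀ hb1 (by omega)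
        have h3 : b ^ kΩ ≤ b ^ (kq + kΩ) := pow_le_pow_right₀ hb1 (by omega)
        have h4 : (1:ℝ) ≤ b ^ (kq + kΩ) := one_le_pow₀ hb1
        have h5 : (8:ℝ) ≤ b ^ 3 := by
          calc (8:ℝ) = 2 ^ 3 := by norm_num
            _ ≤ b ^ 3 := pow_le_pow_left₀ (by norm_num) hb2 3
        rw [pow_add]
        nlinarith
      have hDt : D t ≤ 1 + E * t := by
        have h1 : ‖∫ s in (0:ℝ)..t, mm s‖ ≤ E * |t - 0| := by
          refine intervalIntegral.norm_integral_le_of_norm_le_const fun s hs => ?_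
          rw [uIoc_of_le ht0] at hs
          simp only [mm, max_eq_left hs.1.le]
          rw [Real.norm_eq_abs, abs_of_nonneg (hM0 _)]
          exact hMb s ⟨hs.1.le, hs.2⟩
        have := (le_abs_self _).trans h1
        rw [sub_zero, abs_of_nonneg ht0] at this
        simp only [D]; linarith
      have hτt : τ ≤ D t * t := by
        have h0 := hφi τ
        rw [← ht] at h0
        have h1 : ‖∫ s in (0:ℝ)..t, D (max s 0)‖ ≤ D t * |t - 0| := by
          refine intervalIntegral.norm_integral_le_of_norm_le_const fun s hs => ?_
          rw [uIoc_of_le ht0] at hs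
          simp only [max_eq_left hs.1.le]
          rw [Real.norm_eq_abs, abs_of_nonneg (by linarith [hD1 s hs.1.le])]
          exact hDm hs.2
        rw [h0, sub_zero, abs_of_nonneg ht0] at h1
        exact (le_abs_self _).trans h1
      have htb : t ≤ b ^ kΩ := hℓt.trans hℓb
      have hE1 : E * b ^ kΩ = b ^ (kΩ + (kq + kΩ + 3) * kM) := by
        rw [hE, ← pow_mul, ← pow_add]; congr 1; ring
      have h1 : D t ≤ b ^ (kΩ + (kq + kΩ + 3) * kM + 1) := by
        have h2 : E * t ≤ E * b ^ kΩ := mul_le_mul_of_nonneg_left htb hEpos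
        have h3 : (1:ℝ) ≤ b ^ (kΩ + (kq + kΩ + 3) * kM) := one_le_pow₀ hb1
        rw [pow_succ]
        nlinarith
      have h2 : D t * t ≤ b ^ (kΩ + (kΩ + (kq + kΩ + 3) * kM + 1)) := by
        rw [pow_add, mul_comm]
        exact mul_le_mul htb h1 (by linarith [hD1 t ht0]) (by positivity)
      have h3 : b ^ k2 ≤ τ := le_trans (pow_le_pow_right₀ hb1 (by omega)) hτ
      have h4 : b ^ k2 = b ^ (kΩ + (kΩ + (kq + kΩ + 3) * kM + 1)) * b := pow_succ _ _
      have h5 : 0 < b ^ (kΩ + (kΩ + (kq + kΩ + 3) * kM + 1)) := by positivity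
      nlinarith
    exact hyc t ht0 μ hμ key


open Set Filter Topology

lemma exist_bdd {κ : Type} [Fintype κ] (G : ℝ → (κ → ℝ) → κ → ℝ) (z0 : κ → ℝ)
    (hc : ∀ v, ContinuousOn (fun t => G t v) (Ici 0))
    (hb : ∀ T : ℝ, 0 ≤ T → ∃ B : ℝ, ∀ t ∈ Icc 0 T, ∀ v, ‖G t v‖ ≤ B)
    (hl : ∀ T : ℝ, 0 ≤ T → ∃ K : ℝ, ∀ t ∈ Icc 0 T, ∀ v w, ‖G t v - G t w‖ ≤ K * ‖v - w‖) :
    ∃ z : ℝ → κ → ℝ, z 0 = z0 ∧ ∀ t, 0 ≤ t → HasDerivWithinAt z (G t (z t)) (Ici 0) t := by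
  have hl' : ∀ T : ℝ, 0 ≤ T → ∃ K : NNReal, ∀ t ∈ Icc 0 T, LipschitzWith K (G t) := by
    intro T hT
    obtain ⟨K, hK⟩ := hl T hT
    refine ⟨K.toNNReal, fun t ht => LipschitzWith.of_dist_le_mul fun v w => ?_⟩
    rw [dist_eq_norm, dist_eq_norm]
    exact (hK t ht v w).trans (mul_le_mul_of_nonneg_right (Real.le_coe_toNNReal K) (norm_nonneg _))
  have hloc : ∀ N : ℕ, ∃ α : ℝ → κ → ℝ, α 0 = z0 ∧
      ∀ t ∈ Icc (0:ℝ) (N + 1), HasDerivWithinAt α (G t (α t)) (Icc 0 (N + 1 : ℝ)) t := by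
    intro N
    have hN : (0:ℝ) ≤ N + 1 := by positivity
    obtain ⟨B, hB⟩ := hb (N + 1) hN
    obtain ⟨K, hK⟩ := hl' (N + 1) hN
    have hP : IsPicardLindelof G (tmin := 0) (tmax := (N + 1 : ℝ)) ⟨0, le_rfl, hN⟩ z0
        (B.toNNReal * (N + 1)) 0 B.toNNReal K :=
      { lipschitzOnWith := fun t ht => (hK t ht).lipschitzOnWith
        continuousOn := fun v _ => (hc v).mono Icc_subset_Ici_self
        norm_le := fun t ht v _ => (hB t ht v).trans (Real.le_coe_toNNReal B)
        mul_max_le := by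
          simp [max_eq_left hN] }
    exact hP.exists_eq_forall_mem_Icc_hasDerivWithinAt₀
  choose α hα0 hα using hloc
  have hαc : ∀ N, ContinuousOn (α N) (Icc (0:ℝ) (N + 1)) :=
    fun N t ht => (hα N t ht).continuousWithinAt
  have hu : ∀ N M : ℕ, N ≤ M → EqOn (α N) (α M) (Icc (0:ℝ) (N + 1)) := by
    intro N M hNM
    have hNM' : (N + 1 : ℝ) ≤ M + 1 := by exact_mod_cast Nat.succ_le_succ hNM
    obtain ⟨K, hK⟩ := hl' (N + 1) (by positivity)
    have hmem : ∀ (P : ℕ) (t : ℝ), 0 ≤ t → t < P + 1 → Icc (0:ℝ) (P + 1) ∈ 𝓝[≥] t := by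
      intro P t h0 h1
      exact mem_of_superset (Icc_mem_nhdsGE h1) (Icc_subset_Icc_left h0)
    refine ODE_solution_unique_of_mem_Icc_right (s := fun _ => univ) (K := K) (v := G)
      (fun t ht => (hK t (Ico_subset_Icc_self ht)).lipschitzOnWith) (hαc N) ?_ (fun _ _ => trivial)
      ((hαc M).mono (Icc_subset_Icc_right hNM')) ?_ (fun _ _ => trivial) (by rw [hα0, hα0])
    · intro t ht
      exact (hα N t (Ico_subset_Icc_self ht)).mono_of_mem_nhdsWithin (hmem N t ht.1 ht.2)
    · intro t ht
      exact (hα M t ⟨ht.1, ht.2.le.trans hNM'⟩).mono_of_mem_nhdsWithin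
        (hmem M t ht.1 (ht.2.trans_le hNM'))
  have hz : ∀ (N : ℕ) (t : ℝ), 0 ≤ t → t < N + 1 → α ⌊t⌋₊ t = α N t := by
    intro N t h0 h1
    have : ⌊t⌋₊ ≤ N := by
      have : ⌊t⌋₊ < N + 1 := (Nat.floor_lt h0).2 (by exact_mod_cast h1)
      omega
    exact hu _ _ this ⟨h0, (Nat.lt_floor_add_one t).le⟩
  refine ⟨fun t => α ⌊t⌋₊ t, by simp [hα0], fun t ht => ?_⟩
  let N := ⌊t⌋₊
  have htN : t < N + 1 := Nat.lt_floor_add_one t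
  have h1 : HasDerivWithinAt (α N) (G t (α N t)) (Ici 0) t := by
    refine (hα N t ⟨ht, htN.le⟩).mono_of_mem_nhdsWithin ?_
    have : Iio (N + 1 : ℝ) ∈ 𝓝[Ici 0] t := mem_nhdsWithin_of_mem_nhds (Iio_mem_nhds htN)
    filter_upwards [this, self_mem_nhdsWithin] with s hs1 hs2
    exact ⟨hs2, le_of_lt hs1⟩
  refine h1.congr_of_eventuallyEq ?_ (hz N t ht htN)
  have : Iio (N + 1 : ℝ) ∈ 𝓝[Ici 0] t := mem_nhdsWithin_of_mem_nhds (Iio_mem_nhds htN)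
  filter_upwards [this, self_mem_nhdsWithin] with s hs1 hs2
  exact hz N s hs2 hs1

lemma exist_lin {κ : Type} [Fintype κ] (H : ℝ → (κ → ℝ) → κ → ℝ) (z0 : κ → ℝ) (r : ℝ → ℝ)
    (hr : Continuous r)
    (hc : ContinuousOn (fun p : ℝ × (κ → ℝ) => H p.1 p.2) (Ici 0 ×ˢ univ))
    (hb : ∀ T : ℝ, 0 ≤ T → ∃ B : ℝ, ∀ t ∈ Icc 0 T, ∀ v, ‖H t v‖ ≤ B)
    (hl : ∀ T : ℝ, 0 ≤ T → ∃ K : ℝ, ∀ t ∈ Icc 0 T, ∀ v w, ‖H t v - H t w‖ ≤ K * ‖v - w‖) :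
    ∃ z : ℝ → κ → ℝ, z 0 = z0 ∧
      ∀ t, 0 ≤ t → HasDerivWithinAt z (H t (z t) - r t • z t) (Ici 0) t := by
  let A : ℝ → ℝ := fun t => ∫ s in (0:ℝ)..t, r s
  have hA : ∀ t, HasDerivAt A (r t) t := fun t =>
    intervalIntegral.integral_hasDerivAt_right (hr.intervalIntegrable _ _)
      (hr.stronglyMeasurableAtFilter _ _) hr.continuousAt
  have hAc : Continuous A := continuous_iff_continuousAt.2 fun t => (hA t).continuousAt
  have key : ∃ w : ℝ → κ → ℝ, w 0 = z0 ∧ ∀ t, 0 ≤ t → HasDerivWithinAt w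
      (Real.exp (A t) • H t (Real.exp (-A t) • w t)) (Ici 0) t := by
    refine exist_bdd (fun t v => Real.exp (A t) • H t (Real.exp (-A t) • v)) z0 ?_ ?_ ?_
    · intro v
      have h1 : ContinuousOn (fun t => Real.exp (A t)) (Ici 0) := by fun_prop
      refine h1.smul ?_
      have h2 : ContinuousOn (fun t => (t, Real.exp (-A t) • v)) (Ici 0) := by fun_prop
      refine hc.comp h2 ?_
      intro t ht
      exact ⟨ht, trivial⟩
    · intro T hT
      obtain ⟨B, hB⟩ := hb T hT
      obtain ⟨E, hE⟩ := (isCompact_Icc (a := (0:ℝ)) (b := T)).exists_bound_of_continuousOn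
        (f := fun t => Real.exp (A t)) (by fun_prop)
      refine ⟨E * B, fun t ht v => ?_⟩
      rw [norm_smul]
      exact mul_le_mul (hE t ht) (hB t ht _) (norm_nonneg _) ((norm_nonneg _).trans (hE t ht))
    · intro T hT
      obtain ⟨K, hK⟩ := hl T hT
      refine ⟨K, fun t ht v w => ?_⟩
      rw [← smul_sub, norm_smul]
      have h1 := hK t ht (Real.exp (-A t) • v) (Real.exp (-A t) • w)
      rw [← smul_sub, norm_smul] at h1
      calc _ ≤ ‖Real.exp (A t)‖ * (K * (‖Real.exp (-A t)‖ * ‖v - w‖)) :=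
            mul_le_mul_of_nonneg_left h1 (norm_nonneg _)
        _ = (‖Real.exp (A t)‖ * ‖Real.exp (-A t)‖) * (K * ‖v - w‖) := by ring
        _ = K * ‖v - w‖ := by
          rw [← norm_mul, ← Real.exp_add]; simp
  obtain ⟨w, hw0, hw⟩ := key
  refine ⟨fun t => Real.exp (-A t) • w t, by simp [A, hw0], fun t ht => ?_⟩
  have h1 : HasDerivAt (fun t => Real.exp (-A t)) (Real.exp (-A t) * (-r t)) t :=
    (hA t).fun_neg.exp
  have h2 := h1.hasDerivWithinAt (s := Ici 0) |>.fun_smul (hw t ht)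
  refine h2.congr_deriv ?_
  rw [smul_smul, ← Real.exp_add]
  simp only [neg_add_cancel, Real.exp_zero, one_smul, smul_smul]
  rw [sub_eq_add_neg, ← neg_smul]
  congr 2
  ring

lemma relax_one (u r η : ℝ → ℝ) (t0 t1 r0 ε δ : ℝ)
    (hc : ContinuousOn u (Icc t0 t1))
    (hu : ∀ t ∈ Ico t0 t1, HasDerivWithinAt u (-(r t * u t) + η t) (Ici t) t)
    (hr0 : 0 ≤ r0) (hr : ∀ t ∈ Icc t0 t1, r0 ≤ r t) (hε : 0 ≤ ε) (hδ : 0 ≤ δ)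
    (hη : ∀ t ∈ Icc t0 t1, |η t| ≤ ε * r t + δ) (t : ℝ) (ht : t ∈ Icc t0 t1) :
    u t ≤ Real.exp (-(r0 * (t - t0))) * |u t0| + ε + δ * (t - t0) := by
  suffices h : ∀ ϑ > 0, u t ≤ (Real.exp (-(r0 * (t - t0))) * |u t0| + ε + δ * (t - t0))
      + ϑ * (t - t0) by
    have h2 : Tendsto (fun ϑ => (Real.exp (-(r0 * (t - t0))) * |u t0| + ε + δ * (t - t0))
      + ϑ * (t - t0)) (𝓝[>] 0) (𝓝 ((Real.exp (-(r0 * (t - t0))) * |u t0| + ε + δ * (t - t0))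
      + 0 * (t - t0))) := by
      refine Tendsto.mono_left ?_ nhdsWithin_le_nhds
      refine Continuous.tendsto (by fun_prop) 0
    rw [zero_mul, add_zero] at h2
    refine ge_of_tendsto h2 ?_
    filter_upwards [self_mem_nhdsWithin] with ϑ hϑ
    exact h ϑ hϑ
  intro ϑ hϑ
  let B : ℝ → ℝ := fun t => (Real.exp (-(r0 * (t - t0))) * |u t0| + ε + δ * (t - t0))
      + ϑ * (t - t0)
  have hB : ∀ t, HasDerivAt B (-(r0 * Real.exp (-(r0 * (t - t0))) * |u t0|) + δ + ϑ) t := by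
    intro t
    have h0 : HasDerivAt (fun t : ℝ => t - t0) 1 t := (hasDerivAt_id' t).sub_const t0
    have h1 := ((h0.const_mul r0).fun_neg.exp.mul_const |u t0|).add_const ε
    have h2 := (h1.fun_add (h0.const_mul δ)).fun_add (h0.const_mul ϑ)
    refine h2.congr_deriv ?_
    ring
  refine image_le_of_deriv_right_lt_deriv_boundary' (B := B) hc hu ?_ ?_
    (fun x _ => (hB x).hasDerivWithinAt) ?_ ht
  · simp only [B, sub_self, mul_zero, neg_zero, Real.exp_zero, one_mul, add_zero]
    linarith [le_abs_self (u t0)]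
  · exact fun x _ => (hB x).continuousAt.continuousWithinAt
  · intro x hx heq
    have hx' := Ico_subset_Icc_self hx
    have h1 := hr x hx'
    have h2 := (le_abs_self _).trans (hη x hx')
    have h3 : 0 ≤ x - t0 := by linarith [hx.1]
    rw [heq]
    simp only [B]
    set P := Real.exp (-(r0 * (x - t0))) * |u t0| with hP
    have hP0 : 0 ≤ P := by positivity
    have h4 : 0 ≤ r x := hr0.trans h1
    have h5 : r0 * P ≤ r x * P := mul_le_mul_of_nonneg_right h1 hP0
    have h6 : 0 ≤ r x * (δ * (x - t0) + ϑ * (x - t0)) := by positivity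
    rw [mul_assoc, ← hP]
    nlinarith

lemma relax (u r η : ℝ → ℝ) (t0 t1 r0 ε δ : ℝ)
    (hc : ContinuousOn u (Icc t0 t1))
    (hu : ∀ t ∈ Ico t0 t1, HasDerivWithinAt u (-(r t * u t) + η t) (Ici t) t)
    (hr0 : 0 ≤ r0) (hr : ∀ t ∈ Icc t0 t1, r0 ≤ r t) (hε : 0 ≤ ε) (hδ : 0 ≤ δ)
    (hη : ∀ t ∈ Icc t0 t1, |η t| ≤ ε * r t + δ) (t : ℝ) (ht : t ∈ Icc t0 t1) :
    |u t| ≤ Real.exp (-(r0 * (t - t0))) * |u t0| + ε + δ * (t - t0) := by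
  rw [abs_le]
  constructor
  · have := relax_one (fun t => -u t) r (fun t => -η t) t0 t1 r0 ε δ hc.fun_neg
      (fun t ht => by
        refine (hu t ht).fun_neg.congr_deriv ?_
        ring) hr0 hr hε hδ (fun t ht => by simpa using hη t ht) t ht
    simp only [abs_neg] at this
    linarith
  · exact relax_one u r η t0 t1 r0 ε δ hc hu hr0 hr hε hδ hη t ht

lemma gron {E : Type*} [NormedAddCommGroup E] [NormedSpace ℝ E] (e e' : ℝ → E)
    (t0 t1 δ ϑ K η : ℝ) (hc : ContinuousOn e (Icc t0 t1))
    (he : ∀ t ∈ Ico t0 t1, HasDerivWithinAt e (e' t) (Ici t) t) (h0 : ‖e t0‖ ≤ δ)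
    (hδ : 0 ≤ δ) (hϑ : 0 ≤ ϑ) (hK : 0 ≤ K) (hηϑ : η < ϑ)
    (hb : ∀ t ∈ Ico t0 t1, ‖e t‖ ≤ 1 → ‖e' t‖ ≤ K * ‖e t‖ + η)
    (h1 : (δ + ϑ * (t1 - t0)) * Real.exp (K * (t1 - t0)) ≤ 1) (t : ℝ) (ht : t ∈ Icc t0 t1) :
    ‖e t‖ ≤ (δ + ϑ * (t1 - t0)) * Real.exp (K * (t1 - t0)) := by
  let B : ℝ → ℝ := fun t => (δ + ϑ * (t - t0)) * Real.exp (K * (t - t0))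
  have hB : ∀ t, HasDerivAt B (K * B t + ϑ * Real.exp (K * (t - t0))) t := by
    intro t
    have h0 : HasDerivAt (fun t : ℝ => t - t0) 1 t := (hasDerivAt_id' t).sub_const t0
    have h1 := ((h0.const_mul ϑ).const_add δ).fun_mul (h0.const_mul K).exp
    refine h1.congr_deriv ?_
    simp only [B]; ring
  have hBm : ∀ t ∈ Icc t0 t1, B t ≤ B t1 := by
    intro t ht
    have h3 : 0 ≤ t - t0 := by linarith [ht.1]
    have h4 : t - t0 ≤ t1 - t0 := by linarith [ht.2]
    have h5 : 0 ≤ t1 - t0 := by linarith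
    simp only [B]
    gcongr
  refine le_trans ?_ (hBm t ht)
  refine image_norm_le_of_norm_deriv_right_lt_deriv_boundary' (B := B) hc he ?_ ?_
    (fun x _ => (hB x).hasDerivWithinAt) ?_ ht
  · simpa [B] using h0
  · exact fun x _ => (hB x).continuousAt.continuousWithinAt
  · intro x hx heq
    have h2 := hb x hx (heq.le.trans ((hBm x (Ico_subset_Icc_self hx)).trans h1))
    rw [heq] at h2
    have h3 : 0 ≤ x - t0 := by linarith [hx.1]
    have h4 : 1 ≤ Real.exp (K * (x - t0)) := Real.one_le_exp (by positivity)
    nlinarith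


open Set Filter Topology

lemma pw_add {Λ : ℝ} (h : 3 ≤ Λ) (a b : ℕ) : Λ ^ a + Λ ^ b ≤ Λ ^ (a + b + 1) := by
  have h1 : Λ ^ a ≤ Λ ^ (a + b) := pow_le_pow_right₀ (by linarith) (by omega)
  have h2 : Λ ^ b ≤ Λ ^ (a + b) := pow_le_pow_right₀ (by linarith) (by omega)
  have h3 : 0 < Λ ^ (a + b) := by positivity
  rw [pow_succ]
  nlinarith

lemma pw_mono {Λ : ℝ} (h : 3 ≤ Λ) {a b : ℕ} (hab : a ≤ b) : Λ ^ a ≤ Λ ^ b :=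
  pow_le_pow_right₀ (by linarith) hab

lemma pw_one {Λ : ℝ} (h : 3 ≤ Λ) (a : ℕ) : 1 ≤ Λ ^ a := one_le_pow₀ (by linarith)

/-- multiplication by 9 costs two exponents -/
lemma pw_nine {Λ : ℝ} (h : 3 ≤ Λ) (a : ℕ) : 9 * Λ ^ a ≤ Λ ^ (a + 2) := by
  have h3 : 0 < Λ ^ a := by positivity
  have : 9 ≤ Λ ^ 2 := by nlinarith
  rw [pow_add]
  nlinarith

lemma pw_three {Λ : ℝ} (h : 3 ≤ Λ) (a : ℕ) : 3 * Λ ^ a ≤ Λ ^ (a + 1) := by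
  have h3 : 0 < Λ ^ a := by positivity
  rw [pow_succ]
  nlinarith

lemma pw_le_exp {Λ : ℝ} (h : 3 ≤ Λ) (m : ℕ) : Λ ^ m ≤ Real.exp (Λ ^ (m + 1)) := by
  have h1 : Λ ≤ Real.exp Λ := by linarith [Real.add_one_le_exp Λ]
  have h2 : Λ ^ m ≤ Real.exp Λ ^ m := pow_le_pow_left₀ (by linarith) h1 m
  rw [← Real.exp_nat_mul] at h2
  refine h2.trans (Real.exp_le_exp.2 ?_)
  have h3 : (m : ℝ) ≤ Λ ^ m := by
    have : (m : ℝ) ≤ (2:ℝ) ^ m := by exact_mod_cast (Nat.lt_two_pow_self (n := m)).le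
    exact this.trans (pow_le_pow_left₀ (by norm_num) (by linarith) m)
  rw [pow_succ]
  exact mul_le_mul_of_nonneg_right h3 (by linarith)

lemma pw_exp {Λ : ℝ} (h : 3 ≤ Λ) {m p n : ℕ} (hn : m + p + 5 ≤ n) :
    Λ ^ m * Real.exp (-(Λ ^ n / 16)) ≤ Real.exp (-Λ ^ p) := by
  have h1 := pw_le_exp h m
  have h2 : Λ ^ (m + 1) + Λ ^ p ≤ Λ ^ n / 16 := by
    have h3 := pw_add h (m + 1) p
    have h4 : Λ ^ (m + 1 + p + 1 + 3) ≤ Λ ^ n := pw_mono h (by omega)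
    have h5 : (27:ℝ) ≤ Λ ^ 3 := by
      calc (27:ℝ) = 3 ^ 3 := by norm_num
        _ ≤ Λ ^ 3 := pow_le_pow_left₀ (by norm_num) h 3
    have h6 : 0 < Λ ^ (m + 1 + p + 1) := by positivity
    rw [pow_add] at h4
    nlinarith
  calc Λ ^ m * Real.exp (-(Λ ^ n / 16)) ≤ Real.exp (Λ ^ (m + 1)) * Real.exp (-(Λ ^ n / 16)) :=
        mul_le_mul_of_nonneg_right h1 (Real.exp_pos _).le
    _ = Real.exp (Λ ^ (m + 1) - Λ ^ n / 16) := by rw [← Real.exp_add]; ring_nf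
    _ ≤ Real.exp (-Λ ^ p) := Real.exp_le_exp.2 (by linarith)

lemma exp_two_ge : (5:ℝ) ≤ Real.exp 2 := by
  have h1 := Real.add_one_le_exp (1:ℝ)
  have h2 : Real.exp 2 = Real.exp 1 * Real.exp 1 := by rw [← Real.exp_add]; norm_num
  have := Real.exp_one_gt_d9
  rw [h2]; nlinarith

lemma exp5 {Λ : ℝ} (h : 3 ≤ Λ) (n : ℕ) :
    5 * Real.exp (-Λ ^ (n + 1)) ≤ Real.exp (-Λ ^ n) := by
  have h1 : Real.exp (-Λ ^ n) = Real.exp (-Λ ^ n + Λ ^ (n + 1)) * Real.exp (-Λ ^ (n + 1)) := by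
    rw [← Real.exp_add]; ring_nf
  rw [h1]
  refine mul_le_mul_of_nonneg_right ?_ (Real.exp_pos _).le
  refine exp_two_ge.trans (Real.exp_le_exp.2 ?_)
  have := pw_one h n
  rw [pow_succ]; nlinarith

lemma pw_cycle {Λ L : ℝ} (h : 3 ≤ Λ) (h0 : 0 ≤ L) (hL : L ≤ Λ + 3) (n : ℕ) :
    L ^ n ≤ Λ ^ (3 * n) := by
  rw [pow_mul]
  refine pow_le_pow_left₀ h0 ?_ n
  have : 9 ≤ Λ ^ 2 := by nlinarith
  nlinarith

/-- the phase function -/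
noncomputable def hh (c t : ℝ) : ℝ := Real.cos (2 * Real.pi / 3 * (t - c)) - 3 / 4

noncomputable def pulse (e : ℕ) (X c t : ℝ) : ℝ := Real.sigmoid (t * (X + t) ^ e * hh c t)

lemma hh_shift (c t : ℝ) (j : ℕ) : hh c t = hh c (t - 3 * j) := by
  unfold hh
  have : 2 * Real.pi / 3 * (t - 3 * j - c) = 2 * Real.pi / 3 * (t - c) - j * (2 * Real.pi) := by
    ring
  rw [this, Real.cos_sub_nat_mul_two_pi]

lemma hh_on {c t : ℝ} {j : ℕ} (h1 : 3 * j + c - 1 / 4 ≤ t) (h2 : t ≤ 3 * j + c + 1 / 4) :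
    0 ≤ hh c t := by
  rw [hh_shift c t j]
  unfold hh
  set τ := t - 3 * j - c with hτ
  have h3 : |2 * Real.pi / 3 * τ| ≤ Real.pi / 6 := by
    rw [abs_mul, abs_of_pos (by positivity)]
    have : |τ| ≤ 1 / 4 := abs_le.2 ⟨by linarith, by linarith⟩
    nlinarith [Real.pi_pos]
  rw [← Real.cos_abs]
  have h4 := Real.cos_le_cos_of_nonneg_of_le_pi (abs_nonneg _) (by linarith [Real.pi_pos]) h3
  rw [Real.cos_pi_div_six] at h4
  have h5 : (3 / 2 : ℝ) ≤ √3 := by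
    exact Real.le_sqrt_of_sq_le (by norm_num)
  linarith

lemma hh_off {c t : ℝ} {j : ℕ} (h1 : 3 * j + c + 1 / 2 ≤ t) (h2 : t ≤ 3 * j + c + 5 / 2) :
    hh c t ≤ -(1 / 4) := by
  rw [hh_shift c t j]
  unfold hh
  set τ := t - 3 * j - c with hτ
  -- cos (ω τ) = - cos (ω τ - π)
  have h3 : |2 * Real.pi / 3 * τ - Real.pi| ≤ 2 * Real.pi / 3 := by
    rw [abs_le]
    constructor <;> nlinarith [Real.pi_pos]
  have h4 := Real.cos_le_cos_of_nonneg_of_le_pi (abs_nonneg _) (by linarith [Real.pi_pos]) h3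
  rw [Real.cos_abs, Real.cos_sub_pi] at h4
  have h5 : Real.cos (2 * Real.pi / 3) = -(1 / 2) := by
    have : 2 * Real.pi / 3 = Real.pi - Real.pi / 3 := by ring
    rw [this, Real.cos_pi_sub, Real.cos_pi_div_three]
  linarith

lemma hh_off' {c t : ℝ} {j : ℕ} (h1 : 3 * j + c - 5 / 2 ≤ t) (h2 : t ≤ 3 * j + c - 1 / 2) :
    hh c t ≤ -(1 / 4) := by
  have : hh c t = hh c (t + 3) := by
    have := hh_shift c (t + 3) 1
    rw [this]; congr 1; push_cast; ring
  rw [this]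
  exact hh_off (j := j) (by linarith) (by linarith)

lemma sigmoid_le_exp (u : ℝ) : Real.sigmoid u ≤ Real.exp u := by
  rw [Real.sigmoid_def]
  have h : Real.exp u = (Real.exp (-u))⁻¹ := by rw [Real.exp_neg, inv_inv]
  rw [h]
  exact inv_anti₀ (Real.exp_pos _) (by linarith)

lemma pulse_nonneg (e : ℕ) (X c t : ℝ) : 0 ≤ pulse e X c t := Real.sigmoid_nonneg _
lemma pulse_le_one (e : ℕ) (X c t : ℝ) : pulse e X c t ≤ 1 := Real.sigmoid_le_one _

lemma pulse_continuous (e : ℕ) (X c : ℝ) : Continuous (pulse e X c) := by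
  unfold pulse hh
  refine continuous_sigmoid.comp ?_
  fun_prop

lemma pulse_on {e : ℕ} {X c t : ℝ} (hX : 3 ≤ X) (ht : 0 ≤ t) (h : 0 ≤ hh c t) :
    1 / 2 ≤ pulse e X c t := by
  have h1 : Real.sigmoid 0 ≤ pulse e X c t := by
    refine Real.sigmoid_monotone ?_
    have : 0 ≤ X + t := by linarith
    positivity
  rw [Real.sigmoid_zero] at h1
  linarith

lemma pulse_off {e : ℕ} {X c t : ℝ} (hX : 3 ≤ X) (ht : 0 ≤ t) (h : hh c t ≤ -(1 / 4)) :
    pulse e X c t ≤ Real.exp (-(t * (X + t) ^ e / 4)) := by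
  refine (sigmoid_le_exp _).trans (Real.exp_le_exp.2 ?_)
  have h0 : 0 ≤ X + t := by linarith
  have : 0 ≤ t * (X + t) ^ e := by positivity
  nlinarith

/-- off pulse, early: pointwise at most one -/
lemma pulse_off_one {e m : ℕ} {X c t : ℝ} (hX : 3 ≤ X) (ht : 0 ≤ t) (h : hh c t ≤ -(1 / 4))
    (hm : m + 2 ≤ e) : t * (X + t) ^ m * pulse e X c t ≤ 1 := by
  have h1 := pulse_off (e := e) hX ht h
  have hL : 3 ≤ X + t := by linarith
  set L := X + t
  set v := t * L ^ e / 4 with hv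
  have h2 : v * Real.exp (-v) ≤ 1 := by
    have h3 := Real.add_one_le_exp v
    rw [Real.exp_neg]
    rw [← div_eq_mul_inv, div_le_one (Real.exp_pos _)]
    linarith
  have h4 : t * L ^ m ≤ v := by
    have h5 : 9 * L ^ m ≤ L ^ e := (pw_nine hL m).trans (pw_mono hL hm)
    have h6 : 0 ≤ L ^ m := by positivity
    rw [hv]; nlinarith
  have h7 : 0 ≤ t * L ^ m := by positivity
  calc t * L ^ m * pulse e X c t ≤ v * Real.exp (-v) :=
        mul_le_mul h4 h1 (pulse_nonneg _ _ _ _) (h7.trans h4)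
    _ ≤ 1 := h2

/-- off pulse, late: tiny -/
lemma pulse_off_tiny {e m p : ℕ} {X c t : ℝ} (hX : 3 ≤ X) (ht : 1 / 4 ≤ t)
    (h : hh c t ≤ -(1 / 4)) (hm : m + p + 5 ≤ e) :
    (X + t) ^ m * pulse e X c t ≤ Real.exp (-(X + t) ^ p) := by
  have h1 := pulse_off (e := e) hX (by linarith) h
  have hL : 3 ≤ X + t := by linarith
  refine le_trans ?_ (pw_exp hL hm)
  refine mul_le_mul_of_nonneg_left (h1.trans (Real.exp_le_exp.2 ?_)) (by positivity)
  have : 0 ≤ (X + t) ^ e := by positivity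
  nlinarith


open Set Filter Topology

lemma relax_vec {κ : Type} [Fintype κ] (z Hh Q : ℝ → κ → ℝ) (r : ℝ → ℝ) (c : κ → ℝ)
    (t0 t1 r0 ε δ : ℝ) (h0 : 0 ≤ t0)
    (hz : ∀ t, 0 ≤ t → HasDerivWithinAt z (Hh t - r t • (z t - Q t)) (Ici 0) t)
    (hr0 : 0 ≤ r0) (hr : ∀ t ∈ Icc t0 t1, r0 ≤ r t)
    (hH : ∀ t ∈ Icc t0 t1, ‖Hh t‖ ≤ δ) (hQ : ∀ t ∈ Icc t0 t1, ‖Q t - c‖ ≤ ε)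
    (t : ℝ) (ht : t ∈ Icc t0 t1) :
    ‖z t - c‖ ≤ Real.exp (-(r0 * (t - t0))) * ‖z t0 - c‖ + ε + δ * (t - t0) := by
  have hε : 0 ≤ ε := (norm_nonneg _).trans (hQ t ht)
  have hδ : 0 ≤ δ := (norm_nonneg _).trans (hH t ht)
  have htt : 0 ≤ t - t0 := by linarith [ht.1]
  refine (pi_norm_le_iff_of_nonneg (by positivity)).2 fun i => ?_
  have hd : ∀ t, 0 ≤ t → HasDerivWithinAt (fun t => z t i - c i)
      (-(r t * (z t i - c i)) + (Hh t i + r t * (Q t i - c i))) (Ici 0) t := by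
    intro t ht
    have h1 := (hasDerivWithinAt_pi.1 (hz t ht) i).sub_const (c i)
    refine h1.congr_deriv ?_
    simp only [Pi.sub_apply, Pi.smul_apply, smul_eq_mul]
    ring
  have := relax (fun t => z t i - c i) r (fun t => Hh t i + r t * (Q t i - c i)) t0 t1 r0 ε δ
    (fun s hs => ((hd s (h0.trans hs.1)).continuousWithinAt).mono
      (fun x hx => h0.trans hx.1))
    (fun s hs => (hd s (h0.trans hs.1)).mono (fun x hx => (h0.trans hs.1).trans hx)) hr0 hr hε hδ
    (fun s hs => by
      have h1 := (norm_le_pi_norm (Hh s) i).trans (hH s hs)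
      have h2 := (norm_le_pi_norm (Q s - c) i).trans (hQ s hs)
      rw [Real.norm_eq_abs] at h1 h2
      have h3 : 0 ≤ r s := hr0.trans (hr s hs)
      have h4 : |r s * (Q s i - c i)| ≤ ε * r s := by
        rw [abs_mul, abs_of_nonneg h3, mul_comm]
        exact mul_le_mul_of_nonneg_right h2 h3
      refine (abs_add_le _ _).trans ?_
      linarith) t ht
  rw [Pi.sub_apply, Real.norm_eq_abs]
  refine this.trans ?_
  have h1 := norm_le_pi_norm (z t0 - c) i
  rw [Pi.sub_apply, Real.norm_eq_abs] at h1
  have h2 := mul_le_mul_of_nonneg_left h1 (Real.exp_pos (-(r0 * (t - t0)))).le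
  linarith

noncomputable def clampV {κ : Type} (R : ℝ) (v : κ → ℝ) : κ → ℝ := fun i => max (-R) (min R (v i))

lemma clampV_norm {κ : Type} [Fintype κ] {R : ℝ} (hR : 0 ≤ R) (v : κ → ℝ) : ‖clampV R v‖ ≤ R := by
  refine (pi_norm_le_iff_of_nonneg hR).2 fun i => ?_
  rw [Real.norm_eq_abs, abs_le]
  exact ⟨le_max_left _ _, max_le (by linarith) (min_le_left _ _)⟩

lemma clampV_self {κ : Type} [Fintype κ] {R : ℝ} {v : κ → ℝ} (h : ‖v‖ ≤ R) : clampV R v = v := by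
  funext i
  have h1 := (norm_le_pi_norm v i).trans h
  rw [Real.norm_eq_abs, abs_le] at h1
  simp only [clampV]
  rw [min_eq_right h1.2, max_eq_right h1.1]

lemma clampV_lip {κ : Type} [Fintype κ] (R : ℝ) (v w : κ → ℝ) :
    ‖clampV R v - clampV R w‖ ≤ ‖v - w‖ := by
  refine (pi_norm_le_iff_of_nonneg (norm_nonneg _)).2 fun i => ?_
  have h1 := norm_le_pi_norm (v - w) i
  refine le_trans ?_ h1
  simp only [Pi.sub_apply, clampV, Real.norm_eq_abs]
  refine (abs_max_sub_max_le_max _ _ _ _).trans ?_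
  rw [sub_self, abs_zero]
  refine max_le (abs_nonneg _) ((abs_min_sub_min_le_max _ _ _ _).trans ?_)
  rw [sub_self, abs_zero]
  exact max_le (abs_nonneg _) le_rfl

lemma z_cycle {κ : Type} [Fintype κ] (F : (κ → ℝ) → κ → ℝ) (X : ℝ) (hX : 3 ≤ X)
    (e4 nZ kl nD nQ kR e3 : ℕ)
    (hl : ∀ v w, ‖F v - F w‖ ≤ (2 + ‖v‖ + ‖w‖) ^ kl * ‖v - w‖)
    (Z : ℝ → κ → ℝ) (hZ : ∀ s, 0 ≤ s → HasDerivWithinAt Z (F (Z s)) (Ici 0) s)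
    (hZb : ∀ s Λ : ℝ, 0 ≤ s → X ≤ Λ → s ≤ Λ ^ (3 * e4 + 4) → ‖Z s‖ ≤ Λ ^ nZ)
    (Q : ℝ → κ → ℝ) (hQb : ∀ t, 0 ≤ t → ‖Q t‖ ≤ (X + t) ^ nQ)
    (hQc : ∀ t, 1 / 4 ≤ t → ‖Q t - Z 0‖ ≤ Real.exp (-(X + t) ^ (nD + 1)))
    (a r : ℝ → ℝ) (ha : Continuous a) (ha0 : ∀ t, 0 ≤ t → 0 ≤ a t)
    (hab : ∀ t, 0 ≤ t → a t ≤ (X + t) ^ (e4 + 1)) (hr0 : ∀ t, 0 ≤ t → 0 ≤ r t)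
    (hkR : kR = nZ + 3 * nQ + 2) (hnD : nD = 3 * e4 + 3 + (nZ + 2) * kl + 1 + 3)
    (he3 : e3 = kR + nZ + 1 + (nD + 1) + 5)
    (hron : ∀ (j : ℕ) (t : ℝ), 3 * j + 1 / 4 ≤ t → t ≤ 3 * j + 3 / 4 → (X + t) ^ e3 / 2 ≤ r t)
    (hroff : ∀ (j : ℕ) (t : ℝ), 3 * j + 1 ≤ t → t ≤ 3 * j + 3 →
      (X + t) ^ (kR + nQ + 1) * r t ≤ Real.exp (-(X + t) ^ nD))
    (z : ℝ → κ → ℝ)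
    (haoff1 : ∀ (j : ℕ) (t : ℝ), 3 * j ≤ t → t ≤ 3 * j + 1 →
      ‖a t • F (clampV ((X + t) ^ kR) (z t))‖ ≤ 1)
    (haoff2 : ∀ (j : ℕ) (t : ℝ), 3 * j ≤ t → 1 / 4 ≤ t → t ≤ 3 * j + 1 →
      ‖a t • F (clampV ((X + t) ^ kR) (z t))‖ ≤ Real.exp (-(X + t) ^ (nD + 1)))
    (hz : ∀ t, 0 ≤ t → HasDerivWithinAt z
      (a t • F (clampV ((X + t) ^ kR) (z t)) - r t • (z t - Q t)) (Ici 0) t)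
    (j : ℕ) (hj : ‖z (3 * j)‖ ≤ (X + 3 * j) ^ nZ + 1) :
    (∀ t : ℝ, 3 * j ≤ t → t ≤ 3 * j + 3 → ‖z t‖ ≤ (X + 3 * j) ^ kR) ∧
    (∀ t : ℝ, 3 * j + 1 ≤ t → t ≤ 3 * j + 3 →
      0 ≤ (∫ s in (3 * j + 1 : ℝ)..t, a s) ∧
      ‖z t - Z (∫ s in (3 * j + 1 : ℝ)..t, a s)‖ ≤ Real.exp (-(X + 3 * j) ^ 2)) ∧
    ‖z (3 * j + 3)‖ ≤ (X + 3 * j) ^ nZ + 1 := by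
  set T : ℝ := 3 * j with hT
  have hT0 : 0 ≤ T := by positivity
  set Λ := X + T with hΛ
  have hΛ3 : 3 ≤ Λ := by linarith
  have hΛX : X ≤ Λ := by linarith
  have hexpL : ∀ (t : ℝ) (p : ℕ), T ≤ t → Real.exp (-(X + t) ^ p) ≤ Real.exp (-Λ ^ p) := by
    intro t p ht
    refine Real.exp_le_exp.2 (neg_le_neg (pow_le_pow_left₀ (by linarith) (by linarith) _))
  have hpwL : ∀ (t : ℝ) (p : ℕ), T ≤ t → Λ ^ p ≤ (X + t) ^ p := fun t p ht =>
    pow_le_pow_left₀ (by linarith) (by linarith) _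
  have hpwU : ∀ (t : ℝ) (p : ℕ), T ≤ t → t ≤ T + 3 → (X + t) ^ p ≤ Λ ^ (3 * p) :=
    fun t p h1 h2 => pw_cycle hΛ3 (by linarith) (by linarith) p
  have hkRb : Λ ^ nZ + 1 + Λ ^ (3 * nQ) + 1 ≤ Λ ^ kR := by
    have h1 := pw_mono hΛ3 (show nZ ≤ nZ + 3 * nQ by omega)
    have h2 := pw_mono hΛ3 (show 3 * nQ ≤ nZ + 3 * nQ by omega)
    have h3 := pw_nine hΛ3 (nZ + 3 * nQ)
    have h4 := pw_one hΛ3 (nZ + 3 * nQ)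
    rw [hkR]; linarith
  have hZ0 : ‖Z 0‖ ≤ Λ ^ nZ := hZb 0 Λ le_rfl hΛX (by positivity)
  -- reset third, crude bound
  have hA : ∀ t ∈ Icc T (T + 1), ‖z t‖ ≤ Λ ^ kR := by
    intro t ht
    have h1 := relax_vec z _ Q r 0 T (T + 1) 0 (Λ ^ (3 * nQ)) 1 hT0 hz le_rfl
      (fun s hs => hr0 s (hT0.trans hs.1)) (fun s hs => haoff1 j s hs.1 hs.2)
      (fun s hs => by
        rw [sub_zero]
        exact (hQb s (hT0.trans hs.1)).trans (hpwU s nQ hs.1 (by linarith [hs.2]))) t ht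
    simp only [zero_mul, neg_zero, Real.exp_zero, sub_zero, one_mul] at h1
    linarith [ht.2]
  set ε := Real.exp (-Λ ^ (nD + 1)) with hε
  have hεp : 0 < ε := Real.exp_pos _
  -- reset: contraction
  have hB : ‖z (T + 3 / 4) - Z 0‖ ≤ 3 * ε := by
    have h1 := relax_vec z _ Q r (Z 0) (T + 1 / 4) (T + 3 / 4) (Λ ^ e3 / 2) ε ε (by linarith) hz
      (by positivity)
      (fun s hs => (by linarith [hpwL s e3 (by linarith [hs.1])] : Λ ^ e3 / 2 ≤ (X + s) ^ e3 / 2).trans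
        (hron j s hs.1 hs.2))
      (fun s hs => (haoff2 j s (by linarith [hs.1]) (by linarith [hs.1]) (by linarith [hs.2])).trans
        (hexpL s _ (by linarith [hs.1])))
      (fun s hs => (hQc s (by linarith [hs.1])).trans (hexpL s _ (by linarith [hs.1])))
      (T + 3 / 4) ⟨by linarith, le_rfl⟩
    have h2 : Real.exp (-(Λ ^ e3 / 2 * (T + 3 / 4 - (T + 1 / 4)))) * ‖z (T + 1 / 4) - Z 0‖ ≤ ε := by
      have h3 : ‖z (T + 1 / 4) - Z 0‖ ≤ Λ ^ (kR + nZ + 1) := by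
        refine (norm_sub_le _ _).trans (le_trans ?_ (pw_add hΛ3 kR nZ))
        exact add_le_add (hA _ ⟨by linarith, by linarith⟩) hZ0
      have h4 := pw_exp hΛ3 (m := kR + nZ + 1) (p := nD + 1) (n := e3) (by omega)
      rw [mul_comm]
      refine le_trans (mul_le_mul h3 (Real.exp_le_exp.2 ?_) (Real.exp_pos _).le (by positivity)) h4
      have : 0 ≤ Λ ^ e3 := by positivity
      linarith
    have h5 : ε * (T + 3 / 4 - (T + 1 / 4)) ≤ ε := by nlinarith
    linarith
  have hC : ‖z (T + 1) - Z 0‖ ≤ Real.exp (-Λ ^ nD) := by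
    have h1 := relax_vec z _ Q r (Z 0) (T + 3 / 4) (T + 1) 0 ε ε (by linarith) hz
      le_rfl (fun s hs => hr0 s (by linarith [hs.1]))
      (fun s hs => (haoff2 j s (by linarith [hs.1]) (by linarith [hs.1]) (by linarith [hs.2])).trans
        (hexpL s _ (by linarith [hs.1])))
      (fun s hs => (hQc s (by linarith [hs.1])).trans (hexpL s _ (by linarith [hs.1])))
      (T + 1) ⟨by linarith, le_rfl⟩
    simp only [zero_mul, neg_zero, Real.exp_zero, one_mul] at h1
    have h5 : ε * (T + 1 - (T + 3 / 4)) ≤ ε := by nlinarith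
    have h6 := exp5 hΛ3 nD
    linarith
  -- run and copy thirds
  let s : ℝ → ℝ := fun t => ∫ τ in (T + 1 : ℝ)..t, a τ
  have hs : ∀ t, HasDerivAt s (a t) t := fun t =>
    intervalIntegral.integral_hasDerivAt_right (ha.intervalIntegrable _ _)
      (ha.stronglyMeasurableAtFilter _ _) ha.continuousAt
  have hs0 : ∀ t, T + 1 ≤ t → 0 ≤ s t := fun t ht =>
    intervalIntegral.integral_nonneg ht fun u hu => ha0 u (by linarith [hu.1])
  have haU : ∀ t, T + 1 ≤ t → t ≤ T + 3 → a t ≤ Λ ^ (3 * e4 + 3) := fun t h1 h2 =>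
    (hab t (by linarith)).trans ((hpwU t _ (by linarith) h2).trans_eq (by ring))
  have hsU : ∀ t, T + 1 ≤ t → t ≤ T + 3 → s t ≤ Λ ^ (3 * e4 + 4) := by
    intro t h1 h2
    have h3 : ‖∫ τ in (T + 1 : ℝ)..t, a τ‖ ≤ Λ ^ (3 * e4 + 3) * |t - (T + 1)| := by
      refine intervalIntegral.norm_integral_le_of_norm_le_const fun u hu => ?_
      rw [uIoc_of_le h1] at hu
      rw [Real.norm_eq_abs, abs_of_nonneg (ha0 u (by linarith [hu.1]))]
      exact haU u hu.1.le (hu.2.trans h2)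
    have h4 := (le_abs_self _).trans h3
    rw [abs_of_nonneg (by linarith : 0 ≤ t - (T + 1))] at h4
    have h5 := pw_three hΛ3 (3 * e4 + 3)
    have h6 : 0 ≤ Λ ^ (3 * e4 + 3) := by positivity
    simp only [s]
    refine h4.trans (le_trans ?_ h5)
    nlinarith
  have hZs : ∀ t, T + 1 ≤ t → t ≤ T + 3 → ‖Z (s t)‖ ≤ Λ ^ nZ := fun t h1 h2 =>
    hZb _ Λ (hs0 t h1) hΛX (hsU t h1 h2)
  set δ := Real.exp (-Λ ^ nD) with hδ
  have hδp : 0 < δ := Real.exp_pos _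
  let K := Λ ^ (3 * e4 + 3 + (nZ + 2) * kl)
  have hKp : 0 ≤ K := by positivity
  have hfin : (δ + 2 * δ * (T + 3 - (T + 1))) * Real.exp (K * (T + 3 - (T + 1)))
      ≤ Real.exp (-Λ ^ 2) := by
    have h1 : (δ + 2 * δ * (T + 3 - (T + 1))) = 5 * δ := by ring
    rw [h1]
    have h2 : K * (T + 3 - (T + 1)) ≤ Λ ^ (3 * e4 + 3 + (nZ + 2) * kl + 1) := by
      have := pw_three hΛ3 (3 * e4 + 3 + (nZ + 2) * kl)
      simp only [K] at hKp ⊢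
      nlinarith
    set nK := 3 * e4 + 3 + (nZ + 2) * kl + 1 with hnK
    have h3 : 2 + Λ ^ nK + Λ ^ 2 ≤ Λ ^ nD := by
      have h4 := pw_mono hΛ3 (show nK ≤ nK + 2 by omega)
      have h5 := pw_mono hΛ3 (show 2 ≤ nK + 2 by omega)
      have h6 := pw_mono hΛ3 (show 1 ≤ nK + 2 by omega)
      have h7 := pw_three hΛ3 (nK + 2)
      have h8 : nD = nK + 2 + 1 := by omega
      rw [h8]
      rw [pow_one] at h6
      linarith
    calc 5 * δ * Real.exp (K * (T + 3 - (T + 1)))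
        ≤ Real.exp 2 * Real.exp (-Λ ^ nD) * Real.exp (Λ ^ nK) := by
          refine mul_le_mul (mul_le_mul_of_nonneg_right exp_two_ge hδp.le)
            (Real.exp_le_exp.2 h2) (Real.exp_pos _).le (by positivity)
      _ = Real.exp (2 + -Λ ^ nD + Λ ^ nK) := by rw [Real.exp_add, Real.exp_add]
      _ ≤ Real.exp (-Λ ^ 2) := Real.exp_le_exp.2 (by linarith)
  have hfin1 : Real.exp (-Λ ^ 2) ≤ 1 := by
    rw [Real.exp_le_one_iff]; linarith [pw_one hΛ3 2]
  have hD : ∀ t ∈ Icc (T + 1) (T + 3), ‖z t - Z (s t)‖ ≤ Real.exp (-Λ ^ 2) := by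
    intro t ht
    have hder : ∀ t, T + 1 ≤ t → HasDerivWithinAt (fun t => z t - Z (s t))
        ((a t • F (clampV ((X + t) ^ kR) (z t)) - r t • (z t - Q t)) - a t • F (Z (s t)))
        (Ici (T + 1)) t := by
      intro t ht
      have h1 := (hz t (by linarith)).mono (show Ici (T + 1) ⊆ Ici 0 from
        fun x hx => by have := mem_Ici.1 hx; exact mem_Ici.2 (by linarith))
      have h2 : HasDerivWithinAt (fun t => Z (s t)) (a t • F (Z (s t))) (Ici (T + 1)) t :=
        (hZ (s t) (hs0 t ht)).scomp t (hs t).hasDerivWithinAt (fun u hu => hs0 u hu)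
      exact h1.fun_sub h2
    refine (gron (fun t => z t - Z (s t)) _ (T + 1) (T + 3) δ (2 * δ) K δ
      (fun u hu => (hder u hu.1).continuousWithinAt.mono Icc_subset_Ici_self)
      (fun u hu => (hder u hu.1).mono (Ici_subset_Ici.2 hu.1)) ?_ hδp.le (by linarith) hKp
      (by linarith) ?_ (hfin.trans hfin1) t ht).trans hfin
    · simpa [s] using hC
    · intro t ht he
      have h3 := hZs t ht.1 ht.2.le
      have h4 : ‖z t‖ ≤ Λ ^ nZ + 1 := by
        have := norm_le_norm_add_norm_sub' (z t) (Z (s t))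
        linarith
      have h5 : ‖z t‖ ≤ Λ ^ kR := by
        have : 0 ≤ Λ ^ (3 * nQ) := by positivity
        linarith
      have hTt : T ≤ t := by linarith [ht.1]
      rw [clampV_self (h5.trans (hpwL t kR hTt))]
      have h6 : a t • F (z t) - r t • (z t - Q t) - a t • F (Z (s t))
          = a t • (F (z t) - F (Z (s t))) - r t • (z t - Q t) := by
        rw [smul_sub (a t)]; abel
      rw [h6]
      refine (norm_sub_le _ _).trans (add_le_add ?_ ?_)
      · rw [norm_smul, Real.norm_eq_abs, abs_of_nonneg (ha0 t (by linarith))]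
        have h7 : (2 + ‖z t‖ + ‖Z (s t)‖) ^ kl ≤ Λ ^ ((nZ + 2) * kl) := by
          rw [pow_mul]
          refine pow_le_pow_left₀ (by positivity) ?_ _
          have h8 := pw_nine hΛ3 nZ
          have h9 := pw_one hΛ3 nZ
          linarith
        calc a t * ‖F (z t) - F (Z (s t))‖
            ≤ Λ ^ (3 * e4 + 3) * (Λ ^ ((nZ + 2) * kl) * ‖z t - Z (s t)‖) := by
              refine mul_le_mul (haU t ht.1 ht.2.le) ((hl _ _).trans ?_) (norm_nonneg _)
                (by positivity)
              exact mul_le_mul_of_nonneg_right h7 (norm_nonneg _)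
          _ = K * ‖z t - Z (s t)‖ := by simp only [K]; rw [pow_add]; ring
      · rw [norm_smul, Real.norm_eq_abs, abs_of_nonneg (hr0 t (by linarith))]
        have h7 : ‖z t - Q t‖ ≤ (X + t) ^ (kR + nQ + 1) := by
          refine (norm_sub_le _ _).trans (le_trans ?_ (pw_add (by linarith) kR nQ))
          exact add_le_add (h5.trans (hpwL t kR hTt)) (hQb t (by linarith))
        rw [mul_comm]
        refine (mul_le_mul_of_nonneg_right h7 (hr0 t (by linarith))).trans ?_
        exact (hroff j t ht.1 ht.2.le).trans (hexpL t nD hTt)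
  have hEz : ∀ t ∈ Icc (T + 1) (T + 3), ‖z t‖ ≤ Λ ^ nZ + 1 := by
    intro t ht
    have h1 := hD t ht
    have h3 := hZs t ht.1 ht.2
    have := norm_le_norm_add_norm_sub' (z t) (Z (s t))
    linarith
  refine ⟨?_, ?_, hEz _ ⟨by linarith, le_rfl⟩⟩
  · intro t h1 h2
    rcases le_total t (T + 1) with h | h
    · exact hA t ⟨h1, h⟩
    · have := hEz t ⟨h, h2⟩
      have : 0 ≤ Λ ^ (3 * nQ) := by positivity
      linarith
  · intro t h1 h2
    exact ⟨hs0 t h1, hD t ⟨h1, h2⟩⟩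


open Set Filter Topology

lemma o_cycle {κ : Type} [Fintype κ] (X : ℝ) (hX : 3 ≤ X) (nG e5 : ℕ) (he5 : nG + 9 ≤ e5)
    (G : κ → ℝ) (zo o : ℝ → κ → ℝ) (c : ℝ → ℝ) (hc0 : ∀ t, 0 ≤ t → 0 ≤ c t)
    (ho : ∀ t, 0 ≤ t → HasDerivWithinAt o (c t • (zo t - o t)) (Ici 0) t)
    (hcoff1 : ∀ (j : ℕ) (t : ℝ), 3 * j ≤ t → t ≤ 3 * j + 2 → ‖c t • (zo t - G)‖ ≤ 1)
    (hcoff2 : ∀ (j : ℕ) (t : ℝ), 3 * j ≤ t → 1 / 4 ≤ t → t ≤ 3 * j + 2 →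
      ‖c t • (zo t - G)‖ ≤ Real.exp (-(X + t) ^ 2))
    (hzo : ∀ (j : ℕ) (t : ℝ), 3 * j + 2 ≤ t → t ≤ 3 * j + 3 →
      ‖zo t - G‖ ≤ Real.exp (-(2 * (X + 3 * j))) + Real.exp (-(X + 3 * j) ^ 2))
    (hcon : ∀ (j : ℕ) (t : ℝ), 3 * j + 9 / 4 ≤ t → t ≤ 3 * j + 11 / 4 → (X + t) ^ e5 ≤ c t)
    (j : ℕ) (hj : ‖o (3 * j) - G‖ ≤ X ^ nG) :
    (∀ t : ℝ, 3 * j ≤ t → t ≤ 3 * j + 3 → ‖o t - G‖ ≤ X ^ nG + 4) ∧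
    (1 ≤ j → ∀ t : ℝ, 3 * j ≤ t → t ≤ 3 * j + 3 →
      ‖o t - G‖ ≤ ‖o (3 * j) - G‖ + 4 * Real.exp (-(X + 3 * j))) ∧
    ‖o (3 * j + 3) - G‖ ≤ Real.exp (-(X + 3 * j)) := by
  set T : ℝ := 3 * j with hT
  have hT0 : 0 ≤ T := by positivity
  set Λ := X + T with hΛ
  have hΛ3 : 3 ≤ Λ := by linarith
  have h1 : ∀ t, 0 ≤ t → HasDerivWithinAt o (c t • (zo t - G) - c t • (o t - G)) (Ici 0) t := by
    intro t ht
    refine (ho t ht).congr_deriv ?_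
    rw [← smul_sub]; congr 1; abel
  have h2 : ∀ t, 0 ≤ t → HasDerivWithinAt o (0 - c t • (o t - zo t)) (Ici 0) t := by
    intro t ht
    refine (ho t ht).congr_deriv ?_
    rw [zero_sub, ← smul_neg, neg_sub]
  set A := Real.exp (-(2 * Λ)) with hA
  set B := Real.exp (-Λ ^ 2) with hB
  have hBp : 0 < B := Real.exp_pos _
  have hAp : 0 < A := Real.exp_pos _
  have hBA : B ≤ A := Real.exp_le_exp.2 (by nlinarith)
  have hA5 : 5 * A ≤ Real.exp (-Λ) := by
    have h3 : Real.exp (-Λ) = Real.exp Λ * A := by rw [hA, ← Real.exp_add]; ring_nf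
    rw [h3]
    refine mul_le_mul_of_nonneg_right ?_ hAp.le
    exact exp_two_ge.trans (Real.exp_le_exp.2 (by linarith))
  have hE1 : Real.exp (-Λ) ≤ 1 := by rw [Real.exp_le_one_iff]; linarith
  have gen : ∀ D : ℝ, (∀ t ∈ Icc T (T + 2), ‖c t • (zo t - G)‖ ≤ D) →
      ∀ t ∈ Icc T (T + 2), ‖o t - G‖ ≤ ‖o T - G‖ + D * 2 := by
    intro D hD t ht
    have h3 := relax_vec o _ (fun _ => G) c G T (T + 2) 0 0 D hT0 h1 le_rfl
      (fun s hs => hc0 s (hT0.trans hs.1)) hD (fun s hs => by simp) t ht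
    simp only [zero_mul, neg_zero, Real.exp_zero, one_mul, add_zero] at h3
    have hD0 := (norm_nonneg _).trans (hD t ht)
    have : D * (t - T) ≤ D * 2 := mul_le_mul_of_nonneg_left (by linarith [ht.2]) hD0
    linarith
  have gen2 : ∀ t0 t1, T + 2 ≤ t0 → t1 ≤ T + 3 → t0 ≤ t1 → ∀ t ∈ Icc t0 t1,
      ‖o t - G‖ ≤ ‖o t0 - G‖ + (A + B) := by
    intro t0 t1 ht0 ht1 _ t ht
    have h3 := relax_vec o _ zo c G t0 t1 0 (A + B) 0 (by linarith) h2 le_rfl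
      (fun s hs => hc0 s (by linarith [hs.1])) (fun s hs => by simp)
      (fun s hs => hzo j s (by linarith [hs.1]) (by linarith [hs.2])) t ht
    simpa only [zero_mul, neg_zero, Real.exp_zero, one_mul, add_zero] using h3
  have full : ∀ D : ℝ, 0 ≤ D → (∀ t ∈ Icc T (T + 2), ‖c t • (zo t - G)‖ ≤ D) →
      ∀ t ∈ Icc T (T + 3), ‖o t - G‖ ≤ ‖o T - G‖ + D * 2 + (A + B) := by
    intro D hD0 hD t ht
    rcases le_total t (T + 2) with h | h
    · linarith [gen D hD t ⟨ht.1, h⟩]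
    · have h4 := gen D hD (T + 2) ⟨by linarith, le_rfl⟩
      have h5 := gen2 (T + 2) (T + 3) le_rfl le_rfl (by linarith) t ⟨h, ht.2⟩
      linarith
  have crude := full 1 zero_le_one (fun t ht => hcoff1 j t ht.1 ht.2)
  refine ⟨?_, ?_, ?_⟩
  · intro t ha hb
    have := crude t ⟨ha, hb⟩
    linarith
  · intro hj1 t ha hb
    have hT3 : 3 ≤ T := by
      have : (1:ℝ) ≤ j := by exact_mod_cast hj1
      rw [hT]; linarith
    have h3 := full B hBp.le (fun s hs => (hcoff2 j s hs.1 (by linarith [hs.1]) hs.2).trans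
      (Real.exp_le_exp.2 (neg_le_neg (pow_le_pow_left₀ (by linarith) (by linarith [hs.1]) 2))))
      t ⟨ha, hb⟩
    linarith
  · have h3 := crude (T + 9 / 4) ⟨by linarith, by linarith⟩
    have h4 := relax_vec o _ zo c G (T + 9 / 4) (T + 11 / 4) (Λ ^ e5) (A + B) 0 (by linarith) h2
      (by positivity)
      (fun s hs => (pow_le_pow_left₀ (by linarith) (by linarith [hs.1]) _).trans
        (hcon j s hs.1 hs.2)) (fun s hs => by simp)
      (fun s hs => hzo j s (by linarith [hs.1]) (by linarith [hs.2])) (T + 11 / 4)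
      ⟨by linarith, le_rfl⟩
    have h5 := gen2 (T + 11 / 4) (T + 3) (by linarith) le_rfl (by linarith) (T + 3)
      ⟨by linarith, le_rfl⟩
    have h6 : Real.exp (-(Λ ^ e5 * (T + 11 / 4 - (T + 9 / 4)))) * ‖o (T + 9 / 4) - G‖ ≤ B := by
      have h7 : ‖o (T + 9 / 4) - G‖ ≤ Λ ^ (nG + 2) := by
        have h8 : X ^ nG ≤ Λ ^ nG := pow_le_pow_left₀ (by linarith) (by linarith) _
        have h9 := pw_nine hΛ3 nG
        have h10 := pw_one hΛ3 nG
        linarith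
      have h8 := pw_exp hΛ3 (m := nG + 2) (p := 2) (n := e5) (by omega)
      rw [mul_comm]
      refine le_trans (mul_le_mul h7 (Real.exp_le_exp.2 ?_) (Real.exp_pos _).le (by positivity)) h8
      have : 0 ≤ Λ ^ e5 := by positivity
      linarith
    linarith

lemma o_total {κ : Type} [Fintype κ] (X : ℝ) (hX : 3 ≤ X) (nG e5 : ℕ) (he5 : nG + 9 ≤ e5)
    (G : κ → ℝ) (zo o : ℝ → κ → ℝ) (c : ℝ → ℝ) (hc0 : ∀ t, 0 ≤ t → 0 ≤ c t)
    (ho : ∀ t, 0 ≤ t → HasDerivWithinAt o (c t • (zo t - o t)) (Ici 0) t)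
    (hcoff1 : ∀ (j : ℕ) (t : ℝ), 3 * j ≤ t → t ≤ 3 * j + 2 → ‖c t • (zo t - G)‖ ≤ 1)
    (hcoff2 : ∀ (j : ℕ) (t : ℝ), 3 * j ≤ t → 1 / 4 ≤ t → t ≤ 3 * j + 2 →
      ‖c t • (zo t - G)‖ ≤ Real.exp (-(X + t) ^ 2))
    (hzo : ∀ (j : ℕ) (t : ℝ), 3 * j + 2 ≤ t → t ≤ 3 * j + 3 →
      ‖zo t - G‖ ≤ Real.exp (-(2 * (X + 3 * j))) + Real.exp (-(X + 3 * j) ^ 2))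
    (hcon : ∀ (j : ℕ) (t : ℝ), 3 * j + 9 / 4 ≤ t → t ≤ 3 * j + 11 / 4 → (X + t) ^ e5 ≤ c t)
    (ho0 : o 0 = 0) (hG : ‖G‖ ≤ X ^ nG) :
    (∀ t : ℝ, 0 ≤ t → ‖o t - G‖ ≤ X ^ nG + 4) ∧
    (∀ t : ℝ, 3 ≤ t → ‖o t - G‖ ≤ Real.exp (6 - t)) := by
  have cyc := o_cycle X hX nG e5 he5 G zo o c hc0 ho hcoff1 hcoff2 hzo hcon
  have key : ∀ j : ℕ, ‖o (3 * j) - G‖ ≤ X ^ nG := by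
    intro j
    induction j with
    | zero => simpa [ho0] using hG
    | succ j ih =>
      have h1 := (cyc j ih).2.2
      have h2 : (3 * ((j + 1 : ℕ) : ℝ)) = 3 * j + 3 := by push_cast; ring
      rw [h2]
      refine h1.trans (le_trans ?_ (pw_one hX nG))
      rw [Real.exp_le_one_iff]
      have : (0:ℝ) ≤ j := by positivity
      linarith
  have fl : ∀ t : ℝ, 0 ≤ t → (3 * (⌊t / 3⌋₊ : ℝ) ≤ t ∧ t ≤ 3 * (⌊t / 3⌋₊ : ℝ) + 3) := by
    intro t ht
    have h1 := Nat.floor_le (show 0 ≤ t / 3 by positivity)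
    have h2 := (Nat.lt_floor_add_one (t / 3)).le
    constructor <;> linarith
  constructor
  · intro t ht
    exact (cyc ⌊t / 3⌋₊ (key _)).1 t (fl t ht).1 (fl t ht).2
  · intro t ht
    have ht0 : 0 ≤ t := by linarith
    obtain ⟨h1, h2⟩ := fl t ht0
    have hj : 1 ≤ ⌊t / 3⌋₊ := by
      rw [Nat.one_le_floor_iff]; linarith
    obtain ⟨i, hi⟩ : ∃ i, ⌊t / 3⌋₊ = i + 1 := ⟨⌊t / 3⌋₊ - 1, by omega⟩
    rw [hi] at h1 h2
    have h3 := (cyc (i + 1) (key _)).2.1 (by omega) t h1 h2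
    have h4 := (cyc i (key i)).2.2
    have h5 : (3 * ((i + 1 : ℕ) : ℝ)) = 3 * i + 3 := by push_cast; ring
    rw [h5] at h3 h2
    have h6 : Real.exp (-(X + (3 * i + 3))) ≤ Real.exp (-(X + 3 * i)) :=
      Real.exp_le_exp.2 (by linarith)
    have h7 : ‖o t - G‖ ≤ 5 * Real.exp (-(X + 3 * i)) := by linarith
    refine h7.trans ?_
    have h8 : Real.exp (6 - t) = Real.exp (6 - t + (X + 3 * i)) * Real.exp (-(X + 3 * i)) := by
      rw [← Real.exp_add]; ring_nf
    rw [h8]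
    refine mul_le_mul_of_nonneg_right ?_ (Real.exp_pos _).le
    exact exp_two_ge.trans (Real.exp_le_exp.2 (by linarith))


open Set Filter Topology

lemma z_exists {κ : Type} [Fintype κ] (F : (κ → ℝ) → κ → ℝ) (hFc : Continuous F) (kF kl : ℕ)
    (hg : ∀ v, ‖F v‖ ≤ (2 + ‖v‖) ^ kF)
    (hl : ∀ v w, ‖F v - F w‖ ≤ (2 + ‖v‖ + ‖w‖) ^ kl * ‖v - w‖)
    (a r R : ℝ → ℝ) (ha : Continuous a) (hr : Continuous r) (hR : Continuous R)
    (hR0 : ∀ t, 0 ≤ t → 0 ≤ R t) (Q : ℝ → κ → ℝ) (hQ : ContinuousOn Q (Ici 0)) :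
    ∃ z : ℝ → κ → ℝ, z 0 = 0 ∧ ∀ t, 0 ≤ t → HasDerivWithinAt z
      (a t • F (clampV (R t) (z t)) - r t • (z t - Q t)) (Ici 0) t := by
  have key : ∃ z : ℝ → κ → ℝ, z 0 = 0 ∧ ∀ t, 0 ≤ t → HasDerivWithinAt z
      ((a t • F (clampV (R t) (z t)) + r t • Q t) - r t • z t) (Ici 0) t := by
    refine exist_lin (fun t v => a t • F (clampV (R t) v) + r t • Q t) 0 r hr ?_ ?_ ?_
    · have hcl : Continuous fun p : ℝ × (κ → ℝ) => clampV (R p.1) p.2 := by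
        unfold clampV
        fun_prop
      have h1 : Continuous fun p : ℝ × (κ → ℝ) => a p.1 • F (clampV (R p.1) p.2) :=
        (ha.comp continuous_fst).smul (hFc.comp hcl)
      have h2 : ContinuousOn (fun p : ℝ × (κ → ℝ) => r p.1 • Q p.1) (Ici 0 ×ˢ univ) :=
        ((hr.comp continuous_fst).continuousOn).smul
          (hQ.comp continuous_fst.continuousOn (fun p hp => hp.1))
      exact h1.continuousOn.add h2
    · intro T hT
      obtain ⟨A, hA⟩ := (isCompact_Icc (a := (0:ℝ)) (b := T)).exists_bound_of_continuousOn
        ha.continuousOn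
      obtain ⟨B, hB⟩ := (isCompact_Icc (a := (0:ℝ)) (b := T)).exists_bound_of_continuousOn
        hR.continuousOn
      obtain ⟨C, hC⟩ := (isCompact_Icc (a := (0:ℝ)) (b := T)).exists_bound_of_continuousOn
        (f := fun t => r t • Q t) (hr.continuousOn.smul (hQ.mono Icc_subset_Ici_self))
      refine ⟨A * (2 + B) ^ kF + C, fun t ht v => ?_⟩
      refine (norm_add_le _ _).trans (add_le_add ?_ (hC t ht))
      rw [norm_smul]
      refine mul_le_mul (hA t ht) ((hg _).trans (pow_le_pow_left₀ (by positivity) ?_ _))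
        (norm_nonneg _) ((norm_nonneg _).trans (hA t ht))
      have h1 := clampV_norm (hR0 t ht.1) v
      have h2 := hB t ht
      rw [Real.norm_eq_abs] at h2
      linarith [le_abs_self (R t)]
    · intro T hT
      obtain ⟨A, hA⟩ := (isCompact_Icc (a := (0:ℝ)) (b := T)).exists_bound_of_continuousOn
        ha.continuousOn
      obtain ⟨B, hB⟩ := (isCompact_Icc (a := (0:ℝ)) (b := T)).exists_bound_of_continuousOn
        hR.continuousOn
      refine ⟨A * (2 + B + B) ^ kl, fun t ht v w => ?_⟩
      have h0 : ∀ u, ‖clampV (R t) u‖ ≤ B := fun u => by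
        have h1 := clampV_norm (κ := κ) (hR0 t ht.1) u
        have h2 := hB t ht
        rw [Real.norm_eq_abs] at h2
        linarith [le_abs_self (R t)]
      have hB0 : 0 ≤ B := (norm_nonneg _).trans (h0 v)
      rw [add_sub_add_right_eq_sub, ← smul_sub, norm_smul, mul_assoc]
      refine mul_le_mul (hA t ht) ((hl _ _).trans ?_)
        (norm_nonneg _) ((norm_nonneg _).trans (hA t ht))
      refine mul_le_mul (pow_le_pow_left₀ (by positivity) ?_ _) (clampV_lip _ _ _)
        (norm_nonneg _) (by positivity)
      linarith [h0 v, h0 w]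
  obtain ⟨z, hz0, hz⟩ := key
  refine ⟨z, hz0, fun t ht => (hz t ht).congr_deriv ?_⟩
  rw [smul_sub]; abel

lemma o_exists {κ : Type} [Fintype κ] (c : ℝ → ℝ) (hc : Continuous c) (zo : ℝ → κ → ℝ)
    (hzo : ContinuousOn zo (Ici 0)) :
    ∃ o : ℝ → κ → ℝ, o 0 = 0 ∧ ∀ t, 0 ≤ t → HasDerivWithinAt o (c t • (zo t - o t)) (Ici 0) t := by
  have key : ∃ z : ℝ → κ → ℝ, z 0 = 0 ∧ ∀ t, 0 ≤ t → HasDerivWithinAt z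
      (c t • zo t - c t • z t) (Ici 0) t := by
    refine exist_lin (fun t _ => c t • zo t) 0 c hc ?_ ?_ ?_
    · exact ((hc.comp continuous_fst).continuousOn).smul
          (hzo.comp continuous_fst.continuousOn (fun p hp => hp.1))
    · intro T hT
      obtain ⟨C, hC⟩ := (isCompact_Icc (a := (0:ℝ)) (b := T)).exists_bound_of_continuousOn
        (f := fun t => c t • zo t) (hc.continuousOn.smul (hzo.mono Icc_subset_Ici_self))
      exact ⟨C, fun t ht v => hC t ht⟩
    · intro T hT
      exact ⟨0, fun t ht v w => by simp⟩
  obtain ⟨z, hz0, hz⟩ := key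
  refine ⟨z, hz0, fun t ht => (hz t ht).congr_deriv ?_⟩
  rw [smul_sub]


open Set Filter Topology

lemma floor3 (t : ℝ) (ht : 0 ≤ t) :
    3 * (⌊t / 3⌋₊ : ℝ) ≤ t ∧ t ≤ 3 * (⌊t / 3⌋₊ : ℝ) + 3 := by
  have h1 := Nat.floor_le (show 0 ≤ t / 3 by positivity)
  have h2 := (Nat.lt_floor_add_one (t / 3)).le
  constructor <;> linarith

set_option maxHeartbeats 1000000 in
lemma dyn {κ : Type} [Fintype κ] {m l : ℕ} (F : (κ → ℝ) → κ → ℝ) (hFc : Continuous F)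
    (q : (Fin m → ℝ) → κ → ℝ) (hqc : Continuous q) (og : Fin l → κ) (kF kl kQ kq : ℕ)
    (hFg : ∀ v, ‖F v‖ ≤ (2 + ‖v‖) ^ kF)
    (hFl : ∀ v w, ‖F v - F w‖ ≤ (2 + ‖v‖ + ‖w‖) ^ kl * ‖v - w‖)
    (hqg : ∀ v, ‖q v‖ ≤ (2 + ‖v‖) ^ kQ)
    (hql : ∀ v w, ‖q v - q w‖ ≤ (2 + ‖v‖ + ‖w‖) ^ kq * ‖v - w‖)
    (kf kg n1 nG : ℕ) :
    ∃ e1 e2 e3 e4 e5 K : ℕ, ∀ (X : ℝ) (yo : ℝ → Fin m → ℝ) (w : Fin m → ℝ) (G : Fin l → ℝ)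
      (Z : ℝ → κ → ℝ), 3 ≤ X → ContinuousOn yo (Ici 0) →
      (∀ t, 0 ≤ t → ‖yo t‖ ≤ (X + t) ^ kf) →
      (∀ t μ, 0 ≤ μ → (X + μ) ^ kf ≤ t → ‖yo t - w‖ ≤ Real.exp (-μ)) →
      ‖w‖ ≤ X ^ n1 → ‖G‖ ≤ X ^ nG → Z 0 = q w →
      (∀ s, 0 ≤ s → HasDerivWithinAt Z (F (Z s)) (Ici 0) s) →
      (∀ s, 0 ≤ s → ‖Z s‖ ≤ (2 + ‖w‖ + s) ^ kg) →
      (∀ s μ, 0 ≤ μ → (2 + ‖w‖ + μ) ^ kg ≤ s →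
        ‖(fun i => Z s (og i)) - G‖ ≤ Real.exp (-μ)) →
      ∃ (z : ℝ → κ → ℝ) (o : ℝ → Fin l → ℝ), z 0 = 0 ∧ o 0 = 0 ∧
        (∀ t, 0 ≤ t → HasDerivWithinAt z ((t * (X + t) ^ e4 * pulse e2 X (3 / 2) t) • F (z t) -
          ((X + t) ^ e3 * pulse e2 X (1 / 2) t) • (z t - q (yo (t * (X + t) ^ e1)))) (Ici 0) t) ∧
        (∀ t, 0 ≤ t → HasDerivWithinAt o ((t * (X + t) ^ e5 * pulse e2 X (5 / 2) t) •
          ((fun i => z t (og i)) - o t)) (Ici 0) t) ∧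
        (∀ t, 0 ≤ t → ‖z t‖ ≤ (X + t) ^ K) ∧ (∀ t, 0 ≤ t → ‖o t‖ ≤ (X + t) ^ K) ∧
        (∀ t, 3 ≤ t → ‖o t - G‖ ≤ Real.exp (6 - t)) := by
  obtain ⟨e4, he4⟩ : ∃ e, e = (n1 + 3) * kg + 2 := ⟨_, rfl⟩
  obtain ⟨nZ, hnZ⟩ : ∃ e, e = (n1 + 3 * e4 + 6) * kg := ⟨_, rfl⟩
  obtain ⟨nD, hnD⟩ : ∃ e, e = 3 * e4 + 3 + (nZ + 2) * kl + 1 + 3 := ⟨_, rfl⟩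
  obtain ⟨nM, hnM⟩ : ∃ e, e = (n1 + 2) * kq + (nD + 1) + 5 := ⟨_, rfl⟩
  obtain ⟨e1, he1⟩ : ∃ e, e = (nM + 2) * kf + 2 := ⟨_, rfl⟩
  obtain ⟨nQ, hnQ⟩ : ∃ e, e = ((e1 + 3) * kf + 2) * kQ := ⟨_, rfl⟩
  obtain ⟨kR, hkR⟩ : ∃ e, e = nZ + 3 * nQ + 2 := ⟨_, rfl⟩
  obtain ⟨nF, hnF⟩ : ∃ e, e = (kR + 1) * kF := ⟨_, rfl⟩
  obtain ⟨e3, he3⟩ : ∃ e, e = kR + nZ + 1 + (nD + 1) + 5 := ⟨_, rfl⟩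
  obtain ⟨e5, he5⟩ : ∃ e, e = nG + 9 := ⟨_, rfl⟩
  obtain ⟨e2, he2⟩ : ∃ e, e = kR + nQ + e3 + nD + e4 + nF + e5 + nG + 20 := ⟨_, rfl⟩
  refine ⟨e1, e2, e3, e4, e5, kR + nG + 3, ?_⟩
  intro X yo w G Z hX hyoc hyob hyop hw hG hZ0 hZ hZb hZp
  have hL3 : ∀ t, 0 ≤ t → 3 ≤ X + t := fun t ht => by linarith
  let a : ℝ → ℝ := fun t => t * (X + t) ^ e4 * pulse e2 X (3 / 2) t
  let r : ℝ → ℝ := fun t => (X + t) ^ e3 * pulse e2 X (1 / 2) t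
  let c : ℝ → ℝ := fun t => t * (X + t) ^ e5 * pulse e2 X (5 / 2) t
  let Q : ℝ → κ → ℝ := fun t => q (yo (t * (X + t) ^ e1))
  have hac : Continuous a := by
    have := pulse_continuous e2 X (3 / 2)
    simp only [a]; fun_prop
  have hrc : Continuous r := by
    have := pulse_continuous e2 X (1 / 2)
    simp only [r]; fun_prop
  have hcc : Continuous c := by
    have := pulse_continuous e2 X (5 / 2)
    simp only [c]; fun_prop
  have hφ0 : ∀ t, 0 ≤ t → 0 ≤ t * (X + t) ^ e1 := fun t ht => by
    have := hL3 t ht; positivity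
  have hQc : ContinuousOn Q (Ici 0) := by
    refine hqc.comp_continuousOn (hyoc.comp (f := fun t => t * (X + t) ^ e1) ?_ ?_)
    · exact Continuous.continuousOn (by fun_prop)
    · exact fun t ht => hφ0 t ht
  have ha0 : ∀ t, 0 ≤ t → 0 ≤ a t := fun t ht => by
    have := hL3 t ht
    have := pulse_nonneg e2 X (3 / 2) t
    simp only [a]; positivity
  have hr0 : ∀ t, 0 ≤ t → 0 ≤ r t := fun t ht => by
    have := hL3 t ht
    have := pulse_nonneg e2 X (1 / 2) t
    simp only [r]; positivity
  have hc0 : ∀ t, 0 ≤ t → 0 ≤ c t := fun t ht => by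
    have := hL3 t ht
    have := pulse_nonneg e2 X (5 / 2) t
    simp only [c]; positivity
  obtain ⟨z, hz0, hz⟩ := z_exists F hFc kF kl hFg hFl a r (fun t => (X + t) ^ kR) hac hrc
    (by fun_prop) (fun t ht => by have := hL3 t ht; positivity) Q hQc
  -- bounds on Z
  have hZb' : ∀ s Λ : ℝ, 0 ≤ s → X ≤ Λ → s ≤ Λ ^ (3 * e4 + 4) → ‖Z s‖ ≤ Λ ^ nZ := by
    intro s Λ hs hΛ hsΛ
    have hΛ3 : 3 ≤ Λ := hX.trans hΛ
    refine (hZb s hs).trans ?_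
    rw [hnZ, pow_mul]
    refine pow_le_pow_left₀ (by positivity) ?_ _
    have h1 : ‖w‖ ≤ Λ ^ (n1 + 3 * e4 + 4) :=
      hw.trans ((pow_le_pow_left₀ (by linarith) hΛ _).trans (pw_mono hΛ3 (by omega)))
    have h2 : s ≤ Λ ^ (n1 + 3 * e4 + 4) := hsΛ.trans (pw_mono hΛ3 (by omega))
    have h3 := pw_nine hΛ3 (n1 + 3 * e4 + 4)
    have h4 := pw_one hΛ3 (n1 + 3 * e4 + 4)
    have h5 : n1 + 3 * e4 + 4 + 2 = n1 + 3 * e4 + 6 := by ring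
    rw [h5] at h3
    linarith
  -- bounds on Q
  have hQb : ∀ t, 0 ≤ t → ‖Q t‖ ≤ (X + t) ^ nQ := by
    intro t ht
    have hL := hL3 t ht
    refine (hqg _).trans ?_
    rw [hnQ, pow_mul]
    refine pow_le_pow_left₀ (by positivity) ?_ _
    have h1 : ‖yo (t * (X + t) ^ e1)‖ ≤ (X + t) ^ ((e1 + 3) * kf) := by
      refine (hyob _ (hφ0 t ht)).trans ?_
      rw [pow_mul]
      refine pow_le_pow_left₀ (by have := hφ0 t ht; linarith) ?_ _
      have h2 : t * (X + t) ^ e1 ≤ (X + t) ^ (e1 + 1) := by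
        rw [pow_succ, mul_comm]
        exact mul_le_mul_of_nonneg_left (by linarith) (by positivity)
      have h3 := pw_add hL 1 (e1 + 1)
      rw [pow_one] at h3
      have h4 : 1 + (e1 + 1) + 1 = e1 + 3 := by ring
      rw [h4] at h3
      linarith
    have h2 := pw_nine hL ((e1 + 3) * kf)
    have h3 := pw_one hL ((e1 + 3) * kf)
    linarith
  have hQp : ∀ t, 1 / 4 ≤ t → ‖Q t - Z 0‖ ≤ Real.exp (-(X + t) ^ (nD + 1)) := by
    intro t ht
    have ht0 : 0 ≤ t := by linarith
    have hL := hL3 t ht0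
    set L := X + t with hLdef
    have h1 : ‖yo (t * L ^ e1) - w‖ ≤ Real.exp (-L ^ nM) := by
      refine hyop _ _ (by positivity) ?_
      have h2 : (X + L ^ nM) ^ kf ≤ L ^ ((nM + 2) * kf) := by
        rw [pow_mul]
        refine pow_le_pow_left₀ (by positivity) ?_ _
        have h3 := pw_add hL 1 nM
        rw [pow_one] at h3
        have h4 : 1 + nM + 1 = nM + 2 := by ring
        rw [h4] at h3
        linarith
      have h5 := pw_nine hL ((nM + 2) * kf)
      rw [← he1] at h5
      have h6 : 0 ≤ L ^ e1 := by positivity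
      nlinarith
    have h7 : ‖yo (t * L ^ e1)‖ ≤ ‖w‖ + 1 := by
      have h8 := norm_le_norm_add_norm_sub' (yo (t * L ^ e1)) w
      have h9 : Real.exp (-L ^ nM) ≤ 1 := by
        rw [Real.exp_le_one_iff]; linarith [pw_one hL nM]
      linarith
    have h10 : (2 + ‖yo (t * L ^ e1)‖ + ‖w‖) ^ kq ≤ L ^ ((n1 + 2) * kq) := by
      rw [pow_mul]
      refine pow_le_pow_left₀ (by positivity) ?_ _
      have h11 : ‖w‖ ≤ L ^ n1 := hw.trans (pow_le_pow_left₀ (by linarith) (by linarith) _)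
      have h12 := pw_nine hL n1
      have h13 := pw_one hL n1
      linarith
    have h14 := pw_exp hL (m := (n1 + 2) * kq) (p := nD + 1) (n := nM) (by omega)
    rw [hZ0]
    refine (hql _ _).trans (le_trans (mul_le_mul h10 (h1.trans (Real.exp_le_exp.2 ?_))
      (norm_nonneg _) (by positivity)) h14)
    have : 0 ≤ L ^ nM := by positivity
    linarith
  have hab : ∀ t, 0 ≤ t → a t ≤ (X + t) ^ (e4 + 1) := by
    intro t ht
    have hL := hL3 t ht
    simp only [a]
    have h1 := pulse_le_one e2 X (3 / 2) t
    have h2 : t * (X + t) ^ e4 ≤ (X + t) ^ (e4 + 1) := by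
      rw [pow_succ, mul_comm]
      exact mul_le_mul_of_nonneg_left (by linarith) (by positivity)
    have h3 : 0 ≤ t * (X + t) ^ e4 := by positivity
    nlinarith
  have hron : ∀ (j : ℕ) (t : ℝ), 3 * j + 1 / 4 ≤ t → t ≤ 3 * j + 3 / 4 →
      (X + t) ^ e3 / 2 ≤ r t := by
    intro j t h1 h2
    have hj0 : (0:ℝ) ≤ j := by positivity
    have ht : 0 ≤ t := by linarith
    have hL := hL3 t ht
    have h3 := pulse_on (e := e2) hX ht (hh_on (c := 1 / 2) (j := j) (by linarith) (by linarith))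
    simp only [r]
    have : 0 ≤ (X + t) ^ e3 := by positivity
    nlinarith
  have hroff : ∀ (j : ℕ) (t : ℝ), 3 * j + 1 ≤ t → t ≤ 3 * j + 3 →
      (X + t) ^ (kR + nQ + 1) * r t ≤ Real.exp (-(X + t) ^ nD) := by
    intro j t h1 h2
    have hj0 : (0:ℝ) ≤ j := by positivity
    have h3 := pulse_off_tiny (e := e2) (m := kR + nQ + 1 + e3) (p := nD) hX
      (by linarith : 1 / 4 ≤ t) (hh_off (c := 1 / 2) (j := j) (by linarith) (by linarith))
      (by omega)
    simp only [r]
    rwa [← mul_assoc, ← pow_add]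
  have hFcl : ∀ t, 0 ≤ t → ‖F (clampV ((X + t) ^ kR) (z t))‖ ≤ (X + t) ^ nF := by
    intro t ht
    have hL := hL3 t ht
    refine (hFg _).trans ?_
    rw [hnF, pow_mul]
    refine pow_le_pow_left₀ (by positivity) ?_ _
    have h1 := clampV_norm (κ := κ) (R := (X + t) ^ kR) (by positivity) (z t)
    have h2 := pw_three hL kR
    have h3 := pw_one hL kR
    linarith
  have hoffa : ∀ (j : ℕ) (t : ℝ), 3 * j ≤ t → t ≤ 3 * j + 1 → hh (3 / 2) t ≤ -(1 / 4) := by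
    intro j t h1 h2
    exact hh_off' (j := j) (by linarith) (by linarith)
  have haF : ∀ t, 0 ≤ t → ‖a t • F (clampV ((X + t) ^ kR) (z t))‖ ≤
      t * (X + t) ^ (e4 + nF) * pulse e2 X (3 / 2) t := by
    intro t ht
    rw [norm_smul, Real.norm_eq_abs, abs_of_nonneg (ha0 t ht)]
    refine (mul_le_mul_of_nonneg_left (hFcl t ht) (ha0 t ht)).trans_eq ?_
    simp only [a]; rw [pow_add]; ring
  have haoff1 : ∀ (j : ℕ) (t : ℝ), 3 * j ≤ t → t ≤ 3 * j + 1 →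
      ‖a t • F (clampV ((X + t) ^ kR) (z t))‖ ≤ 1 := by
    intro j t h1 h2
    have hj0 : (0:ℝ) ≤ j := by positivity
    have ht : 0 ≤ t := by linarith
    exact (haF t ht).trans (pulse_off_one hX ht (hoffa j t h1 h2) (by omega))
  have haoff2 : ∀ (j : ℕ) (t : ℝ), 3 * j ≤ t → 1 / 4 ≤ t → t ≤ 3 * j + 1 →
      ‖a t • F (clampV ((X + t) ^ kR) (z t))‖ ≤ Real.exp (-(X + t) ^ (nD + 1)) := by
    intro j t h1 h2 h3
    have ht : 0 ≤ t := by linarith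
    have hL := hL3 t ht
    refine (haF t ht).trans (le_trans ?_ (pulse_off_tiny (e := e2) (m := e4 + nF + 1) (p := nD + 1)
      hX h2 (hoffa j t h1 h3) (by omega)))
    refine mul_le_mul_of_nonneg_right ?_ (pulse_nonneg _ _ _ _)
    rw [pow_succ, mul_comm]
    exact mul_le_mul_of_nonneg_left (by linarith) (by positivity)
  have cyc := z_cycle F X hX e4 nZ kl nD nQ kR e3 hFl Z hZ hZb' Q hQb hQp a r hac ha0 hab hr0
    hkR hnD he3 hron hroff z haoff1 haoff2 hz
  have key : ∀ j : ℕ, ‖z (3 * j)‖ ≤ (X + 3 * j) ^ nZ + 1 := by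
    intro j
    induction j with
    | zero =>
      simp only [Nat.cast_zero, mul_zero, hz0, norm_zero, add_zero]
      positivity
    | succ j ih =>
      have h1 := (cyc j ih).2.2
      have h2 : (3 * ((j + 1 : ℕ) : ℝ)) = 3 * j + 3 := by push_cast; ring
      have hj0 : (0:ℝ) ≤ j := by positivity
      rw [h2]
      refine h1.trans (add_le_add_left (pow_le_pow_left₀ (by linarith) (by linarith) _) _)
  have hzb : ∀ t, 0 ≤ t → ‖z t‖ ≤ (X + t) ^ kR := by
    intro t ht
    obtain ⟨h1, h2⟩ := floor3 t ht
    have h0 : (0:ℝ) ≤ (⌊t / 3⌋₊ : ℝ) := by positivity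
    exact ((cyc _ (key ⌊t / 3⌋₊)).1 t h1 h2).trans
      (pow_le_pow_left₀ (by linarith) (by linarith) _)
  have hzd : ∀ t, 0 ≤ t → HasDerivWithinAt z (a t • F (z t) - r t • (z t - Q t)) (Ici 0) t := by
    intro t ht
    have := hz t ht
    rwa [clampV_self (hzb t ht)] at this
  have hzc : ContinuousOn z (Ici 0) := fun t ht => (hzd t ht).continuousWithinAt
  let zo : ℝ → Fin l → ℝ := fun t i => z t (og i)
  have hzoc : ContinuousOn zo (Ici 0) := by
    refine continuousOn_pi.2 fun i => ?_
    exact (continuous_apply (og i)).comp_continuousOn hzc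
  obtain ⟨o, ho0, ho⟩ := o_exists c hcc zo hzoc
  have hczo : ∀ t, 0 ≤ t → ‖c t • (zo t - G)‖ ≤
      t * (X + t) ^ (e5 + (kR + nG + 1)) * pulse e2 X (5 / 2) t := by
    intro t ht
    have hL := hL3 t ht
    rw [norm_smul, Real.norm_eq_abs, abs_of_nonneg (hc0 t ht)]
    have h1 : ‖zo t - G‖ ≤ (X + t) ^ (kR + nG + 1) := by
      refine (norm_sub_le _ _).trans (le_trans (add_le_add ?_ ?_) (pw_add hL kR nG))
      · refine (pi_norm_le_iff_of_nonneg (by positivity)).2 fun i => ?_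
        exact (norm_le_pi_norm (z t) (og i)).trans (hzb t ht)
      · exact hG.trans (pow_le_pow_left₀ (by linarith) (by linarith) _)
    refine (mul_le_mul_of_nonneg_left h1 (hc0 t ht)).trans_eq ?_
    simp only [c]; rw [pow_add (X + t) e5]; ring
  have hoffc : ∀ (j : ℕ) (t : ℝ), 3 * j ≤ t → t ≤ 3 * j + 2 → hh (5 / 2) t ≤ -(1 / 4) := by
    intro j t h1 h2
    exact hh_off' (j := j) (by linarith) (by linarith)
  have ot := o_total X hX nG e5 (by omega) G zo o c hc0 ho ?_ ?_ ?_ ?_ ho0 hG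
  · refine ⟨z, o, hz0, ho0, hzd, ho, ?_, ?_, ot.2⟩
    · intro t ht
      exact (hzb t ht).trans (pw_mono (hL3 t ht) (by omega))
    · intro t ht
      have hL := hL3 t ht
      have h1 := ot.1 t ht
      have h2 := norm_le_norm_add_norm_sub' (o t) G
      have h3 : X ^ nG ≤ (X + t) ^ nG := pow_le_pow_left₀ (by linarith) (by linarith) _
      have h4 := pw_nine hL nG
      have h5 := pw_one hL nG
      have h6 : (X + t) ^ (nG + 2) ≤ (X + t) ^ (kR + nG + 3) := pw_mono hL (by omega)
      linarith
  · intro j t h1 h2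
    have hj0 : (0:ℝ) ≤ j := by positivity
    have ht : 0 ≤ t := by linarith
    exact (hczo t ht).trans (pulse_off_one hX ht (hoffc j t h1 h2) (by omega))
  · intro j t h1 h2 h3
    have ht : 0 ≤ t := by linarith
    have hL := hL3 t ht
    refine (hczo t ht).trans (le_trans ?_ (pulse_off_tiny (e := e2)
      (m := e5 + (kR + nG + 1) + 1) (p := 2) hX h2 (hoffc j t h1 h3) (by omega)))
    refine mul_le_mul_of_nonneg_right ?_ (pulse_nonneg _ _ _ _)
    rw [pow_succ, mul_comm]
    exact mul_le_mul_of_nonneg_left (by linarith) (by positivity)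
  · intro j t h1 h2
    have hj0 : (0:ℝ) ≤ j := by positivity
    obtain ⟨hs0, hsz⟩ := (cyc j (key j)).2.1 t (by linarith) h2
    set s := ∫ τ in (3 * j + 1 : ℝ)..t, a τ with hs
    set Λ := X + 3 * (j : ℝ) with hΛ
    have hΛ3 : 3 ≤ Λ := by linarith
    have hsl : Λ ^ e4 / 4 ≤ s := by
      have h3 : ∫ τ in (3 * j + 5 / 4 : ℝ)..(3 * j + 7 / 4 : ℝ), a τ ≤ s := by
        refine intervalIntegral.integral_mono_interval (by linarith) (by linarith) (by linarith)
          ?_ (hac.intervalIntegrable _ _)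
        refine (MeasureTheory.ae_restrict_iff' measurableSet_Ioc).2
          (Eventually.of_forall fun τ hτ => ?_)
        exact ha0 τ (by linarith [hτ.1])
      have h4 : ∫ τ in (3 * j + 5 / 4 : ℝ)..(3 * j + 7 / 4 : ℝ), (Λ ^ e4 / 2) ≤
          ∫ τ in (3 * j + 5 / 4 : ℝ)..(3 * j + 7 / 4 : ℝ), a τ := by
        refine intervalIntegral.integral_mono_on (by linarith) (by simp)
          (hac.intervalIntegrable _ _) fun τ hτ => ?_
        have hτ0 : 0 ≤ τ := by linarith [hτ.1]
        have hLτ := hL3 τ hτ0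
        have h5 := pulse_on (e := e2) hX hτ0
          (hh_on (c := 3 / 2) (j := j) (by linarith [hτ.1]) (by linarith [hτ.2]))
        have h6 : Λ ^ e4 ≤ (X + τ) ^ e4 :=
          pow_le_pow_left₀ (by linarith) (by linarith [hτ.1]) _
        have h7 : (X + τ) ^ e4 ≤ τ * (X + τ) ^ e4 := by
          have : 0 ≤ (X + τ) ^ e4 := by positivity
          nlinarith [hτ.1]
        have h8 : 0 ≤ Λ ^ e4 := by positivity
        simp only [a]
        nlinarith
      rw [intervalIntegral.integral_const, smul_eq_mul] at h4
      linarith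
    have h5 : ‖(fun i => Z s (og i)) - G‖ ≤ Real.exp (-(2 * Λ)) := by
      refine hZp s (2 * Λ) (by linarith) ?_
      have h6 : (2 + ‖w‖ + 2 * Λ) ^ kg ≤ Λ ^ ((n1 + 3) * kg) := by
        rw [pow_mul]
        refine pow_le_pow_left₀ (by positivity) ?_ _
        have h7 : ‖w‖ ≤ Λ ^ n1 := hw.trans (pow_le_pow_left₀ (by linarith) (by linarith) _)
        have h8 := pw_add hΛ3 2 n1
        have h9 : 2 + n1 + 1 = n1 + 3 := by ring
        rw [h9] at h8
        nlinarith
      have h10 := pw_nine hΛ3 ((n1 + 3) * kg)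
      rw [← he4] at h10
      have h11 : 0 ≤ Λ ^ ((n1 + 3) * kg) := by positivity
      linarith
    have h12 : ‖zo t - fun i => Z s (og i)‖ ≤ Real.exp (-Λ ^ 2) := by
      refine (pi_norm_le_iff_of_nonneg (Real.exp_pos _).le).2 fun i => ?_
      exact (norm_le_pi_norm (z t - Z s) (og i)).trans hsz
    have h13 : zo t - G = (zo t - fun i => Z s (og i)) + ((fun i => Z s (og i)) - G) := by abel
    rw [h13]
    refine (norm_add_le _ _).trans ?_
    linarith
  · intro j t h1 h2
    have hj0 : (0:ℝ) ≤ j := by positivity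
    have ht : 0 ≤ t := by linarith
    have hL := hL3 t ht
    have h3 := pulse_on (e := e2) hX ht (hh_on (c := 5 / 2) (j := j) (by linarith) (by linarith))
    have h4 : 0 ≤ (X + t) ^ e5 := by positivity
    have h5 : 2 * (X + t) ^ e5 ≤ t * (X + t) ^ e5 := by
      exact mul_le_mul_of_nonneg_right (by linarith) h4
    simp only [c]
    nlinarith


section composition

open Set Filter Topology

lemma sel_norm {ι : Type} [Fintype ι] {m : ℕ} (v : ι → ℝ) (o : Fin m → ι) :
    ‖(fun i => v (o i))‖ ≤ ‖v‖ :=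
  (pi_norm_le_iff_of_nonneg (norm_nonneg v)).2 fun i => norm_le_pi_norm v (o i)

lemma pt_val_bound {ι : Type} [Fintype ι] {n m : ℕ} {x : Fin n → ℝ} {w : Fin m → ℝ}
    {y : ℝ → ι → ℝ} {o : Fin m → ι} {k : ℕ} {X : ℝ} (hX : 3 ≤ X) (hx : 2 + ‖x‖ ≤ X)
    (hb : ∀ t, 0 ≤ t → ‖y t‖ ≤ (2 + ‖x‖ + t) ^ k)
    (hp : ∀ t μ : ℝ, 0 ≤ μ → (2 + ‖x‖ + μ) ^ k ≤ t →
        ‖(fun i => y t (o i)) - w‖ ≤ Real.exp (-μ)) :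
    ‖w‖ ≤ X ^ ((k + 2) * k + 1) := by
  have hn := norm_nonneg x
  have h1 := hp ((2 + ‖x‖) ^ k) 0 le_rfl (by simp)
  have h2 := hb ((2 + ‖x‖) ^ k) (by positivity)
  have h3 : (2 + ‖x‖) ^ k ≤ X ^ k := pow_le_pow_left₀ (by linarith) hx k
  have h4 : 2 + ‖x‖ + (2 + ‖x‖) ^ k ≤ X ^ (k + 2) := by
    have := pw_add hX 1 k
    rw [pow_one] at this
    calc _ ≤ X + X ^ k := by linarith
      _ ≤ _ := this
      _ = _ := by congr 1; omega
  have h5 : (2 + ‖x‖ + (2 + ‖x‖) ^ k) ^ k ≤ X ^ ((k + 2) * k) := by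
    rw [pow_mul]
    exact pow_le_pow_left₀ (by positivity) h4 k
  have h6 := sel_norm (y ((2 + ‖x‖) ^ k)) o
  have h7 := norm_sub_norm_le w (fun i => y ((2 + ‖x‖) ^ k) (o i))
  rw [norm_sub_rev] at h7
  have h8 := pw_add hX ((k + 2) * k) 0
  simp only [neg_zero, Real.exp_zero] at h1
  simp only [pow_zero, add_zero] at h8
  linarith

/-- derivative of the pulse, as a polynomial of the clock variables -/
noncomputable def dpulse (e : ℕ) (c T L C S σ : ℝ) : ℝ :=
  ((L ^ e + T * (e * L ^ (e - 1))) *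
      (Real.cos (2 * Real.pi / 3 * c) * C + Real.sin (2 * Real.pi / 3 * c) * S - 3 / 4) +
    T * L ^ e * (-(2 * Real.pi / 3) *
      (S * Real.cos (2 * Real.pi / 3 * c) - C * Real.sin (2 * Real.pi / 3 * c)))) *
  (σ * (1 - σ))

lemma phi_deriv (e : ℕ) (X t : ℝ) :
    HasDerivAt (fun t => t * (X + t) ^ e) ((X + t) ^ e + t * (e * (X + t) ^ (e - 1))) t := by
  have h := (hasDerivAt_id t).mul (((hasDerivAt_id t).const_add X).pow e)
  refine h.congr_deriv ?_
  simp

lemma pulse_deriv (e : ℕ) (X c t : ℝ) :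
    HasDerivAt (pulse e X c) (dpulse e c t (X + t) (Real.cos (2 * Real.pi / 3 * t))
      (Real.sin (2 * Real.pi / 3 * t)) (pulse e X c t)) t := by
  have h1 := phi_deriv e X t
  have h2 : HasDerivAt (fun t => hh c t)
      (-(2 * Real.pi / 3) * Real.sin (2 * Real.pi / 3 * (t - c))) t := by
    have := ((((hasDerivAt_id t).sub_const c).const_mul (2 * Real.pi / 3)).cos).sub_const (3 / 4)
    refine this.congr_deriv ?_
    simp
    ring
  have h3 := (Real.hasDerivAt_sigmoid (t * (X + t) ^ e * hh c t)).comp t (h1.mul h2)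
  refine h3.congr_deriv ?_
  unfold dpulse
  rw [mul_comm]
  have e1 : hh c t = Real.cos (2 * Real.pi / 3 * c) * Real.cos (2 * Real.pi / 3 * t) +
      Real.sin (2 * Real.pi / 3 * c) * Real.sin (2 * Real.pi / 3 * t) - 3 / 4 := by
    unfold hh
    rw [mul_sub, Real.cos_sub]
    ring
  have e2 : Real.sin (2 * Real.pi / 3 * (t - c)) =
      Real.sin (2 * Real.pi / 3 * t) * Real.cos (2 * Real.pi / 3 * c) -
      Real.cos (2 * Real.pi / 3 * t) * Real.sin (2 * Real.pi / 3 * c) := by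
    rw [mul_sub, Real.sin_sub]
  rw [← e1, ← e2]
  rfl

/-- the seven clock components -/
noncomputable def clkF (e2 : ℕ) (s : Fin 7 → ℝ) : Fin 7 → ℝ :=
  ![1, 1, -(2 * Real.pi / 3) * s 3, (2 * Real.pi / 3) * s 2,
    dpulse e2 (1 / 2) (s 0) (s 1) (s 2) (s 3) (s 4),
    dpulse e2 (3 / 2) (s 0) (s 1) (s 2) (s 3) (s 5),
    dpulse e2 (5 / 2) (s 0) (s 1) (s 2) (s 3) (s 6)]

noncomputable def clk (e2 : ℕ) (X t : ℝ) : Fin 7 → ℝ :=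
  ![t, X + t, Real.cos (2 * Real.pi / 3 * t), Real.sin (2 * Real.pi / 3 * t),
    pulse e2 X (1 / 2) t, pulse e2 X (3 / 2) t, pulse e2 X (5 / 2) t]

lemma clk_deriv (e2 : ℕ) (X t : ℝ) (i : Fin 7) :
    HasDerivAt (fun t => clk e2 X t i) (clkF e2 (clk e2 X t) i) t := by
  fin_cases i
  · exact hasDerivAt_id t
  · exact (hasDerivAt_id t).const_add X
  · have := ((hasDerivAt_id t).const_mul (2 * Real.pi / 3)).cos
    refine this.congr_deriv ?_
    simp [clkF, clk]
    ring
  · have := ((hasDerivAt_id t).const_mul (2 * Real.pi / 3)).sin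
    refine this.congr_deriv ?_
    simp [clkF, clk]
    ring
  · exact pulse_deriv e2 X (1 / 2) t
  · exact pulse_deriv e2 X (3 / 2) t
  · exact pulse_deriv e2 X (5 / 2) t

lemma dpulse_poly {ι : Type} (e : ℕ) (c : ℝ) {T L C S σ : (ι → ℝ) → ℝ} (hT : PolyF T)
    (hL : PolyF L) (hC : PolyF C) (hS : PolyF S) (hσ : PolyF σ) :
    PolyF (fun s => dpulse e c (T s) (L s) (C s) (S s) (σ s)) := by
  unfold dpulse
  exact ((((hL.pow e).add (hT.mul ((PolyF.const _).mul (hL.pow _)))).mul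
    ((((PolyF.const _).mul hC).add ((PolyF.const _).mul hS)).sub (PolyF.const _))).add
    ((hT.mul (hL.pow e)).mul ((PolyF.const _).mul ((hS.mul (PolyF.const _)).sub
      (hC.mul (PolyF.const _)))))).mul (hσ.mul ((PolyF.const 1).sub hσ))

lemma clkF_poly (e2 : ℕ) (i : Fin 7) : PolyF (fun s => clkF e2 s i) := by
  fin_cases i
  · exact PolyF.const 1
  · exact PolyF.const 1
  · exact (PolyF.const _).mul (PolyF.coord _)
  · exact (PolyF.const _).mul (PolyF.coord _)
  · exact dpulse_poly _ _ (PolyF.coord _) (PolyF.coord _) (PolyF.coord _) (PolyF.coord _)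
      (PolyF.coord _)
  · exact dpulse_poly _ _ (PolyF.coord _) (PolyF.coord _) (PolyF.coord _) (PolyF.coord _)
      (PolyF.coord _)
  · exact dpulse_poly _ _ (PolyF.coord _) (PolyF.coord _) (PolyF.coord _) (PolyF.coord _)
      (PolyF.coord _)

lemma clk_bound (e2 : ℕ) {X t : ℝ} (hX : 3 ≤ X) (ht : 0 ≤ t) (i : Fin 7) :
    |clk e2 X t i| ≤ X + t := by
  have hp : ∀ c, |pulse e2 X c t| ≤ X + t := fun c => by
    unfold pulse
    rw [abs_of_nonneg (Real.sigmoid_nonneg _)]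
    linarith [Real.sigmoid_le_one (t * (X + t) ^ e2 * hh c t)]
  fin_cases i
  · change |t| ≤ _
    rw [abs_of_nonneg ht]; linarith
  · change |X + t| ≤ _
    rw [abs_of_nonneg (by linarith)]
  · exact (Real.abs_cos_le_one _).trans (by linarith)
  · exact (Real.abs_sin_le_one _).trans (by linarith)
  · exact hp _
  · exact hp _
  · exact hp _

lemma clk_zero (e2 : ℕ) (X : ℝ) : clk e2 X 0 = ![0, X, 1, 0, 2⁻¹, 2⁻¹, 2⁻¹] := by
  simp [clk, pulse]

/-- the field of the composed system -/
noncomputable def compF {ι κ : Type} {m l : ℕ} (Ff : (ι → ℝ) → ι → ℝ) (Fg : (κ → ℝ) → κ → ℝ)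
    (qg : (Fin m → ℝ) → κ → ℝ) (off : Fin m → ι) (og : Fin l → κ) (e1 e2 e3 e4 e5 : ℕ)
    (y : ι → ℝ) (z : κ → ℝ) (o : Fin l → ℝ) (s : Fin 7 → ℝ) : ι ⊕ (κ ⊕ (Fin l ⊕ Fin 7)) → ℝ :=
  Sum.elim (fun i => (s 1 ^ e1 + s 0 * (e1 * s 1 ^ (e1 - 1))) * Ff y i)
    (Sum.elim (fun i => s 0 * s 1 ^ e4 * s 5 * Fg z i -
        s 1 ^ e3 * s 4 * (z i - qg (fun j => y (off j)) i))
      (Sum.elim (fun i => s 0 * s 1 ^ e5 * s 6 * (z (og i) - o i)) (clkF e2 s)))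

theorem pt_comp {n m l : ℕ} {domf : Set (Fin n → ℝ)} {f : (Fin n → ℝ) → (Fin m → ℝ)}
    {domg : Set (Fin m → ℝ)} {g : (Fin m → ℝ) → (Fin l → ℝ)}
    (hf : PT domf f) (hg : PT domg g) (hfg : ∀ x ∈ domf, f x ∈ domg) :
    PT domf (g ∘ f) := by
  obtain ⟨ι, hι, Ff, qf, off, kf, hFf, hqf, Hf⟩ := hf
  obtain ⟨κ, hκ, Fg, qg, og, kg, hFg, hqg, Hg⟩ := hg
  obtain ⟨kF, hkF⟩ := growth_vec hFg
  obtain ⟨kl, hkl⟩ := lip_vec hFg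
  obtain ⟨kQ, hkQ⟩ := growth_vec hqg
  obtain ⟨kq, hkq⟩ := lip_vec hqg
  obtain ⟨n1, hn1⟩ : ∃ e, e = (kf + 2) * kf + 1 := ⟨_, rfl⟩
  obtain ⟨nG, hnG⟩ : ∃ e, e = (n1 + 1) * ((kg + 2) * kg + 1) := ⟨_, rfl⟩
  obtain ⟨e1, e2, e3, e4, e5, K, H⟩ := dyn Fg (continuous_vec hFg) qg (continuous_vec hqg) og
    kF kl kQ kq hkF hkl hkQ hkq kf kg n1 nG
  have hXp : PolyF (fun x : Fin n → ℝ => 3 + ∑ i, x i ^ 2) :=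
    (PolyF.const 3).add (PolyF.sum _ fun i => (PolyF.coord i).pow 2)
  obtain ⟨kX, hkX⟩ := hXp.growth
  refine ⟨ι ⊕ (κ ⊕ (Fin l ⊕ Fin 7)), inferInstance,
    fun s => compF Ff Fg qg off og e1 e2 e3 e4 e5 (fun i => s (Sum.inl i))
      (fun i => s (Sum.inr (Sum.inl i))) (fun i => s (Sum.inr (Sum.inr (Sum.inl i))))
      (fun i => s (Sum.inr (Sum.inr (Sum.inr i)))),
    fun x => Sum.elim (qf x) (Sum.elim (fun _ => 0) (Sum.elim (fun _ => 0)
      ![0, 3 + ∑ i, x i ^ 2, 1, 0, 2⁻¹, 2⁻¹, 2⁻¹])),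
    fun i => Sum.inr (Sum.inr (Sum.inl i)),
    (kX + 2) * (K + (e1 + 3) * kf + 1) + 3, ?_, ?_, ?_⟩
  · have hs : ∀ j : Fin 7, PolyF (fun s : ι ⊕ (κ ⊕ (Fin l ⊕ Fin 7)) → ℝ =>
      s (Sum.inr (Sum.inr (Sum.inr j)))) := fun j => PolyF.coord _
    rintro (i | i | i | i)
    · exact (((hs 1).pow e1).add ((hs 0).mul ((PolyF.const _).mul ((hs 1).pow _)))).mul
        ((hFf i).comp (G := fun (s : ι ⊕ (κ ⊕ (Fin l ⊕ Fin 7)) → ℝ) i => s (Sum.inl i))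
          fun j => PolyF.coord _)
    · exact ((((hs 0).mul ((hs 1).pow e4)).mul (hs 5)).mul ((hFg i).comp
        (G := fun (s : ι ⊕ (κ ⊕ (Fin l ⊕ Fin 7)) → ℝ) i => s (Sum.inr (Sum.inl i)))
          fun j => PolyF.coord _)).sub ((((hs 1).pow e3).mul (hs 4)).mul
          ((PolyF.coord _).sub ((hqg i).comp
        (G := fun (s : ι ⊕ (κ ⊕ (Fin l ⊕ Fin 7)) → ℝ) j => s (Sum.inl (off j)))
          fun j => PolyF.coord _)))
    · exact (((hs 0).mul ((hs 1).pow e5)).mul (hs 6)).mul ((PolyF.coord _).sub (PolyF.coord _))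
    · exact (clkF_poly e2 i).comp
        (G := fun (s : ι ⊕ (κ ⊕ (Fin l ⊕ Fin 7)) → ℝ) i => s (Sum.inr (Sum.inr (Sum.inr i))))
        hs
  · rintro (i | i | i | i)
    · exact hqf i
    · exact PolyF.const 0
    · exact PolyF.const 0
    · fin_cases i
      · exact PolyF.const 0
      · exact hXp
      · exact PolyF.const 1
      · exact PolyF.const 0
      · exact PolyF.const 2⁻¹
      · exact PolyF.const 2⁻¹
      · exact PolyF.const 2⁻¹
  intro x hx
  obtain ⟨y, hy0, hyd, hyb, hyp⟩ := Hf x hx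
  obtain ⟨Z, hZ0, hZd, hZb, hZp⟩ := Hg (f x) (hfg x hx)
  have hkXx := hkX x
  obtain ⟨X, hXdef⟩ : ∃ X, X = 3 + ∑ i, x i ^ 2 := ⟨_, rfl⟩
  rw [← hXdef] at hkXx
  have hsum : 0 ≤ ∑ i, x i ^ 2 := Finset.sum_nonneg fun i _ => sq_nonneg _
  have hX3 : 3 ≤ X := by linarith
  have hXx : 2 + ‖x‖ ≤ X := by
    have : ‖x‖ ≤ 1 + ∑ i, x i ^ 2 := by
      refine (pi_norm_le_iff_of_nonneg (by linarith)).2 fun i => ?_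
      have h1 : x i ^ 2 ≤ ∑ i, x i ^ 2 :=
        Finset.single_le_sum (f := fun i => x i ^ 2) (fun i _ => sq_nonneg _) (Finset.mem_univ i)
      rw [Real.norm_eq_abs]
      nlinarith [sq_abs (x i), sq_nonneg (|x i| - 1)]
    linarith
  have hn := norm_nonneg x
  have hw : ‖f x‖ ≤ X ^ n1 := hn1 ▸ pt_val_bound hX3 hXx hyb hyp
  have hG : ‖g (f x)‖ ≤ X ^ nG := by
    have a1 : 3 ≤ X ^ (n1 + 1) := by
      have := pw_mono hX3 (show 1 ≤ n1 + 1 by omega)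
      rw [pow_one] at this
      linarith
    have a2 : 2 + ‖f x‖ ≤ X ^ (n1 + 1) := by
      have := pw_three hX3 n1
      have := pw_one hX3 n1
      linarith
    have := pt_val_bound a1 a2 hZb hZp
    rwa [← pow_mul, ← hnG] at this
  have hyc : ContinuousOn y (Ici 0) := fun t ht => (hyd t ht).continuousWithinAt
  obtain ⟨z, o, hz0, ho0, hzd, hod, hzb, hob, hop⟩ := H X (fun t i => y t (off i)) (f x) (g (f x))
    Z hX3 (continuousOn_pi.2 fun i => (continuousOn_pi.1 hyc) (off i))
    (fun t ht => (sel_norm _ off).trans ((hyb t ht).trans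
      (pow_le_pow_left₀ (by positivity) (by linarith) kf)))
    (fun t μ hμ ht => hyp t μ hμ ((pow_le_pow_left₀ (by positivity) (by linarith) kf).trans ht))
    hw hG hZ0 hZd hZb hZp
  refine ⟨fun t => Sum.elim (y (t * (X + t) ^ e1)) (Sum.elim (z t) (Sum.elim (o t)
    (clk e2 X t))), ?_, ?_, ?_, ?_⟩
  · simp only [zero_mul, hy0, hz0, ho0, clk_zero, hXdef]
    rfl
  · intro t ht
    rw [hasDerivWithinAt_pi]
    rintro (i | i | i | i)
    · have h1 := (phi_deriv e1 X t).hasDerivWithinAt (s := Ici 0)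
      have hmaps : MapsTo (fun t : ℝ => t * (X + t) ^ e1) (Ici 0) (Ici 0) := fun s hs => by
        have hs' : (0:ℝ) ≤ s := hs
        have : 0 ≤ s * (X + s) ^ e1 := by positivity
        exact this
      have h2 := hyd _ (hmaps ht)
      have h3 := (hasDerivWithinAt_pi.1 h2 i).comp t h1 hmaps
      refine h3.congr_deriv ?_
      exact mul_comm _ _
    · exact (hasDerivWithinAt_pi.1 (hzd t ht) i)
    · exact (hasDerivWithinAt_pi.1 (hod t ht) i)
    · exact (clk_deriv e2 X t i).hasDerivWithinAt
  · intro t ht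
    have hL3 : 3 ≤ X + t := by linarith
    obtain ⟨B, hB⟩ : ∃ B, B = 2 + ‖x‖ + t := ⟨_, rfl⟩
    have hB2 : 2 ≤ B := by linarith
    have hLB : X + t ≤ B ^ (kX + 2) := by
      have b1 : X ≤ B ^ (kX + 1) := by
        refine (le_abs_self X).trans (hkXx.trans ?_)
        refine (pow_le_pow_left₀ (by positivity) (by linarith : 2 + ‖x‖ ≤ B) kX).trans ?_
        exact pow_le_pow_right₀ (by linarith) (by omega)
      have b2 : B ≤ B ^ (kX + 1) := le_self_pow₀ (by linarith) (by omega)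
      have b3 : B ^ (kX + 2) = B ^ (kX + 1) * B := by ring
      nlinarith
    have hmain : (X + t) ^ (K + (e1 + 3) * kf + 1) ≤
        B ^ ((kX + 2) * (K + (e1 + 3) * kf + 1) + 3) := by
      refine (pow_le_pow_left₀ (by linarith) hLB _).trans ?_
      rw [← pow_mul]
      exact pow_le_pow_right₀ (by linarith) (by omega)
    rw [← hB]
    refine le_trans ?_ hmain
    refine (pi_norm_le_iff_of_nonneg (by positivity)).2 ?_
    rintro (i | i | i | i)
    · have c1 := hyb (t * (X + t) ^ e1) (by positivity)
      have c2 : 2 + ‖x‖ + t * (X + t) ^ e1 ≤ (X + t) ^ (e1 + 3) := by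
        have d1 := pw_add hL3 1 (e1 + 1)
        have d2 : t * (X + t) ^ e1 ≤ (X + t) ^ (e1 + 1) := by
          rw [pow_succ, mul_comm]
          exact mul_le_mul_of_nonneg_left (by linarith) (by positivity)
        rw [pow_one, show 1 + (e1 + 1) + 1 = e1 + 3 by omega] at d1
        linarith
      have c3 : (2 + ‖x‖ + t * (X + t) ^ e1) ^ kf ≤ (X + t) ^ ((e1 + 3) * kf) := by
        rw [pow_mul]
        exact pow_le_pow_left₀ (by positivity) c2 kf
      exact (norm_le_pi_norm _ i).trans (c1.trans (c3.trans (pw_mono hL3 (by omega))))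
    · exact (norm_le_pi_norm _ i).trans ((hzb t ht).trans (pw_mono hL3 (by omega)))
    · exact (norm_le_pi_norm _ i).trans ((hob t ht).trans (pw_mono hL3 (by omega)))
    · refine (clk_bound e2 hX3 ht i).trans ?_
      exact le_self_pow₀ (by linarith) (by omega)
  · intro t μ hμ ht
    have hB : (2:ℝ) ≤ 2 + ‖x‖ + μ := by linarith
    have h1 : (2 + ‖x‖ + μ) ^ 3 ≤ t :=
      (pow_le_pow_right₀ (by linarith) (by omega)).trans ht
    have h2 : (2 + μ) ^ 3 ≤ (2 + ‖x‖ + μ) ^ 3 :=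
      pow_le_pow_left₀ (by positivity) (by linarith) 3
    have h3 : 6 + μ ≤ (2 + μ) ^ 3 := by
      nlinarith [pow_nonneg hμ 2, pow_nonneg hμ 3]
    exact (hop t (by linarith)).trans (Real.exp_le_exp.2 (by linarith))

end composition

/-- **`AP` is closed under composition**: if `f, g ∈ AP` and `f(dom f) ⊆ dom g`, then
`g ∘ f`, with domain `dom f`, belongs to `AP`. -/
theorem ap_comp {n m l : ℕ} (domf : Set (Fin n → ℝ)) (f : (Fin n → ℝ) → (Fin m → ℝ))
    (domg : Set (Fin m → ℝ)) (g : (Fin m → ℝ) → (Fin l → ℝ))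
    (hf : AP domf f) (hg : AP domg g) (hfg : ∀ x ∈ domf, f x ∈ domg) :
    AP domf (g ∘ f) := by
  exact ap_of_pt (pt_comp (pt_of_ap hf) (pt_of_ap hg) hfg)
end
end

section
/- Robust real step for Turing machines: let M be a deterministic Turing machine with tape alphabet Γ = {0, 1, …, k−2} (k ≥ 2) and finite state set Q identified with a finite subset of ℕ. Then there exists a partial function realstep_M :⊆ ℝ⁴ × ℝ₊ → ℝ⁴ in AP such that for every configuration c of M, every μ ≥ 0 and every c̄ ∈ ℝ⁴, if ‖⟨c⟩ − c̄‖_∞ ≤ 1/(2k²) − e^{−μ}, then (c̄, μ) ∈ dom(realstep_M) and ‖realstep_M(c̄, μ) − ⟨M(c)⟩‖_∞ ≤ k · ‖⟨c⟩ − c̄‖_∞, where M(c) denotes the configuration obtained from c after one computation step of M. -/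
noncomputable section

/-- A deterministic Turing machine with tape alphabet `Γ = {0, 1, …, k−2}`
(symbols are elements of `Fin (k-1)`) and a finite state set identified with a
finite subset of `ℕ`.  `δ q σ = (q', σ', dir)` gives the new state, the written
symbol and the move direction (`true` = right, `false` = left). -/
structure TM (k : ℕ) where
  states : Finset ℕ
  δ : ℕ → Fin (k - 1) → ℕ × Fin (k - 1) × Bool

/-- A configuration `(x, σ, y, q)`: tape left of the head (closest symbol first),
symbol under the head, tape right of the head, current state. -/
def TMConfig (k : ℕ) : Type :=
  List (Fin (k - 1)) × Fin (k - 1) × List (Fin (k - 1)) × ℕ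

/-- One computation step of the machine (the blank symbol is `0`). -/
def TM.step {k : ℕ} (hk : 2 ≤ k) (M : TM k) (c : TMConfig k) : TMConfig k :=
  let r := M.δ c.2.2.2 c.2.1
  if r.2.2 then
    (r.2.1 :: c.1, (c.2.2.1).headD ⟨0, by omega⟩, (c.2.2.1).tail, r.1)
  else
    (c.1.tail, (c.1).headD ⟨0, by omega⟩, r.2.1 :: c.2.2.1, r.1)

/-- Real encoding `0.w = Σᵢ wᵢ k^{−i}` of a word `w ∈ Γ*`. -/
def encWord (k : ℕ) : List (Fin (k - 1)) → ℝ
  | [] => 0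
  | a :: w => (((a : ℕ) : ℝ) + encWord k w) / k

/-- Real encoding `⟨c⟩ = (0.x, σ, 0.y, q) ∈ ℝ⁴` of a configuration. -/
def encConfig (k : ℕ) (c : TMConfig k) : Fin 4 → ℝ :=
  ![encWord k c.1, ((c.2.1 : ℕ) : ℝ), encWord k c.2.2.1, ((c.2.2.2 : ℕ) : ℝ)]

/-- Chain rule for a multivariate polynomial along a curve. -/
lemma hasDerivAt_mvPoly {κ : Type} [Fintype κ] (w : ℝ → κ → ℝ) (w' : κ → ℝ) (t : ℝ)
    (hw : ∀ j, HasDerivAt (fun s => w s j) (w' j) t) (P : MvPolynomial κ ℝ) :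
    HasDerivAt (fun s => MvPolynomial.eval (w s) P)
      (∑ j, MvPolynomial.eval (w t) (MvPolynomial.pderiv j P) * w' j) t := by
  classical
  induction P using MvPolynomial.induction_on with
  | C a => simpa using hasDerivAt_const t a
  | add P Q hP hQ =>
    have := hP.add hQ
    simp only [map_add, add_mul, Finset.sum_add_distrib]
    exact this
  | mul_X P i hP =>
    have := hP.mul (hw i)
    have e0 : (fun s => MvPolynomial.eval (w s) (P * MvPolynomial.X i))
        = (fun s => MvPolynomial.eval (w s) P) * fun s => w s i := by
      ext s; simp
    rw [e0]
    refine this.congr_deriv (Eq.symm ?_)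
    simp only [Derivation.leibniz, smul_eq_mul, MvPolynomial.pderiv_X, map_add, map_mul,
      MvPolynomial.eval_X, add_mul, Finset.sum_add_distrib]
    rw [add_comm]
    congr 1
    · rw [Finset.sum_mul]
      exact Finset.sum_congr rfl fun j _ => by ring
    · rw [Finset.sum_eq_single i]
      · simp
      · intro j _ hj
        simp [Pi.single_apply, hj, hj.symm]
      · simp

/-- Polynomials are bounded and Lipschitz on balls. -/
lemma mvPoly_bdd_lip {κ : Type} [Fintype κ] (B : ℝ) (P : MvPolynomial κ ℝ) :
    ∃ L : ℝ, 0 ≤ L ∧ (∀ x : κ → ℝ, ‖x‖ ≤ B → |MvPolynomial.eval x P| ≤ L) ∧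
      ∀ x y : κ → ℝ, ‖x‖ ≤ B → ‖y‖ ≤ B →
        |MvPolynomial.eval x P - MvPolynomial.eval y P| ≤ L * ‖x - y‖ := by
  induction P using MvPolynomial.induction_on with
  | C a => exact ⟨|a|, abs_nonneg _, by simp, fun x y _ _ => by simp; positivity⟩
  | add P Q hP hQ =>
    obtain ⟨L, hL, h1, h2⟩ := hP
    obtain ⟨L', hL', h1', h2'⟩ := hQ
    refine ⟨L + L', by positivity, fun x hx => ?_, fun x y hx hy => ?_⟩
    · rw [map_add]
      exact (abs_add_le _ _).trans (add_le_add (h1 x hx) (h1' x hx))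
    · rw [map_add, map_add, add_sub_add_comm, add_mul]
      exact (abs_add_le _ _).trans (add_le_add (h2 x y hx hy) (h2' x y hx hy))
  | mul_X P i hP =>
    obtain ⟨L, hL, h1, h2⟩ := hP
    refine ⟨L * |B| + L, by positivity, fun x hx => ?_, fun x y hx hy => ?_⟩
    · rw [map_mul, MvPolynomial.eval_X, abs_mul]
      have : |x i| ≤ |B| := ((norm_le_pi_norm x i).trans hx).trans (le_abs_self _)
      have := mul_le_mul (h1 x hx) this (abs_nonneg _) hL
      linarith
    · rw [map_mul, MvPolynomial.eval_X, map_mul, MvPolynomial.eval_X]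
      have e : MvPolynomial.eval x P * x i - MvPolynomial.eval y P * y i
        = (MvPolynomial.eval x P - MvPolynomial.eval y P) * x i
          + MvPolynomial.eval y P * (x - y) i := by simp; ring
      rw [e]
      refine (abs_add_le _ _).trans ?_
      rw [abs_mul, abs_mul]
      have a1 : |x i| ≤ |B| := ((norm_le_pi_norm x i).trans hx).trans (le_abs_self _)
      have a2 : |(x - y) i| ≤ ‖x - y‖ := norm_le_pi_norm (x - y) i
      have a3 := mul_le_mul (h2 x y hx hy) a1 (abs_nonneg _) (by positivity)
      have a4 := mul_le_mul (h1 y hy) a2 (abs_nonneg _) hL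
      nlinarith

/-- Sufficient criterion for membership in `AP`. -/
lemma ap_of {n m : ℕ} (dom : Set (Fin n → ℝ)) (f : (Fin n → ℝ) → (Fin m → ℝ))
    {κ : Type} [Fintype κ] (p : κ → MvPolynomial κ ℝ) (q : κ → MvPolynomial (Fin n) ℝ)
    (H : Fin m → MvPolynomial κ ℝ) (B C : ℝ) (hC : 0 ≤ C)
    (h : ∀ x ∈ dom, ∃ (w : ℝ → κ → ℝ) (w₀ : κ → ℝ),
      (∀ j, w 0 j = MvPolynomial.eval x (q j)) ∧
      (∀ t : ℝ, 0 ≤ t → ∀ j, HasDerivAt (fun s => w s j) (MvPolynomial.eval (w t) (p j)) t) ∧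
      ‖w₀‖ ≤ B ∧ (∀ t : ℝ, 0 ≤ t → ‖w t - w₀‖ ≤ C * Real.exp (-t)) ∧
      ∀ i, f x i = MvPolynomial.eval w₀ (H i)) : AP dom f := by
  classical
  let g : κ → Fin m ⊕ Option κ := fun j => Sum.inr (some j)
  let D : Fin m → MvPolynomial κ ℝ := fun i => ∑ j, MvPolynomial.pderiv j (H i) * p j
  let P : Fin m ⊕ Option κ → MvPolynomial (Fin m ⊕ Option κ) ℝ :=
    Sum.elim (fun i => MvPolynomial.rename g (D i))
      (fun o => o.elim 1 (fun j => MvPolynomial.rename g (p j)))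
  let Q : Fin m ⊕ Option κ → MvPolynomial (Fin n) ℝ :=
    Sum.elim (fun i => MvPolynomial.bind₁ q (H i)) (fun o => o.elim 0 q)
  let e : Fin m ⊕ Option κ ≃ Fin (m + Fintype.card (Option κ)) :=
    (Equiv.sumCongr (Equiv.refl _) (Fintype.equivFin (Option κ))).trans finSumFinEquiv
  choose LH hLH0 _ hLH using fun i => mvPoly_bdd_lip (B + C) (H i)
  choose LD hLD0 hLD _ using fun i => mvPoly_bdd_lip (B + C) (D i)
  choose Lp hLp0 hLp _ using fun j => mvPoly_bdd_lip (B + C) (p j)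
  let L : ℝ := ∑ i, LH i
  let K : ℝ := 1 + ∑ i, LD i + ∑ j, Lp j
  have hL0 : 0 ≤ L := Finset.sum_nonneg fun i _ => hLH0 i
  have hK1 : 1 ≤ K := by
    have := Finset.sum_nonneg fun i (_ : i ∈ Finset.univ) => hLD0 i
    have := Finset.sum_nonneg fun i (_ : i ∈ Finset.univ) => hLp0 i
    simp only [K]; linarith
  have hLC : 0 ≤ L * C := by positivity
  refine ⟨m + Fintype.card (Option κ), Nat.le_add_right _ _,
    fun i => MvPolynomial.rename e (P (e.symm i)), fun i => Q (e.symm i),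
    fun _ b => K * (L * C + b), ⟨⟨MvPolynomial.C K * (MvPolynomial.C (L * C) + MvPolynomial.X 1),
      fun a b => by simp⟩, fun a b _ hb => by positivity⟩, ?_⟩
  intro x hx
  obtain ⟨w, w₀, hw0, hw, hwB, hwC, hf⟩ := h x hx
  let Y : ℝ → Fin m ⊕ Option κ → ℝ := fun t =>
    Sum.elim (fun i => MvPolynomial.eval (w t) (H i)) (fun o => o.elim t (w t))
  have hYg : ∀ t, Y t ∘ g = w t := fun t => rfl
  have hev : ∀ t i, MvPolynomial.eval (fun i => Y t (e.symm i)) (MvPolynomial.rename e (P (e.symm i)))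
      = MvPolynomial.eval (Y t) (P (e.symm i)) := by
    intro t i
    rw [MvPolynomial.eval_rename]
    congr 2
    ext j; simp
  have hwBC : ∀ t, 0 ≤ t → ‖w t‖ ≤ B + C := by
    intro t ht
    have h1 := hwC t ht
    have h2 : C * Real.exp (-t) ≤ C * 1 := by
      gcongr; exact Real.exp_le_one_iff.2 (by linarith)
    have h3 : ‖w t‖ ≤ ‖w t - w₀‖ + ‖w₀‖ := by
      simpa using norm_add_le (w t - w₀) w₀
    linarith
  have hB0 : ‖w₀‖ ≤ B + C := by linarith
  have hder : ∀ t, 0 ≤ t → HasDerivAt (fun t i => Y t (e.symm i))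
      (pEval (fun i => MvPolynomial.rename e (P (e.symm i))) (fun i => Y t (e.symm i))) t := by
    intro t ht
    rw [hasDerivAt_pi]
    intro i
    simp only [pEval]
    rw [hev]
    rcases e.symm i with i | _ | j
    · simp only [Y, P, Sum.elim_inl]
      rw [MvPolynomial.eval_rename, hYg]
      have := hasDerivAt_mvPoly w _ t (hw t ht) (H i)
      simpa [D, map_sum] using this
    · have h1 : MvPolynomial.eval (Y t) (P (Sum.inr none)) = 1 := by simp [P]
      rw [h1]
      exact hasDerivAt_id t
    · have h1 : MvPolynomial.eval (Y t) (P (Sum.inr (some j))) = MvPolynomial.eval (w t) (p j) := by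
        simp only [P, Sum.elim_inr, Option.elim]
        rw [MvPolynomial.eval_rename, hYg]
      rw [h1]
      exact hw t ht j
  have hup : ∀ t, 0 ≤ t →
      ‖pEval (fun i => MvPolynomial.rename e (P (e.symm i))) (fun i => Y t (e.symm i))‖ ≤ K := by
    intro t ht
    have s1 := fun i => Finset.single_le_sum (fun i _ => hLD0 i) (Finset.mem_univ i)
    have s2 := fun i => Finset.single_le_sum (fun i _ => hLp0 i) (Finset.mem_univ i)
    have := Finset.sum_nonneg fun i (_ : i ∈ Finset.univ) => hLD0 i
    have := Finset.sum_nonneg fun i (_ : i ∈ Finset.univ) => hLp0 i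
    rw [pi_norm_le_iff_of_nonneg (by linarith)]
    intro i
    simp only [pEval]
    rw [hev, Real.norm_eq_abs]
    rcases e.symm i with i | _ | j
    · simp only [P, Sum.elim_inl]
      rw [MvPolynomial.eval_rename, hYg]
      have := hLD i _ (hwBC t ht)
      have := s1 i
      simp only [K]; linarith
    · simpa [P] using hK1
    · simp only [P, Sum.elim_inr, Option.elim]
      rw [MvPolynomial.eval_rename, hYg]
      have := hLp j _ (hwBC t ht)
      have := s2 j
      simp only [K]; linarith
  have hlow : ∀ t,
      1 ≤ ‖pEval (fun i => MvPolynomial.rename e (P (e.symm i))) (fun i => Y t (e.symm i))‖ := by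
    intro t
    refine le_trans ?_ (norm_le_pi_norm _ (e (Sum.inr none)))
    simp only [pEval]
    rw [hev]
    simp [P]
  refine ⟨fun t i => Y t (e.symm i), ?_, hder, ?_, ?_⟩
  · ext i
    change Y 0 (e.symm i) = MvPolynomial.eval x (Q (e.symm i))
    rcases e.symm i with i | _ | j
    · simp only [Y, Q, Sum.elim_inl]
      have h1 : w 0 = fun j => MvPolynomial.eval x (q j) := funext hw0
      have h2 := MvPolynomial.aeval_bind₁ x q (H i)
      simp only [MvPolynomial.aeval_eq_eval, RingHom.coe_coe] at h2
      rw [h1, ← MvPolynomial.coe_aeval_eq_eval, ← MvPolynomial.coe_aeval_eq_eval]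
      exact (MvPolynomial.aeval_bind₁ x q (H i)).symm
    · simp [Y, Q]
    · simpa [Y, Q] using hw0 j
  · intro t ht μ hμ hlen
    have hle : pLen (fun i => MvPolynomial.rename e (P (e.symm i)))
        (fun t i => Y t (e.symm i)) t ≤ K * t := by
      have := intervalIntegral.norm_integral_le_of_norm_le_const (a := 0) (b := t) (C := K)
        (f := fun s => ‖pEval (fun i => MvPolynomial.rename e (P (e.symm i)))
          (fun i => Y s (e.symm i))‖) (by
          intro s hs
          rw [Set.uIoc_of_le ht] at hs
          rw [norm_norm]
          exact hup s hs.1.le)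
      rw [sub_zero, abs_of_nonneg ht] at this
      exact (le_abs_self _).trans this
    have htt : L * C + μ ≤ t := le_of_mul_le_mul_left (hlen.trans hle) (by linarith)
    rw [pi_norm_le_iff_of_nonneg (Real.exp_pos _).le]
    intro i
    have hei : e.symm (Fin.castLE (Nat.le_add_right m (Fintype.card (Option κ))) i) = Sum.inl i := by
      rw [Equiv.symm_apply_eq]
      simp only [e, Equiv.trans_apply, Equiv.sumCongr_apply, Sum.map_inl, Equiv.refl_apply,
        finSumFinEquiv_apply_left]
      rfl
    simp only [Pi.sub_apply, hei, Y, Sum.elim_inl, hf]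
    have h1 := hLH i _ _ (hwBC t ht) hB0
    have s1 : LH i ≤ L := Finset.single_le_sum (fun i _ => hLH0 i) (Finset.mem_univ i)
    rw [Real.norm_eq_abs]
    refine h1.trans ?_
    calc LH i * ‖w t - w₀‖ ≤ L * (C * Real.exp (-t)) :=
          mul_le_mul s1 (hwC t ht) (norm_nonneg _) hL0
      _ ≤ Real.exp (L * C) * Real.exp (-t) := by
          rw [← mul_assoc]
          gcongr
          linarith [Real.add_one_le_exp (L * C)]
      _ = Real.exp (L * C - t) := by rw [← Real.exp_add]; ring_nf
      _ ≤ Real.exp (-μ) := Real.exp_le_exp.2 (by linarith)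
  · intro t ht
    have hYc : ContinuousOn (fun s => ‖pEval (fun i => MvPolynomial.rename e (P (e.symm i)))
          (fun i => Y s (e.symm i))‖) (Set.uIcc 0 t) := by
      refine ContinuousOn.norm ?_
      have hc : Continuous (pEval (fun i => MvPolynomial.rename e (P (e.symm i)))) :=
        continuous_pi fun i => MvPolynomial.continuous_eval _
      refine hc.comp_continuousOn (f := fun s i => Y s (e.symm i)) ?_
      intro s hs
      rw [Set.uIcc_of_le ht] at hs
      exact (hder s hs.1).continuousAt.continuousWithinAt
    have := intervalIntegral.integral_mono_on ht (f := fun _ => (1:ℝ))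
      (μ := MeasureTheory.volume) (by simp) hYc.intervalIntegrable (fun s _ => hlow s)
    simpa [pLen] using this

/-- Explicit solution of `u' = u - u³`. -/
def usol (a t : ℝ) : ℝ := a * Real.exp t / Real.sqrt (1 + a ^ 2 * (Real.exp (2 * t) - 1))

lemma usol_zero (a : ℝ) : usol a 0 = a := by simp [usol]

lemma usol_rad (a t : ℝ) (ht : 0 ≤ t) : 1 ≤ 1 + a ^ 2 * (Real.exp (2 * t) - 1) := by
  have : 1 ≤ Real.exp (2 * t) := Real.one_le_exp (by linarith)
  nlinarith [sq_nonneg a]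

lemma usol_deriv (a t : ℝ) (ht : 0 ≤ t) :
    HasDerivAt (usol a) (usol a t - usol a t ^ 3) t := by
  have hr := usol_rad a t ht
  have h1 : HasDerivAt (fun s => 1 + a ^ 2 * (Real.exp (2 * s) - 1))
      (a ^ 2 * (Real.exp (2 * t) * 2)) t := by
    have := (((hasDerivAt_id t).const_mul 2).exp.sub_const 1).const_mul (a ^ 2) |>.const_add 1
    simpa using this
  have h2 := h1.sqrt (by linarith)
  have h3 := ((Real.hasDerivAt_exp t).const_mul a).div h2
    (Real.sqrt_pos.2 (by linarith)).ne'
  refine h3.congr_deriv ?_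
  have hs : Real.sqrt (1 + a ^ 2 * (Real.exp (2 * t) - 1)) ^ 2
    = 1 + a ^ 2 * (Real.exp (2 * t) - 1) := Real.sq_sqrt (by linarith)
  have hp : 0 < Real.sqrt (1 + a ^ 2 * (Real.exp (2 * t) - 1)) := Real.sqrt_pos.2 (by linarith)
  have hE : Real.exp (2 * t) = Real.exp t ^ 2 := by rw [← Real.exp_nat_mul]; norm_num
  unfold usol
  set S := Real.sqrt (1 + a ^ 2 * (Real.exp (2 * t) - 1))
  rw [hE]
  field_simp

lemma usol_conv (a t δ B : ℝ) (ht : 0 ≤ t) (hδ : 0 < δ) (hδ1 : δ ≤ 1) (ha : δ ≤ |a|)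
    (hB : |a| ≤ B) (s : ℝ) (hs : s = SignType.sign a) :
    |usol a t - s| ≤ (1 + B ^ 2) / δ ^ 2 * Real.exp (-t) := by
  have hr := usol_rad a t ht
  have hs2 : Real.sqrt (1 + a ^ 2 * (Real.exp (2 * t) - 1)) ^ 2
    = 1 + a ^ 2 * (Real.exp (2 * t) - 1) := Real.sq_sqrt (by linarith)
  have hp : 0 < Real.sqrt (1 + a ^ 2 * (Real.exp (2 * t) - 1)) := Real.sqrt_pos.2 (by linarith)
  have hE : Real.exp (2 * t) = Real.exp t ^ 2 := by rw [← Real.exp_nat_mul]; norm_num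
  have hE1 : 1 ≤ Real.exp t := Real.one_le_exp ht
  have ha2 : δ ^ 2 ≤ a ^ 2 := by rw [← sq_abs a]; gcongr
  have haB : a ^ 2 ≤ B ^ 2 := by rw [← sq_abs a]; gcongr
  have hss : s ^ 2 = 1 ∧ 0 ≤ usol a t * s := by
    rcases lt_trichotomy a 0 with h | h | h
    · rw [hs, sign_neg h]
      refine ⟨by simp, ?_⟩
      unfold usol
      have : a * Real.exp t / Real.sqrt (1 + a ^ 2 * (Real.exp (2 * t) - 1)) ≤ 0 :=
        div_nonpos_of_nonpos_of_nonneg (mul_nonpos_of_nonpos_of_nonneg h.le (by positivity)) hp.le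
      simpa using this
    · subst h; simp at ha; linarith
    · rw [hs, sign_pos h]
      refine ⟨by simp, ?_⟩
      unfold usol
      simp; positivity
  obtain ⟨h1, h2⟩ := hss
  set u := usol a t with hu
  have hu2 : u ^ 2 = a ^ 2 * Real.exp t ^ 2 / (1 + a ^ 2 * (Real.exp (2 * t) - 1)) := by
    rw [hu, usol, div_pow, hs2, mul_pow]
  have hus : |u - s| ≤ |u ^ 2 - 1| := by
    have e1 : u ^ 2 - 1 = (u - s) * (u + s) := by rw [← h1]; ring
    rw [e1, abs_mul]
    have : 1 ≤ |u + s| := by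
      rw [← one_le_sq_iff_one_le_abs]
      nlinarith [sq_nonneg u]
    nlinarith [abs_nonneg (u - s)]
  refine hus.trans ?_
  have e2 : u ^ 2 - 1 = (a ^ 2 - 1) / (1 + a ^ 2 * (Real.exp (2 * t) - 1)) := by
    rw [hu2, hE]
    rw [hE] at hr
    field_simp
    ring
  rw [e2, abs_div, abs_of_nonneg (a := 1 + a ^ 2 * (Real.exp (2 * t) - 1)) (by linarith),
    Real.exp_neg, ← div_eq_mul_inv, div_div]
  refine div_le_div₀ (by positivity) ?_ (by positivity) ?_
  · rw [abs_le]; constructor <;> nlinarith [sq_nonneg a, sq_nonneg B]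
  · rw [hE]
    have : δ ^ 2 ≤ 1 := by nlinarith
    have : Real.exp t ≤ Real.exp t ^ 2 := by nlinarith
    have : δ ^ 2 * Real.exp t ≤ δ ^ 2 * Real.exp t ^ 2 := by gcongr
    nlinarith [mul_nonneg (sub_nonneg.2 ha2) (by nlinarith : (0:ℝ) ≤ Real.exp t ^ 2 - 1)]

lemma encWord_step {k : ℕ} (hk : 2 ≤ k) (w : List (Fin (k - 1))) :
    (k : ℝ) * encWord k w
      = ((w.headD ⟨0, by omega⟩ : Fin (k - 1)) : ℕ) + encWord k w.tail := by
  have : (k : ℝ) ≠ 0 := by positivity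
  cases w with
  | nil => simp [encWord]
  | cons a w => simp [encWord]; field_simp

lemma encWord_bd {k : ℕ} (hk : 2 ≤ k) (w : List (Fin (k - 1))) :
    0 ≤ encWord k w ∧ encWord k w ≤ 1 - 1 / ((k : ℝ) - 1) := by
  have hk' : (2:ℝ) ≤ k := by exact_mod_cast hk
  have h1 : 1 / ((k:ℝ) - 1) ≤ 1 := by rw [div_le_one] <;> linarith
  induction w with
  | nil => exact ⟨le_rfl, by simp only [encWord]; linarith⟩
  | cons a w ih =>
    obtain ⟨i1, i2⟩ := ih
    refine ⟨by simp only [encWord]; positivity, ?_⟩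
    simp only [encWord]
    have ha : ((a : ℕ) : ℝ) + 2 ≤ k := by
      have := a.2
      exact_mod_cast (by omega : (a : ℕ) + 2 ≤ k)
    rw [div_le_iff₀ (by linarith)]
    have : (1 - 1 / ((k:ℝ) - 1)) * k = k - 2 + (1 - 1 / ((k:ℝ) - 1)) := by
      have : (k:ℝ) - 1 ≠ 0 := by linarith
      field_simp; ring
    linarith

/-- The digits of a configuration that determine the next step. -/
def digits {k : ℕ} (hk : 2 ≤ k) (c : TMConfig k) : Fin 4 → ℕ :=
  ![(c.1.headD ⟨0, by omega⟩ : Fin (k - 1)), c.2.1, (c.2.2.1.headD ⟨0, by omega⟩ : Fin (k - 1)),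
    c.2.2.2]

/-- Rescaled coordinates: the digits are the integer parts. -/
def vpoly (k : ℕ) : Fin 4 → MvPolynomial (Fin 5) ℝ :=
  ![MvPolynomial.C (k:ℝ) * MvPolynomial.X 0 + MvPolynomial.C (1 / (2 * ((k:ℝ) - 1))),
    MvPolynomial.X 1 + MvPolynomial.C (1 / 2),
    MvPolynomial.C (k:ℝ) * MvPolynomial.X 2 + MvPolynomial.C (1 / (2 * ((k:ℝ) - 1))),
    MvPolynomial.X 3 + MvPolynomial.C (1 / 2)]

lemma vpoly_bd {k : ℕ} (hk : 2 ≤ k) (c : TMConfig k) (x : Fin 5 → ℝ)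
    (h : ∀ i : Fin 4, |encConfig k c i - x i.castSucc| ≤ 1 / (2 * (k:ℝ) ^ 2)) (i : Fin 4) :
    digits hk c i + 1 / (2 * (k:ℝ) * (k - 1)) ≤ MvPolynomial.eval x (vpoly k i) ∧
    MvPolynomial.eval x (vpoly k i) ≤ digits hk c i + 1 - 1 / (2 * (k:ℝ) * (k - 1)) := by
  have hk' : (2:ℝ) ≤ k := by exact_mod_cast hk
  have hk1 : (0:ℝ) < k - 1 := by linarith
  have key : ∀ (w : List (Fin (k - 1))) (z : ℝ), |encWord k w - z| ≤ 1 / (2 * (k:ℝ) ^ 2) →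
      (((w.headD ⟨0, by omega⟩ : Fin (k - 1)) : ℕ) : ℝ) + 1 / (2 * (k:ℝ) * (k - 1))
        ≤ k * z + 1 / (2 * ((k:ℝ) - 1)) ∧
      k * z + 1 / (2 * ((k:ℝ) - 1)) ≤
        (((w.headD ⟨0, by omega⟩ : Fin (k - 1)) : ℕ) : ℝ) + 1 - 1 / (2 * (k:ℝ) * (k - 1)) := by
    intro w z hz
    have e1 := encWord_step hk w
    obtain ⟨b1, b2⟩ := encWord_bd hk w.tail
    rw [abs_le] at hz
    have e2 : (k:ℝ) * (1 / (2 * (k:ℝ) ^ 2)) = 1 / (2 * k) := by field_simp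
    have e3 : 1 / (2 * ((k:ℝ) - 1)) = 1 / (2 * k) + 1 / (2 * (k:ℝ) * (k - 1)) := by
      field_simp; ring
    have e4 : 1 / ((k:ℝ) - 1) = 2 * (1 / (2 * ((k:ℝ) - 1))) := by field_simp
    have m1 := mul_le_mul_of_nonneg_left hz.1 (by linarith : (0:ℝ) ≤ k)
    have m2 := mul_le_mul_of_nonneg_left hz.2 (by linarith : (0:ℝ) ≤ k)
    rw [mul_neg, e2, mul_sub, e1] at m1
    rw [e2, mul_sub, e1] at m2
    rw [e4] at b2
    constructor <;> linarith
  have key2 : ∀ (n : ℕ) (z : ℝ), |(n:ℝ) - z| ≤ 1 / (2 * (k:ℝ) ^ 2) →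
      (n:ℝ) + 1 / (2 * (k:ℝ) * (k - 1)) ≤ z + 1 / 2 ∧
      z + 1 / 2 ≤ (n:ℝ) + 1 - 1 / (2 * (k:ℝ) * (k - 1)) := by
    intro n z hz
    rw [abs_le] at hz
    have e1 : 1 / (2 * (k:ℝ) ^ 2) ≤ 1 / 4 := by
      apply one_div_le_one_div_of_le <;> nlinarith
    have e2 : 1 / (2 * (k:ℝ) * (k - 1)) ≤ 1 / 4 := by
      apply one_div_le_one_div_of_le <;> nlinarith
    constructor <;> linarith
  have h0 := key _ _ (h 0)
  have h1 := key2 _ _ (h 1)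
  have h2 := key _ _ (h 2)
  have h3 := key2 _ _ (h 3)
  fin_cases i
  · simpa [digits, vpoly] using h0
  · simpa [digits, vpoly] using h1
  · simpa [digits, vpoly] using h2
  · simpa [digits, vpoly] using h3

/-- Indicator polynomial of a digit vector. -/
def indPoly (N : ℕ) (s : Fin 4 → Fin N) : MvPolynomial (Fin 4 ⊕ (Fin 4 × Fin (N + 1))) ℝ :=
  ∏ i, (MvPolynomial.C (1 / 4) * ((1 + MvPolynomial.X (Sum.inr (i, (s i).castSucc)))
    * (1 - MvPolynomial.X (Sum.inr (i, (s i).succ)))))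

/-- The affine map performed on the encoding when the digits are `s`. -/
def stepPoly {k : ℕ} (hk : 2 ≤ k) (M : TM k) (κ : Type) (s : Fin 4 → ℕ) :
    Fin 4 → MvPolynomial (Fin 4 ⊕ κ) ℝ :=
  let σ : Fin (k - 1) := if h : s 1 < k - 1 then ⟨s 1, h⟩ else ⟨0, by omega⟩
  let r := M.δ (s 3) σ
  if r.2.2 then
    ![MvPolynomial.C (1 / (k:ℝ)) * (MvPolynomial.C ((r.2.1 : ℕ) : ℝ) + MvPolynomial.X (Sum.inl 0)),
      MvPolynomial.C (s 2 : ℝ),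
      MvPolynomial.C (k:ℝ) * MvPolynomial.X (Sum.inl 2) - MvPolynomial.C (s 2 : ℝ),
      MvPolynomial.C (r.1 : ℝ)]
  else
    ![MvPolynomial.C (k:ℝ) * MvPolynomial.X (Sum.inl 0) - MvPolynomial.C (s 0 : ℝ),
      MvPolynomial.C (s 0 : ℝ),
      MvPolynomial.C (1 / (k:ℝ)) * (MvPolynomial.C ((r.2.1 : ℕ) : ℝ) + MvPolynomial.X (Sum.inl 2)),
      MvPolynomial.C (r.1 : ℝ)]

lemma stepPoly_err {k : ℕ} (hk : 2 ≤ k) (M : TM k) (κ : Type) (c : TMConfig k)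
    (w : Fin 4 ⊕ κ → ℝ) (E : ℝ) (h : ∀ i, |encConfig k c i - w (Sum.inl i)| ≤ E) (i : Fin 4) :
    |MvPolynomial.eval w (stepPoly hk M κ (digits hk c) i) - encConfig k (M.step hk c) i|
      ≤ k * E := by
  have hk' : (2:ℝ) ≤ k := by exact_mod_cast hk
  have hE : 0 ≤ E := (abs_nonneg _).trans (h 0)
  have hkE : 0 ≤ k * E := by positivity
  have h0 : |encWord k c.1 - w (Sum.inl 0)| ≤ E := h 0
  have h2 : |encWord k c.2.2.1 - w (Sum.inl 2)| ≤ E := h 2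
  have A : ∀ (v : List (Fin (k - 1))) (z : ℝ), |encWord k v - z| ≤ E →
      |k * z - ((v.headD ⟨0, by omega⟩ : Fin (k - 1)) : ℕ) - encWord k v.tail| ≤ k * E := by
    intro v z hz
    have e : k * z - ((v.headD ⟨0, by omega⟩ : Fin (k - 1)) : ℕ) - encWord k v.tail
        = -(k * (encWord k v - z)) := by rw [mul_sub, encWord_step hk v]; ring
    rw [e, abs_neg, abs_mul, abs_of_nonneg (by linarith : (0:ℝ) ≤ k)]
    gcongr
  have Bd : ∀ (a : Fin (k - 1)) (v : List (Fin (k - 1))) (z : ℝ), |encWord k v - z| ≤ E →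
      |1 / (k:ℝ) * (((a : ℕ) : ℝ) + z) - encWord k (a :: v)| ≤ k * E := by
    intro a v z hz
    have e : 1 / (k:ℝ) * (((a : ℕ) : ℝ) + z) - encWord k (a :: v)
        = -((encWord k v - z) / k) := by simp only [encWord]; field_simp; ring
    rw [e, abs_neg, abs_div, abs_of_nonneg (by linarith : (0:ℝ) ≤ k), div_le_iff₀ (by linarith)]
    nlinarith
  have hσ : (if h : digits hk c 1 < k - 1 then (⟨digits hk c 1, h⟩ : Fin (k - 1))
      else ⟨0, by omega⟩) = c.2.1 := by
    have : digits hk c 1 < k - 1 := c.2.1.2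
    rw [dif_pos this]; rfl
  have hq : digits hk c 3 = c.2.2.2 := rfl
  have hd0 : digits hk c 0 = (c.1.headD ⟨0, by omega⟩ : Fin (k - 1)) := rfl
  have hd2 : digits hk c 2 = (c.2.2.1.headD ⟨0, by omega⟩ : Fin (k - 1)) := rfl
  simp only [stepPoly, hσ, hq, hd0, hd2]
  have A0 := A _ _ h0
  have A2 := A _ _ h2
  have B0 := Bd (M.δ c.2.2.2 c.2.1).2.1 _ _ h0
  have B2 := Bd (M.δ c.2.2.2 c.2.1).2.1 _ _ h2
  split_ifs with hdir
  · have hstep : M.step hk c = ((M.δ c.2.2.2 c.2.1).2.1 :: c.1, (c.2.2.1).headD ⟨0, by omega⟩,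
        (c.2.2.1).tail, (M.δ c.2.2.2 c.2.1).1) := if_pos hdir
    rw [hstep]
    fin_cases i
    · simpa [encConfig] using B0
    · simpa [encConfig] using hkE
    · simpa [encConfig] using A2
    · simpa [encConfig] using hkE
  · have hstep : M.step hk c = (c.1.tail, (c.1).headD ⟨0, by omega⟩,
        (M.δ c.2.2.2 c.2.1).2.1 :: c.2.2.1, (M.δ c.2.2.2 c.2.1).1) := if_neg hdir
    rw [hstep]
    fin_cases i
    · simpa [encConfig] using A0
    · simpa [encConfig] using hkE
    · simpa [encConfig] using B2
    · simpa [encConfig] using hkE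

/-- The limit value of the dynamical system. -/
def wlim (k N : ℕ) (x : Fin 5 → ℝ) : Fin 4 ⊕ (Fin 4 × Fin (N + 1)) → ℝ :=
  Sum.elim (fun i => x i.castSucc)
    (fun ij => (SignType.sign (MvPolynomial.eval x (vpoly k ij.1) - (ij.2 : ℕ)) : ℝ))

/-- The output polynomial. -/
def outPoly {k : ℕ} (hk : 2 ≤ k) (M : TM k) (N : ℕ) (i : Fin 4) :
    MvPolynomial (Fin 4 ⊕ (Fin 4 × Fin (N + 1))) ℝ :=
  ∑ s : Fin 4 → Fin N, indPoly N s * stepPoly hk M _ (fun j => (s j : ℕ)) i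

lemma sign_digit (v : ℝ) (n j : ℕ) (h1 : (n:ℝ) < v) (h2 : v < n + 1) :
    1 / 4 * ((1 + (SignType.sign (v - j) : ℝ)) * (1 - (SignType.sign (v - (j + 1 : ℕ)) : ℝ)))
      = if j = n then 1 else 0 := by
  rcases lt_trichotomy j n with h | h | h
  · have : ((j + 1 : ℕ) : ℝ) ≤ n := by exact_mod_cast h
    rw [sign_pos (a := v - ((j + 1 : ℕ) : ℝ)) (by linarith)]
    simp [h.ne]
  · subst h
    rw [sign_pos (by linarith), sign_neg (by push_cast; linarith)]
    norm_num
  · have : ((n + 1 : ℕ) : ℝ) ≤ j := by exact_mod_cast h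
    push_cast at this
    rw [sign_neg (a := v - (j : ℝ)) (by linarith)]
    simp [h.ne']

lemma outPoly_eval {k : ℕ} (hk : 2 ≤ k) (M : TM k) (N : ℕ) (x : Fin 5 → ℝ) (D : Fin 4 → ℕ)
    (hD : ∀ i, D i < N) (h : ∀ i, (D i : ℝ) < MvPolynomial.eval x (vpoly k i) ∧
      MvPolynomial.eval x (vpoly k i) < D i + 1) (i : Fin 4) :
    MvPolynomial.eval (wlim k N x) (outPoly hk M N i)
      = MvPolynomial.eval (wlim k N x) (stepPoly hk M _ D i) := by
  have hind : ∀ s : Fin 4 → Fin N, MvPolynomial.eval (wlim k N x) (indPoly N s)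
      = ∏ j, if ((s j : Fin N) : ℕ) = D j then (1:ℝ) else 0 := by
    intro s
    simp only [indPoly, map_prod]
    refine Finset.prod_congr rfl fun j _ => ?_
    rw [← sign_digit _ _ (s j : ℕ) (h j).1 (h j).2]
    simp [wlim]
  simp only [outPoly, map_sum, map_mul, hind]
  rw [Finset.sum_eq_single (fun j => (⟨D j, hD j⟩ : Fin N))]
  · simp
  · intro s _ hs
    obtain ⟨j, hj⟩ := Function.ne_iff.1 hs
    rw [Finset.prod_eq_zero (Finset.mem_univ j), zero_mul]
    rw [if_neg]
    intro h'
    exact hj (Fin.ext h')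
  · simp

/-- **Robust real step for Turing machines.**  For any machine `M` there is a partial
function `realstep_M :⊆ ℝ⁴ × ℝ₊ → ℝ⁴` in `AP` such that for every configuration `c`,
every `μ ≥ 0` and every `c̄ ∈ ℝ⁴` with `‖⟨c⟩ − c̄‖_∞ ≤ 1/(2k²) − e^{−μ}`, the point
`(c̄, μ)` is in the domain and
`‖realstep_M(c̄, μ) − ⟨M(c)⟩‖_∞ ≤ k‖⟨c⟩ − c̄‖_∞`. -/
theorem robust_real_step (k : ℕ) (hk : 2 ≤ k) (M : TM k) :
    ∃ (dom : Set (Fin 5 → ℝ)) (realstep : (Fin 5 → ℝ) → (Fin 4 → ℝ)),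
      dom ⊆ {z : Fin 5 → ℝ | 0 ≤ z (Fin.last 4)} ∧
      AP dom realstep ∧
      ∀ c : TMConfig k, c.2.2.2 ∈ M.states → ∀ μ : ℝ, 0 ≤ μ → ∀ cbar : Fin 4 → ℝ,
        ‖encConfig k c - cbar‖ ≤ 1 / (2 * (k : ℝ) ^ 2) - Real.exp (-μ) →
        Fin.snoc cbar μ ∈ dom ∧
        ‖realstep (Fin.snoc cbar μ) - encConfig k (M.step hk c)‖ ≤
          (k : ℝ) * ‖encConfig k c - cbar‖ := by
  classical
  have hk' : (2:ℝ) ≤ k := by exact_mod_cast hk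
  let N : ℕ := k + M.states.sup id + 1
  let dom : Set (Fin 5 → ℝ) := {z | 0 ≤ z (Fin.last 4) ∧ ∃ c : TMConfig k, c.2.2.2 ∈ M.states ∧
    ∀ i : Fin 4, |encConfig k c i - z i.castSucc| ≤ 1 / (2 * (k:ℝ) ^ 2)}
  have hdig : ∀ c : TMConfig k, c.2.2.2 ∈ M.states → ∀ i, digits hk c i < N := by
    intro c hc i
    have hq : c.2.2.2 ≤ M.states.sup id := Finset.le_sup (f := id) hc
    have a1 : ∀ a : Fin (k - 1), (a : ℕ) < N := fun a => by
      have := a.2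
      simp only [N]; omega
    fin_cases i
    · exact a1 _
    · exact a1 _
    · exact a1 _
    · change c.2.2.2 < N
      simp only [N]; omega
  set δ : ℝ := 1 / (2 * (k:ℝ) * (k - 1)) with hδ
  have hk1 : (0:ℝ) < k - 1 := by linarith
  have hδ0 : 0 < δ := by positivity
  have hδ1 : δ ≤ 1 := by
    rw [hδ, div_le_one (by positivity)]; nlinarith
  refine ⟨dom, fun z i => MvPolynomial.eval (wlim k N z) (outPoly hk M N i), fun z hz => hz.1, ?_, ?_⟩
  · refine ap_of dom _ (κ := Fin 4 ⊕ (Fin 4 × Fin (N + 1)))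
      (Sum.elim (fun _ => 0) (fun j => MvPolynomial.X (Sum.inr j) - MvPolynomial.X (Sum.inr j) ^ 3))
      (Sum.elim (fun i => MvPolynomial.X i.castSucc)
        (fun ij => vpoly k ij.1 - MvPolynomial.C ((ij.2 : ℕ) : ℝ)))
      (outPoly hk M N) (N + 1) ((1 + ((N:ℝ) + 1) ^ 2) / δ ^ 2) (by positivity) ?_
    rintro x ⟨-, c, hc, hx⟩
    have hv := vpoly_bd hk c x hx
    have hdd := hdig c hc
    refine ⟨fun t => Sum.elim (fun i => x i.castSucc)
      (fun ij => usol (MvPolynomial.eval x (vpoly k ij.1) - (ij.2 : ℕ)) t), wlim k N x,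
      ?_, ?_, ?_, ?_, fun i => rfl⟩
    · rintro (i | ij)
      · simp
      · simp [usol_zero]
    · rintro t ht (i | ij)
      · simpa using hasDerivAt_const t (x i.castSucc)
      · simpa using usol_deriv (MvPolynomial.eval x (vpoly k ij.1) - (ij.2 : ℕ)) t ht
    · rw [pi_norm_le_iff_of_nonneg (by positivity)]
      rintro (i | ij)
      · have h1 := abs_le.1 (hx i)
        have h2 : 1 / (2 * (k:ℝ) ^ 2) ≤ 1 := by
          rw [div_le_one (by positivity)]; nlinarith
        have h3 : 0 ≤ encConfig k c i ∧ encConfig k c i ≤ N := by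
          have hN1 : (1:ℝ) ≤ N := by simp only [N]; push_cast; linarith [Nat.cast_nonneg (α := ℝ) (M.states.sup id)]
          have q1 : 1 / ((k:ℝ) - 1) ≥ 0 := by positivity
          have b := fun w => encWord_bd hk w
          fin_cases i
          · exact ⟨(b c.1).1, (by linarith [(b c.1).2] : encWord k c.1 ≤ N)⟩
          · exact ⟨Nat.cast_nonneg _, Nat.cast_le.2 (hdd 1).le⟩
          · exact ⟨(b c.2.2.1).1, (by linarith [(b c.2.2.1).2] : encWord k c.2.2.1 ≤ N)⟩
          · exact ⟨Nat.cast_nonneg _, Nat.cast_le.2 (hdd 3).le⟩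
        simp only [wlim, Sum.elim_inl, Real.norm_eq_abs]
        rw [abs_le]
        constructor <;> linarith [Nat.cast_nonneg (α := ℝ) N]
      · simp only [wlim, Sum.elim_inr]
        have : ∀ s : SignType, ‖(s : ℝ)‖ ≤ 1 := by
          intro s; cases s <;> simp
        linarith [this (SignType.sign (MvPolynomial.eval x (vpoly k ij.1) - (ij.2 : ℕ))),
          Nat.cast_nonneg (α := ℝ) N]
    · intro t ht
      rw [pi_norm_le_iff_of_nonneg (by positivity)]
      rintro (i | ij)
      · simp [wlim]; positivity
      · simp only [wlim, Pi.sub_apply, Sum.elim_inr, Real.norm_eq_abs]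
        obtain ⟨v1, v2⟩ := hv ij.1
        rw [← hδ] at v1 v2
        refine usol_conv _ t δ _ ht hδ0 hδ1 ?_ ?_ _ rfl
        · rcases le_or_gt (ij.2 : ℕ) (digits hk c ij.1) with h | h
          · have : ((ij.2 : ℕ) : ℝ) ≤ digits hk c ij.1 := by exact_mod_cast h
            exact le_trans (by linarith) (le_abs_self _)
          · have : (digits hk c ij.1 : ℝ) + 1 ≤ ((ij.2 : ℕ) : ℝ) := by exact_mod_cast h
            exact le_trans (by linarith) (neg_le_abs _)
        · have h1 : ((ij.2 : ℕ) : ℝ) ≤ N := by exact_mod_cast Nat.lt_succ_iff.1 ij.2.2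
          have h2 : (digits hk c ij.1 : ℝ) ≤ N := by exact_mod_cast (hdd ij.1).le
          rw [abs_le]
          constructor <;> linarith [Nat.cast_nonneg (α := ℝ) (ij.2 : ℕ),
            Nat.cast_nonneg (α := ℝ) (digits hk c ij.1)]
  · intro c hc μ hμ cbar hcb
    have hx0 : ∀ i : Fin 4, (Fin.snoc cbar μ : Fin 5 → ℝ) i.castSucc = cbar i := fun i => by
      simp [Fin.snoc_castSucc (α := fun _ => ℝ)]
    have hcoord : ∀ i : Fin 4, |encConfig k c i - (Fin.snoc cbar μ : Fin 5 → ℝ) i.castSucc|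
        ≤ ‖encConfig k c - cbar‖ := fun i => by
      rw [hx0]; exact norm_le_pi_norm (encConfig k c - cbar) i
    have hx : ∀ i : Fin 4, |encConfig k c i - (Fin.snoc cbar μ : Fin 5 → ℝ) i.castSucc|
        ≤ 1 / (2 * (k:ℝ) ^ 2) := fun i => by
      linarith [hcoord i, Real.exp_pos (-μ)]
    refine ⟨⟨?_, c, hc, hx⟩, ?_⟩
    · rw [Fin.snoc_last (α := fun _ => ℝ)]; exact hμ
    · rw [pi_norm_le_iff_of_nonneg (by positivity)]
      intro i
      have hv := vpoly_bd hk c _ hx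
      simp only [Pi.sub_apply, Real.norm_eq_abs]
      rw [outPoly_eval hk M N _ (digits hk c) (hdig c hc) (fun j => by
        obtain ⟨v1, v2⟩ := hv j
        rw [← hδ] at v1 v2
        constructor <;> linarith)]
      exact stepPoly_err hk M _ c _ _ (fun j => by simpa only [wlim, Sum.elim_inl] using hcoord j) i
end
end
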